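/- Let J ⊂ ℝ be an open interval and, for each t ∈ J, let F_t be an IFS on ℝ as in the standing parametric setup. Let p = (p_i)_{i∈Λ} be a probability vector with strictly positive entries and let μ_{p,t} be the self-similar measure associated to F_t and p. If the family {F_t}_{t∈J} satisfies the β-transversality condition for some β ≥ 0, then the set {t ∈ J : dim μ_{p,t} < min(1, sd μ_{p,t})} is at most countable. -/

import Mathlib

/-!
The proof follows the entropy method for self-similar measures on the line, and reduces countability to
the separation of parameters.

**One parameter.** Let `μ` be the self-similar measure at a fixed parameter, `χ` the Lyapunov exponent,
`h` the entropy of the probability vector, and `e N` the entropy of `μ` at scale `2^{-N}`. The sequence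
`e` is superadditive up to a constant, so `e N / N` converges to some `E` (`exists_E`), and `E / log 2`
is at most the local dimension (`E_le`). If the dimension drops, then `E < log 2` and
`E χ / log 2 < h`. For a random word `w` of length `n` let `κ w` be its type (the multiset of its letters,
which determines the contraction ratio) together with its translation part at the scale of its
contraction ratio. Self-similarity writes `μ` as an average, over the values of `κ`, of convolutions
`θ * f`, where `θ` is the law of the translation part given `κ` and `f` is a contracted copy of `μ`.
Comparing entropies at the scale `2^{-qn}` shows that `H(κ) ≈ n E χ / log 2` and that the total entropy
growth `H(θ * f) - H(f)` is `o(n)` (`upperHG`, `lowerH`). By the inverse theorem for entropy growth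
(`inverse_thm`), which applies as `E < log 2` and as `μ` spreads its entropy evenly over the scales,
the translation parts given `κ` have entropy `o(n)` even at the scale `2^{-qn}` (`propT`).

**The inverse theorem.** If `θ` gives positive mass to pairs of points at distance `d` of order `2^j`,
and `f` grows little under convolution with `θ`, then `f` smoothed at scale `2^j` grows little under the
uniform measure on `{0, d}`, hence under the uniform measure on a long progression of step `d`, hence it
is nearly uniform over many scales above `2^j` (`growth_far`). An `f` whose entropy rate is `E < log 2`
at all scales is not. So `θ` is concentrated near a point at most scales, and has small entropy.

**Two parameters.** Suppose the above holds at `t` and `t'`, with `|t - t'|` of order `2^{-qn}` and `q`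
large. By transversality, the type of a word of length `n` and its translation parts at `t` and `t'` at
scale `2^{-2qn}` determine the word (`words_separated`). The translation parts at `t` and `t'` agree up to
`2^{-qn}`, so the coarse cell at `t'` is known up to boundedly many choices once the data at `t` are, and
submodularity bounds the entropy `n h` of the words by the entropy of the data at `t` plus the
conditional entropy of the translation part at `t'` given the coarse cell, up to a constant
(`two_systems`). This is `n E χ / log 2 + o(n)`, a contradiction for large `n`. With the quantifiers made
uniform, the exceptional parameters are covered by countably many sets `Bad`, each of which is separated
(`mem_Bad`, `Bad_countable`).

All entropies are those of finitely supported measures with weights in `ℝ≥0`, in the normalization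
of `Ent`, which is homogeneous in the measure.
-/

open MeasureTheory Set Filter
open scoped ENNReal Classical

noncomputable section

/-- A measure is exact dimensional with dimension `d`: at a.e. point the local dimension
exists and equals `d`. -/
def ExactDim {X : Type*} [PseudoMetricSpace X] [MeasurableSpace X]
    (μ : Measure X) (d : ℝ) : Prop :=
  ∀ᵐ x ∂μ, Tendsto (fun r : ℝ => Real.log (μ (Metric.ball x r)).toReal / Real.log r)
    (nhdsWithin 0 (Set.Ioi 0)) (nhds d)

/-- `f_{x,t}(0) = lim_n f_{x_1,t} ∘ ⋯ ∘ f_{x_n,t}(0)` for the IFS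
`{y ↦ r i t · y + s i t}_{i}`, written as a series. -/
def codingPoint {Λ : Type*} (r s : Λ → ℝ → ℝ) (x : ℕ → Λ) (t : ℝ) : ℝ :=
  ∑' n : ℕ, (∏ k ∈ Finset.range n, r (x k) t) * s (x n) t

/-- The metric `d(x,y) = 2^{-|x∧y|}` on `Λ^ℕ`, where `|x∧y|` is the length of the longest
common initial segment. -/
def seqDist {Λ : Type*} (x y : ℕ → Λ) : ℝ :=
  if x = y then 0 else (2 : ℝ) ^ (-((sInf {k : ℕ | x k ≠ y k} : ℕ) : ℤ))

/-- The similarity dimension `(Σ_i p_i log p_i) / (Σ_i p_i log |r_{i,t}|)`. -/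
def simDim {Λ : Type*} [Fintype Λ] (p : Λ → ℝ) (r : Λ → ℝ → ℝ) (t : ℝ) : ℝ :=
  (∑ i : Λ, p i * Real.log (p i)) / (∑ i : Λ, p i * Real.log |r i t|)

/-- `μ` is the self-similar measure associated to the IFS `{y ↦ r i t · y + s i t}_i` and the
probability vector `p`. -/
def IsSelfSimilarMeasure {Λ : Type*} [Fintype Λ] (r s : Λ → ℝ → ℝ) (p : Λ → ℝ) (t : ℝ)
    (μ : Measure ℝ) : Prop :=
  IsProbabilityMeasure μ ∧
    μ = ∑ i : Λ, ENNReal.ofReal (p i) • μ.map (fun x => r i t * x + s i t)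

/-! ### Entropy of finitely supported measures -/

namespace EntDim

open scoped NNReal
open Real (negMulLog)

/-- The total mass of a finitely supported measure. -/
def mass {S : Type*} (f : S →₀ ℝ≥0) : ℝ := f.sum fun _ c => (c : ℝ)

/-- The sum `∑ -c log c` over the atoms `c`, without normalization. -/
def NEnt {S : Type*} (f : S →₀ ℝ≥0) : ℝ := f.sum fun _ c => negMulLog (c : ℝ)

/-- The entropy of a finitely supported measure of arbitrary mass `m`, normalized as
`∑ -c log c + m log m`. It is the Shannon entropy when `m = 1`, and `Ent (c • f) = c * Ent f`, so
that conditional entropies are plain sums over fibres. -/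
def Ent {S : Type*} (f : S →₀ ℝ≥0) : ℝ := NEnt f - negMulLog (mass f)

/-- The integral of `φ` against `f`. -/
def ex {S : Type*} (f : S →₀ ℝ≥0) (φ : S → ℝ) : ℝ := f.sum fun s c => (c : ℝ) * φ s

variable {S T U V : Type*}

theorem mass_eq {f : S →₀ ℝ≥0} {A : Finset S} (h : f.support ⊆ A) :
    mass f = ∑ s ∈ A, (f s : ℝ) :=
  Finsupp.sum_of_support_subset f h _ (by simp)

theorem NEnt_eq {f : S →₀ ℝ≥0} {A : Finset S} (h : f.support ⊆ A) :
    NEnt f = ∑ s ∈ A, negMulLog (f s : ℝ) :=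
  Finsupp.sum_of_support_subset f h _ (by simp)

theorem ex_eq {f : S →₀ ℝ≥0} {A : Finset S} (h : f.support ⊆ A) (φ : S → ℝ) :
    ex f φ = ∑ s ∈ A, (f s : ℝ) * φ s :=
  Finsupp.sum_of_support_subset f h _ (by simp)

theorem mass_nonneg (f : S →₀ ℝ≥0) : 0 ≤ mass f := by
  rw [mass_eq (Finset.Subset.refl _)]; positivity

theorem mass_add (f g : S →₀ ℝ≥0) : mass (f + g) = mass f + mass g := by
  unfold mass; rw [Finsupp.sum_add_index'] <;> simp

theorem mass_zero : mass (0 : S →₀ ℝ≥0) = 0 := by simp [mass]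
theorem Ent_zero : Ent (0 : S →₀ ℝ≥0) = 0 := by simp [mass, Ent, NEnt]

theorem mass_smul (c : ℝ≥0) (f : S →₀ ℝ≥0) : mass (c • f) = c * mass f := by
  unfold mass; rw [Finsupp.sum_smul_index' (by simp)]
  simp [Finsupp.sum, Finset.mul_sum]

theorem mass_single (s : S) (c : ℝ≥0) : mass (Finsupp.single s c) = c := by
  unfold mass; rw [Finsupp.sum_single_index (by simp)]

theorem mass_sum {ι : Type*} (A : Finset ι) (f : ι → S →₀ ℝ≥0) :
    mass (∑ a ∈ A, f a) = ∑ a ∈ A, mass (f a) := by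
  induction A using Finset.induction_on with
  | empty => simp [mass_zero]
  | insert a A ha ih => rw [Finset.sum_insert ha, Finset.sum_insert ha, mass_add, ih]

theorem mass_mapDomain (h : S → T) (f : S →₀ ℝ≥0) : mass (f.mapDomain h) = mass f := by
  unfold mass; rw [Finsupp.sum_mapDomain_index] <;> simp

theorem NEnt_smul (c : ℝ≥0) (f : S →₀ ℝ≥0) :
    NEnt (c • f) = c * NEnt f + mass f * negMulLog c := by
  unfold NEnt mass; rw [Finsupp.sum_smul_index' (by simp)]
  simp only [Finsupp.sum, Finset.mul_sum, Finset.sum_mul, ← Finset.sum_add_distrib]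
  refine Finset.sum_congr rfl fun s _ => ?_
  simp [Real.negMulLog_mul]; ring

theorem Ent_smul (c : ℝ≥0) (f : S →₀ ℝ≥0) : Ent (c • f) = c * Ent f := by
  unfold Ent; rw [NEnt_smul, mass_smul, Real.negMulLog_mul]; ring

theorem NEnt_mapDomain_inj {h : S → T} (hh : Function.Injective h) (f : S →₀ ℝ≥0) :
    NEnt (f.mapDomain h) = NEnt f := by
  unfold NEnt; rw [Finsupp.sum_mapDomain_index_inj hh]

theorem Ent_mapDomain_inj {h : S → T} (hh : Function.Injective h) (f : S →₀ ℝ≥0) :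
    Ent (f.mapDomain h) = Ent f := by
  unfold Ent; rw [NEnt_mapDomain_inj hh, mass_mapDomain]

theorem Ent_single (s : S) (c : ℝ≥0) : Ent (Finsupp.single s c) = 0 := by
  unfold Ent NEnt; rw [mass_single, Finsupp.sum_single_index (by simp), sub_self]

theorem term_ineq {x r c X : ℝ} (hx : 0 ≤ x) (hr : x ≤ r) (hc : x ≤ c) (hX : 0 < X) :
    x - r * c / X ≤ x * (Real.log x + Real.log X - Real.log r - Real.log c) := by
  rcases hx.eq_or_lt with rfl | hx
  · have : 0 ≤ r * c / X := by positivity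
    simpa using this
  have hr' : 0 < r := by linarith
  have hc' : 0 < c := by linarith
  have h1 := Real.one_sub_inv_le_log_of_pos (x := x * X / (r * c)) (by positivity)
  rw [Real.log_div (by positivity) (by positivity), Real.log_mul hx.ne' hX.ne',
    Real.log_mul hr'.ne' hc'.ne'] at h1
  have h2 := mul_le_mul_of_nonneg_left h1 hx.le
  have h3 : x * (1 - (x * X / (r * c))⁻¹) = x - r * c / X := by field_simp
  rw [h3] at h2
  linarith

/-- Subadditivity of entropy in homogeneous form: the joint law `x` has at most the sum of the
entropies of its two marginals. -/
theorem PW {α γ : Type*} (A : Finset α) (B : Finset γ) (x : α → γ → ℝ≥0) :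
    negMulLog (∑ a ∈ A, ∑ b ∈ B, (x a b : ℝ)) + ∑ a ∈ A, ∑ b ∈ B, negMulLog (x a b : ℝ) ≤
      ∑ a ∈ A, negMulLog (∑ b ∈ B, (x a b : ℝ)) + ∑ b ∈ B, negMulLog (∑ a ∈ A, (x a b : ℝ)) := by
  set X := ∑ a ∈ A, ∑ b ∈ B, (x a b : ℝ) with hX
  have hX0 : 0 ≤ X := by positivity
  rcases hX0.eq_or_lt with h0 | hpos
  · have hz : ∀ a ∈ A, ∀ b ∈ B, (x a b : ℝ) = 0 := by
      intro a ha b hb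
      have h1 := (Finset.sum_eq_zero_iff_of_nonneg (s := A)
        (f := fun a => ∑ b ∈ B, (x a b : ℝ)) (fun _ _ => by positivity)).1 h0.symm a ha
      exact (Finset.sum_eq_zero_iff_of_nonneg (fun _ _ => by positivity)).1 h1 b hb
    have e1 : ∑ a ∈ A, ∑ b ∈ B, negMulLog (x a b : ℝ) = 0 :=
      Finset.sum_eq_zero fun a ha => Finset.sum_eq_zero fun b hb => by simp [hz a ha b hb]
    have e2 : ∑ a ∈ A, negMulLog (∑ b ∈ B, (x a b : ℝ)) = 0 :=
      Finset.sum_eq_zero fun a ha => by rw [Finset.sum_eq_zero (hz a ha)]; simp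
    have e3 : ∑ b ∈ B, negMulLog (∑ a ∈ A, (x a b : ℝ)) = 0 :=
      Finset.sum_eq_zero fun b hb => by
        rw [Finset.sum_eq_zero (fun a ha => hz a ha b hb)]; simp
    rw [e1, e2, e3, ← h0]; simp
  set r : α → ℝ := fun a => ∑ b ∈ B, (x a b : ℝ) with hr
  set c : γ → ℝ := fun b => ∑ a ∈ A, (x a b : ℝ) with hc
  have key : ∑ a ∈ A, ∑ b ∈ B, ((x a b : ℝ) - r a * c b / X) ≤
      ∑ a ∈ A, ∑ b ∈ B, (x a b : ℝ) *
        (Real.log (x a b) + Real.log X - Real.log (r a) - Real.log (c b)) := by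
    refine Finset.sum_le_sum fun a ha => Finset.sum_le_sum fun b hb => ?_
    refine term_ineq (x a b).2 ?_ ?_ hpos
    · exact Finset.single_le_sum (f := fun b => (x a b : ℝ)) (fun _ _ => by positivity) hb
    · exact Finset.single_le_sum (f := fun a => (x a b : ℝ)) (fun _ _ => by positivity) ha
  have hsr : ∑ a ∈ A, r a = X := rfl
  have hsc : ∑ b ∈ B, c b = X := Finset.sum_comm
  have hl : ∑ a ∈ A, ∑ b ∈ B, ((x a b : ℝ) - r a * c b / X) = 0 := by
    simp only [Finset.sum_sub_distrib]
    have : ∑ a ∈ A, ∑ b ∈ B, r a * c b / X = X := by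
      simp only [← Finset.sum_div, ← Finset.mul_sum, hsc, ← Finset.sum_mul, hsr]
      field_simp
    rw [this, ← hX, sub_self]
  have hrr : ∑ a ∈ A, ∑ b ∈ B, (x a b : ℝ) *
        (Real.log (x a b) + Real.log X - Real.log (r a) - Real.log (c b)) =
      - ∑ a ∈ A, ∑ b ∈ B, negMulLog (x a b : ℝ) - negMulLog X
       + ∑ a ∈ A, negMulLog (r a) + ∑ b ∈ B, negMulLog (c b) := by
    have e0 : ∀ a b, (x a b : ℝ) *
        (Real.log (x a b) + Real.log X - Real.log (r a) - Real.log (c b)) =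
        - negMulLog (x a b : ℝ) + (x a b : ℝ) * Real.log X - (x a b : ℝ) * Real.log (r a)
          - (x a b : ℝ) * Real.log (c b) := by
      intro a b; simp [negMulLog]; ring
    simp only [e0, Finset.sum_sub_distrib, Finset.sum_add_distrib, Finset.sum_neg_distrib]
    have e1 : ∑ a ∈ A, ∑ b ∈ B, (x a b : ℝ) * Real.log X = - negMulLog X := by
      simp only [← Finset.sum_mul]; rw [← hX]; simp [negMulLog]
    have e2 : ∑ a ∈ A, ∑ b ∈ B, (x a b : ℝ) * Real.log (r a) = - ∑ a ∈ A, negMulLog (r a) := by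
      simp only [← Finset.sum_mul]; simp [negMulLog, hr]
    have e3 : ∑ a ∈ A, ∑ b ∈ B, (x a b : ℝ) * Real.log (c b) = - ∑ b ∈ B, negMulLog (c b) := by
      rw [Finset.sum_comm]
      simp only [← Finset.sum_mul]; simp [negMulLog, hc]
    rw [e1, e2, e3]; ring
  rw [hl, hrr] at key
  linarith

theorem coe_sum_apply {ι : Type*} (A : Finset ι) (f : ι → S →₀ ℝ≥0) (s : S) :
    (((∑ a ∈ A, f a) s : ℝ≥0) : ℝ) = ∑ a ∈ A, (f a s : ℝ) := by
  rw [Finsupp.finsetSum_apply]; push_cast; rfl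

theorem support_sum_le {ι : Type*} (A : Finset ι) (f : ι → S →₀ ℝ≥0) :
    (∑ a ∈ A, f a).support ⊆ A.biUnion fun a => (f a).support := Finsupp.support_finsetSum

/-- `PW` summed over the points of `S`; applied to a family `F a b` of translates it shows that
the entropy gap of a decomposition decreases under convolution (`gap_conv`). -/
theorem SQ {α γ : Type*} (A : Finset α) (B : Finset γ) (F : α → γ → S →₀ ℝ≥0) :
    NEnt (∑ a ∈ A, ∑ b ∈ B, F a b) + ∑ a ∈ A, ∑ b ∈ B, NEnt (F a b) ≤
      ∑ a ∈ A, NEnt (∑ b ∈ B, F a b) + ∑ b ∈ B, NEnt (∑ a ∈ A, F a b) := by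
  set Z : Finset S := A.biUnion fun a => B.biUnion fun b => (F a b).support with hZ
  have hab : ∀ a ∈ A, ∀ b ∈ B, (F a b).support ⊆ Z := by
    intro a ha b hb s hs
    simp only [hZ, Finset.mem_biUnion]; exact ⟨a, ha, b, hb, hs⟩
  have h1 : ∀ a ∈ A, (∑ b ∈ B, F a b).support ⊆ Z := fun a ha =>
    (support_sum_le _ _).trans (Finset.biUnion_subset.2 (hab a ha))
  have h2 : ∀ b ∈ B, (∑ a ∈ A, F a b).support ⊆ Z := fun b hb =>
    (support_sum_le _ _).trans (Finset.biUnion_subset.2 fun a ha => hab a ha b hb)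
  have h3 : (∑ a ∈ A, ∑ b ∈ B, F a b).support ⊆ Z :=
    (support_sum_le _ _).trans (Finset.biUnion_subset.2 h1)
  rw [NEnt_eq h3, Finset.sum_congr rfl fun a ha => NEnt_eq (h1 a ha),
    Finset.sum_congr rfl fun b hb => NEnt_eq (h2 b hb),
    Finset.sum_congr rfl fun a ha => Finset.sum_congr rfl fun b hb => NEnt_eq (hab a ha b hb)]
  have e1 : ∑ a ∈ A, ∑ b ∈ B, ∑ s ∈ Z, negMulLog (F a b s : ℝ) =
      ∑ s ∈ Z, ∑ a ∈ A, ∑ b ∈ B, negMulLog (F a b s : ℝ) := by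
    rw [Finset.sum_comm (s := Z)]
    refine Finset.sum_congr rfl fun a _ => Finset.sum_comm
  have e2 : ∑ a ∈ A, ∑ s ∈ Z, negMulLog ((∑ b ∈ B, F a b) s : ℝ) =
      ∑ s ∈ Z, ∑ a ∈ A, negMulLog ((∑ b ∈ B, F a b) s : ℝ) := Finset.sum_comm
  have e3 : ∑ b ∈ B, ∑ s ∈ Z, negMulLog ((∑ a ∈ A, F a b) s : ℝ) =
      ∑ s ∈ Z, ∑ b ∈ B, negMulLog ((∑ a ∈ A, F a b) s : ℝ) := Finset.sum_comm
  rw [e1, e2, e3,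
    ← Finset.sum_add_distrib, ← Finset.sum_add_distrib]
  refine Finset.sum_le_sum fun s _ => ?_
  simp only [coe_sum_apply]
  exact PW A B fun a b => F a b s

/-- Concavity of entropy, which in homogeneous form is superadditivity. -/
theorem Ent_superadd {ι : Type*} (A : Finset ι) (f : ι → S →₀ ℝ≥0) :
    ∑ a ∈ A, Ent (f a) ≤ Ent (∑ a ∈ A, f a) := by
  set Z : Finset S := A.biUnion fun a => (f a).support
  have h1 : ∀ a ∈ A, (f a).support ⊆ Z := fun a ha => Finset.subset_biUnion_of_mem
    (fun a => (f a).support) ha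
  have h2 : (∑ a ∈ A, f a).support ⊆ Z := support_sum_le _ _
  have h := PW A Z fun a s => f a s
  unfold Ent
  have e1 : ∑ a ∈ A, (NEnt (f a) - negMulLog (mass (f a))) =
      ∑ a ∈ A, (∑ s ∈ Z, negMulLog (f a s : ℝ) - negMulLog (∑ s ∈ Z, (f a s : ℝ))) :=
    Finset.sum_congr rfl fun a ha => by rw [NEnt_eq (h1 a ha), mass_eq (h1 a ha)]
  have e2 : ∑ a ∈ A, mass (f a) = ∑ a ∈ A, ∑ s ∈ Z, (f a s : ℝ) :=
    Finset.sum_congr rfl fun a ha => mass_eq (h1 a ha)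
  rw [e1, NEnt_eq h2, mass_sum, e2, Finset.sum_sub_distrib]
  simp only [coe_sum_apply]
  linarith

theorem Ent_add_ge (f g : S →₀ ℝ≥0) : Ent f + Ent g ≤ Ent (f + g) := by
  have := Ent_superadd (Finset.univ : Finset Bool) (fun b => if b then f else g)
  simpa using this

theorem Ent_nonneg (f : S →₀ ℝ≥0) : 0 ≤ Ent f := by
  have := Ent_superadd f.support (fun s => Finsupp.single s (f s))
  simp only [Ent_single, Finset.sum_const_zero] at this
  have h2 : ∑ s ∈ f.support, Finsupp.single s (f s) = f := Finsupp.sum_single f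
  rwa [h2] at this

end EntDim

/-! ### Chain rule, conditioning and submodularity -/

namespace EntDim

open scoped NNReal
open Real (negMulLog)
variable {S T U V : Type*}

theorem mem_support_sum {ι : Type*} {A : Finset ι} {f : ι → S →₀ ℝ≥0} {s : S}
    (hs : s ∈ (∑ a ∈ A, f a).support) : ∃ a ∈ A, s ∈ (f a).support :=
  Finset.mem_biUnion.1 (support_sum_le _ _ hs)

theorem mass_le_of_support {f : S →₀ ℝ≥0} {s : S} : (f s : ℝ) ≤ mass f := by
  have h : f.support ⊆ insert s f.support := Finset.subset_insert _ _
  rw [mass_eq h]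
  exact Finset.single_le_sum (f := fun s => (f s : ℝ)) (fun _ _ => by positivity)
    (Finset.mem_insert_self _ _)

theorem Ent_le_card {f : S →₀ ℝ≥0} {A : Finset S} (h : f.support ⊆ A) :
    Ent f ≤ mass f * Real.log A.card := by
  rcases (mass_nonneg f).eq_or_lt with h0 | hpos
  · have : f = 0 := by
      ext s
      have := mass_le_of_support (f := f) (s := s)
      rw [← h0] at this
      simpa using le_antisymm this (f s).2
    subst this; simp [Ent_zero, mass_zero]
  have hA : (0 : ℝ) < A.card := by
    rcases A.eq_empty_or_nonempty with rfl | hA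
    · rw [mass_eq h] at hpos; simp at hpos
    · exact_mod_cast hA.card_pos
  set m := mass f with hm
  have key : ∀ s ∈ A, negMulLog (f s : ℝ) + (f s : ℝ) * Real.log m - (f s : ℝ) * Real.log A.card
      ≤ m / A.card - f s := by
    intro s _
    rcases (f s).2.eq_or_lt with h0 | hs
    · have : (f s : ℝ) = 0 := h0.symm
      rw [this]; simp; positivity
    have hs : (0 : ℝ) < f s := hs
    have h1 := Real.log_le_sub_one_of_pos (x := m / (A.card * f s)) (by positivity)
    rw [Real.log_div hpos.ne' (by positivity), Real.log_mul hA.ne' hs.ne'] at h1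
    have h2 := mul_le_mul_of_nonneg_left h1 hs.le
    have h3 : (f s : ℝ) * (m / (A.card * f s) - 1) = m / A.card - f s := by field_simp
    rw [h3] at h2
    simp only [negMulLog]; linarith
  have := Finset.sum_le_sum key
  simp only [Finset.sum_sub_distrib, Finset.sum_add_distrib, ← Finset.sum_mul, ← mass_eq h,
    ← NEnt_eq h, Finset.sum_const, nsmul_eq_mul] at this
  rw [mul_div_cancel₀ _ hA.ne', ← hm] at this
  unfold Ent; rw [← hm]; simp only [negMulLog] at *; linarith

theorem coe_mapDomain_apply (h : S → T) (f : S →₀ ℝ≥0) (k : T) :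
    ((f.mapDomain h k : ℝ≥0) : ℝ) = mass (f.filter fun s => h s = k) := by
  rw [mass_eq (Finset.Subset.refl _), Finsupp.support_filter, Finsupp.mapDomain, Finsupp.sum_apply,
    Finset.sum_filter, Finsupp.sum]
  push_cast
  refine Finset.sum_congr rfl fun s _ => ?_
  by_cases hs : h s = k
  · rw [if_pos hs, hs, Finsupp.single_eq_same, Finsupp.filter_apply, if_pos hs]
  · rw [if_neg hs, Finsupp.single_eq_of_ne (Ne.symm hs)]; rfl

/-- The restriction of `f` to the fibre `h = k`. -/
def fib (h : S → T) (k : T) (f : S →₀ ℝ≥0) : S →₀ ℝ≥0 := f.filter fun s => h s = k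

theorem mem_fib {h : S → T} {k : T} {f : S →₀ ℝ≥0} {s : S} (hs : s ∈ (fib h k f).support) :
    s ∈ f.support ∧ h s = k := by
  rw [fib, Finsupp.support_filter, Finset.mem_filter] at hs; exact hs

theorem filter_mapDomain (X : S → T) (P : T → Prop) (f : S →₀ ℝ≥0) :
    (f.mapDomain X).filter P = (f.filter fun s => P (X s)).mapDomain X := by
  induction f using Finsupp.induction_linear with
  | zero => rw [Finsupp.mapDomain_zero, Finsupp.filter_zero, Finsupp.filter_zero, Finsupp.mapDomain_zero]
  | add f g hf hg => rw [Finsupp.mapDomain_add, Finsupp.filter_add, hf, hg, Finsupp.filter_add,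
      Finsupp.mapDomain_add]
  | single s c =>
    by_cases hs : P (X s)
    · rw [Finsupp.mapDomain_single, Finsupp.filter_single_of_pos _ hs,
        Finsupp.filter_single_of_pos (fun s => P (X s)) hs, Finsupp.mapDomain_single]
    · rw [Finsupp.mapDomain_single, Finsupp.filter_single_of_neg _ hs,
        Finsupp.filter_single_of_neg (fun s => P (X s)) hs, Finsupp.mapDomain_zero]

theorem support_mapDomain_sub (h : S → T) (f : S →₀ ℝ≥0) {K : Finset T}
    (hK : ∀ s ∈ f.support, h s ∈ K) : (f.mapDomain h).support ⊆ K :=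
  Finsupp.mapDomain_support.trans (Finset.image_subset_iff.2 hK)

theorem sum_filter_eq (h : S → T) (f : S →₀ ℝ≥0) {K : Finset T}
    (hK : ∀ s ∈ f.support, h s ∈ K) : ∑ k ∈ K, f.filter (fun s => h s = k) = f := by
  ext s
  rw [Finsupp.finsetSum_apply]
  simp only [Finsupp.filter_apply]
  rw [Finset.sum_ite_eq]
  by_cases hs : f s = 0
  · simp [hs]
  · rw [if_pos (hK s (Finsupp.mem_support_iff.2 hs))]

theorem NEnt_sum_filter (h : S → T) (f : S →₀ ℝ≥0) {K : Finset T}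
    (hK : ∀ s ∈ f.support, h s ∈ K) : NEnt f = ∑ k ∈ K, NEnt (f.filter fun s => h s = k) := by
  rw [NEnt_eq (Finset.Subset.refl _), ← Finset.sum_fiberwise_of_maps_to hK]
  refine Finset.sum_congr rfl fun k _ => ?_
  rw [NEnt_eq (Finset.Subset.refl _), Finsupp.support_filter]
  refine Finset.sum_congr rfl fun s hs => ?_
  rw [Finsupp.filter_apply, if_pos (Finset.mem_filter.1 hs).2]

theorem ex_sum_filter (h : S → T) (f : S →₀ ℝ≥0) {K : Finset T} (φ : S → ℝ)
    (hK : ∀ s ∈ f.support, h s ∈ K) : ex f φ = ∑ k ∈ K, ex (f.filter fun s => h s = k) φ := by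
  rw [ex_eq (Finset.Subset.refl _), ← Finset.sum_fiberwise_of_maps_to hK]
  refine Finset.sum_congr rfl fun k _ => ?_
  rw [ex_eq (Finset.Subset.refl _), Finsupp.support_filter]
  refine Finset.sum_congr rfl fun s hs => ?_
  rw [Finsupp.filter_apply, if_pos (Finset.mem_filter.1 hs).2]

theorem mass_sum_filter (h : S → T) (f : S →₀ ℝ≥0) {K : Finset T}
    (hK : ∀ s ∈ f.support, h s ∈ K) : ∑ k ∈ K, mass (f.filter fun s => h s = k) = mass f := by
  rw [← mass_sum, sum_filter_eq h f hK]

/-- Chain rule: the entropy of `f` is that of `h` plus the entropies of the fibres of `h`. -/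
theorem chain (h : S → T) (f : S →₀ ℝ≥0) {K : Finset T} (hK : ∀ s ∈ f.support, h s ∈ K) :
    Ent f = Ent (f.mapDomain h) + ∑ k ∈ K, Ent (f.filter fun s => h s = k) := by
  unfold Ent
  rw [mass_mapDomain, Finset.sum_sub_distrib, ← NEnt_sum_filter h f hK,
    NEnt_eq (support_mapDomain_sub h f hK)]
  simp only [coe_mapDomain_apply]; ring

theorem Ent_map_le (h : S → T) (f : S →₀ ℝ≥0) : Ent (f.mapDomain h) ≤ Ent f := by
  rw [chain h f (K := f.support.image h) (fun s hs => Finset.mem_image_of_mem _ hs)]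
  have := Finset.sum_nonneg (s := f.support.image h)
    (f := fun k => Ent (f.filter fun s => h s = k)) (fun k _ => Ent_nonneg _)
  linarith

/-- Entropy of a function of another random variable. -/
theorem Ent_comp_le (X : S → T) (g : T → U) (f : S →₀ ℝ≥0) :
    Ent (f.mapDomain fun s => g (X s)) ≤ Ent (f.mapDomain X) := by
  have : (f.mapDomain fun s => g (X s)) = (f.mapDomain X).mapDomain g := by
    rw [← Finsupp.mapDomain_comp]; rfl
  rw [this]; exact Ent_map_le _ _

theorem Ent_map_le_of_factor (X : S → T) (Y : S → U) (f : S →₀ ℝ≥0)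
    (h : ∀ s ∈ f.support, ∀ s' ∈ f.support, X s = X s' → Y s = Y s') :
    Ent (f.mapDomain Y) ≤ Ent (f.mapDomain X) := by
  rcases f.support.eq_empty_or_nonempty with h0 | ⟨s0, hs0⟩
  · rw [Finsupp.support_eq_empty] at h0; subst h0; simp [Finsupp.mapDomain_zero, Ent_zero]
  let g : T → U := fun x => if hx : ∃ s ∈ f.support, X s = x then Y hx.choose else Y s0
  have : f.mapDomain Y = f.mapDomain fun s => g (X s) := by
    refine Finsupp.mapDomain_congr fun s hs => ?_
    have hx : ∃ s' ∈ f.support, X s' = X s := ⟨s, hs, rfl⟩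
    simp only [g, dif_pos hx]
    exact h s hs _ hx.choose_spec.1 hx.choose_spec.2.symm
  rw [this]; exact Ent_comp_le _ _ _

theorem chain_pair (κ : S → T) (X : S → U) (f : S →₀ ℝ≥0) {K : Finset T}
    (hK : ∀ s ∈ f.support, κ s ∈ K) :
    Ent (f.mapDomain fun s => (κ s, X s)) =
      Ent (f.mapDomain κ) + ∑ k ∈ K, Ent ((f.filter fun s => κ s = k).mapDomain X) := by
  rw [chain (Prod.fst : T × U → T) (f.mapDomain fun s => (κ s, X s)) (K := K)]
  · congr 1
    · rw [← Finsupp.mapDomain_comp]; rfl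
    · refine Finset.sum_congr rfl fun k _ => ?_
      rw [filter_mapDomain]
      have : (f.filter fun s => κ s = k).mapDomain (fun s => (κ s, X s)) =
          ((f.filter fun s => κ s = k).mapDomain X).mapDomain (fun x => (k, x)) := by
        rw [← Finsupp.mapDomain_comp]
        refine Finsupp.mapDomain_congr fun s hs => ?_
        rw [Finsupp.support_filter, Finset.mem_filter] at hs
        simp [hs.2]
      show Ent ((f.filter fun s => κ s = k).mapDomain (fun s => (κ s, X s))) = _
      rw [this, Ent_mapDomain_inj (fun x y h => by simpa using h)]
  · intro q hq
    have := Finsupp.mapDomain_support hq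
    obtain ⟨s, hs, rfl⟩ := Finset.mem_image.1 this
    exact hK s hs

theorem ex_const (f : S →₀ ℝ≥0) (c : ℝ) : ex f (fun _ => c) = mass f * c := by
  rw [ex_eq (Finset.Subset.refl _), mass_eq (Finset.Subset.refl _), Finset.sum_mul]

theorem ex_mono {f : S →₀ ℝ≥0} {φ ψ : S → ℝ} (h : ∀ s ∈ f.support, φ s ≤ ψ s) :
    ex f φ ≤ ex f ψ := by
  rw [ex_eq (Finset.Subset.refl _), ex_eq (Finset.Subset.refl _)]
  exact Finset.sum_le_sum fun s hs => mul_le_mul_of_nonneg_left (h s hs) (f s).2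

theorem ex_congr {f : S →₀ ℝ≥0} {φ ψ : S → ℝ} (h : ∀ s ∈ f.support, φ s = ψ s) :
    ex f φ = ex f ψ := by
  rw [ex_eq (Finset.Subset.refl _), ex_eq (Finset.Subset.refl _)]
  exact Finset.sum_congr rfl fun s hs => by rw [h s hs]

/-- If, given `X = x`, the variable `Y` takes at most `exp (b x)` values, then adjoining `Y` to
`X` adds at most the average of `b X` to the entropy. -/
theorem fiber_bound (X : S → T) (Y : S → U) (f : S →₀ ℝ≥0) (b : T → ℝ)
    (hb : ∀ x, ∃ B : Finset U, (∀ s ∈ f.support, X s = x → Y s ∈ B) ∧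
      ((∃ s ∈ f.support, X s = x) → Real.log B.card ≤ b x)) :
    Ent (f.mapDomain fun s => (X s, Y s)) ≤ Ent (f.mapDomain X) + ex f (fun s => b (X s)) := by
  have hK : ∀ s ∈ f.support, X s ∈ f.support.image X := fun s hs => Finset.mem_image_of_mem _ hs
  rw [chain_pair X Y f hK, ex_sum_filter X f _ hK]
  gcongr with x hx
  obtain ⟨B, hB, hlog⟩ := hb x
  have hx' : ∃ s ∈ f.support, X s = x := by simpa using hx
  have h1 : ((f.filter fun s => X s = x).mapDomain Y).support ⊆ B := by
    refine support_mapDomain_sub _ _ fun s hs => ?_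
    rw [Finsupp.support_filter, Finset.mem_filter] at hs
    exact hB s hs.1 hs.2
  refine (Ent_le_card h1).trans ?_
  rw [mass_mapDomain]
  have h2 : ex (f.filter fun s => X s = x) (fun s => b (X s)) =
      ex (f.filter fun s => X s = x) (fun _ => b x) := ex_congr fun s hs => by
    rw [Finsupp.support_filter, Finset.mem_filter] at hs
    rw [hs.2]
  rw [h2, ex_const]
  exact mul_le_mul_of_nonneg_left (hlog hx') (mass_nonneg _)

theorem fiber_bound' (X : S → T) (Y : S → U) (f : S →₀ ℝ≥0) (b : T → ℝ)
    (hb : ∀ x, ∃ B : Finset U, (∀ s ∈ f.support, X s = x → Y s ∈ B) ∧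
      ((∃ s ∈ f.support, X s = x) → Real.log B.card ≤ b x)) :
    Ent (f.mapDomain Y) ≤ Ent (f.mapDomain X) + ex f (fun s => b (X s)) :=
  (Ent_comp_le (fun s => (X s, Y s)) Prod.snd f).trans (fiber_bound X Y f b hb)

/-- Conditional entropy is concave. -/
theorem cond_superadd {ι : Type*} (A : Finset ι) (F : ι → S →₀ ℝ≥0) (h : S → T) :
    ∑ a ∈ A, (Ent (F a) - Ent ((F a).mapDomain h)) ≤
      Ent (∑ a ∈ A, F a) - Ent ((∑ a ∈ A, F a).mapDomain h) := by
  set K : Finset T := A.biUnion fun a => (F a).support.image h with hKd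
  have hK : ∀ a ∈ A, ∀ s ∈ (F a).support, h s ∈ K := fun a ha s hs =>
    Finset.mem_biUnion.2 ⟨a, ha, Finset.mem_image_of_mem _ hs⟩
  have hK' : ∀ s ∈ (∑ a ∈ A, F a).support, h s ∈ K := by
    intro s hs
    obtain ⟨a, ha, hs⟩ := Finset.mem_biUnion.1 (support_sum_le _ _ hs)
    exact hK a ha s hs
  rw [chain h _ hK', add_sub_cancel_left]
  have e : ∀ a ∈ A, Ent (F a) - Ent ((F a).mapDomain h) =
      ∑ k ∈ K, Ent ((F a).filter fun s => h s = k) := fun a ha => by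
    rw [chain h _ (hK a ha), add_sub_cancel_left]
  rw [Finset.sum_congr rfl e, Finset.sum_comm]
  refine Finset.sum_le_sum fun k _ => (Ent_superadd _ _).trans_eq ?_
  rw [Finsupp.filter_sum]

theorem marg_fst (g : S × T →₀ ℝ≥0) {B : Finset T} (hB : ∀ q ∈ g.support, q.2 ∈ B) (s : S) :
    ((g.mapDomain Prod.fst s : ℝ≥0) : ℝ) = ∑ t ∈ B, (g (s, t) : ℝ) := by
  rw [coe_mapDomain_apply]
  rw [mass_eq (A := B.image fun t => (s, t))]
  · rw [Finset.sum_image (by simp)]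
    refine Finset.sum_congr rfl fun t _ => ?_
    rw [Finsupp.filter_apply, if_pos rfl]
  · intro q hq
    rw [Finsupp.support_filter, Finset.mem_filter] at hq
    refine Finset.mem_image.2 ⟨q.2, hB q hq.1, ?_⟩
    rw [← hq.2]

theorem marg_snd (g : S × T →₀ ℝ≥0) {A : Finset S} (hA : ∀ q ∈ g.support, q.1 ∈ A) (t : T) :
    ((g.mapDomain Prod.snd t : ℝ≥0) : ℝ) = ∑ s ∈ A, (g (s, t) : ℝ) := by
  rw [coe_mapDomain_apply]
  rw [mass_eq (A := A.image fun s => (s, t))]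
  · rw [Finset.sum_image (by simp)]
    refine Finset.sum_congr rfl fun s _ => ?_
    rw [Finsupp.filter_apply, if_pos rfl]
  · intro q hq
    rw [Finsupp.support_filter, Finset.mem_filter] at hq
    refine Finset.mem_image.2 ⟨q.1, hA q hq.1, ?_⟩
    rw [← hq.2]

/-- Subadditivity of entropy for a pair of random variables. -/
theorem Ent_pair_le (X : S → T) (Y : S → U) (f : S →₀ ℝ≥0) :
    Ent (f.mapDomain fun s => (X s, Y s)) ≤ Ent (f.mapDomain X) + Ent (f.mapDomain Y) := by
  set g := f.mapDomain fun s => (X s, Y s) with hg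
  have e1 : f.mapDomain X = g.mapDomain Prod.fst := by rw [hg, ← Finsupp.mapDomain_comp]; rfl
  have e2 : f.mapDomain Y = g.mapDomain Prod.snd := by rw [hg, ← Finsupp.mapDomain_comp]; rfl
  rw [e1, e2]
  set A := g.support.image Prod.fst
  set B := g.support.image Prod.snd
  have hA : ∀ q ∈ g.support, q.1 ∈ A := fun q hq => Finset.mem_image_of_mem _ hq
  have hB : ∀ q ∈ g.support, q.2 ∈ B := fun q hq => Finset.mem_image_of_mem _ hq
  have hAB : g.support ⊆ A ×ˢ B := fun q hq => Finset.mem_product.2 ⟨hA q hq, hB q hq⟩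
  have h := PW A B fun a b => g (a, b)
  unfold Ent
  rw [mass_mapDomain Prod.fst g, mass_mapDomain Prod.snd g, NEnt_eq (support_mapDomain_sub _ _ hA),
    NEnt_eq (support_mapDomain_sub _ _ hB), NEnt_eq hAB, mass_eq hAB, Finset.sum_product,
    Finset.sum_product]
  simp only [marg_fst g hB, marg_snd g hA]
  linarith

/-- Submodularity of entropy: conditioning on more data decreases entropy. -/
theorem Ent_submod (X : S → T) (Y : S → U) (Z : S → V) (f : S →₀ ℝ≥0) :
    Ent (f.mapDomain fun s => (X s, Y s, Z s)) + Ent (f.mapDomain X) ≤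
      Ent (f.mapDomain fun s => (X s, Y s)) + Ent (f.mapDomain fun s => (X s, Z s)) := by
  have hK : ∀ s ∈ f.support, X s ∈ f.support.image X := fun s hs => Finset.mem_image_of_mem _ hs
  rw [chain_pair X (fun s => (Y s, Z s)) f hK, chain_pair X Y f hK, chain_pair X Z f hK]
  have := Finset.sum_le_sum (s := f.support.image X) fun x _ =>
    Ent_pair_le Y Z (f.filter fun s => X s = x)
  rw [Finset.sum_add_distrib] at this
  linarith

end EntDim

/-! ### Convolution on `ℤ` and entropy growth -/

namespace EntDim

open scoped NNReal
open Real (negMulLog)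

/-- The translate of `f` by `a`. -/
def shift (a : ℤ) (f : ℤ →₀ ℝ≥0) : ℤ →₀ ℝ≥0 := f.mapDomain (a + ·)

/-- The convolution of two finitely supported measures on `ℤ`. -/
def conv (f g : ℤ →₀ ℝ≥0) : ℤ →₀ ℝ≥0 := f.sum fun a x => x • shift a g

theorem conv_eq {f g : ℤ →₀ ℝ≥0} {A : Finset ℤ} (h : f.support ⊆ A) :
    conv f g = ∑ a ∈ A, f a • shift a g :=
  Finsupp.sum_of_support_subset f h _ (by simp)

theorem shift_add (a : ℤ) (f g : ℤ →₀ ℝ≥0) : shift a (f + g) = shift a f + shift a g :=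
  Finsupp.mapDomain_add

theorem shift_smul (a : ℤ) (c : ℝ≥0) (f : ℤ →₀ ℝ≥0) : shift a (c • f) = c • shift a f :=
  Finsupp.mapDomain_smul _ _

theorem shift_single (a b : ℤ) (c : ℝ≥0) :
    shift a (Finsupp.single b c) = Finsupp.single (a + b) c := Finsupp.mapDomain_single

theorem shift_zero_right (a : ℤ) : shift a 0 = 0 := Finsupp.mapDomain_zero

theorem shift_sum {ι : Type*} (a : ℤ) (A : Finset ι) (f : ι → ℤ →₀ ℝ≥0) :
    shift a (∑ i ∈ A, f i) = ∑ i ∈ A, shift a (f i) := Finsupp.mapDomain_finsetSum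

theorem shift_inj (a : ℤ) : Function.Injective (a + · : ℤ → ℤ) := add_right_injective a

theorem shift_shift (a b : ℤ) (f : ℤ →₀ ℝ≥0) : shift a (shift b f) = shift (a + b) f := by
  unfold shift; rw [← Finsupp.mapDomain_comp]; congr 1; funext x; simp [add_assoc]

theorem shift_apply (a x : ℤ) (f : ℤ →₀ ℝ≥0) : shift a f x = f (x - a) := by
  have := Finsupp.mapDomain_apply (shift_inj a) f (x - a)
  simpa [shift] using this

theorem Ent_shift (a : ℤ) (f : ℤ →₀ ℝ≥0) : Ent (shift a f) = Ent f :=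
  Ent_mapDomain_inj (shift_inj a) f

theorem NEnt_shift (a : ℤ) (f : ℤ →₀ ℝ≥0) : NEnt (shift a f) = NEnt f :=
  NEnt_mapDomain_inj (shift_inj a) f

theorem mass_shift (a : ℤ) (f : ℤ →₀ ℝ≥0) : mass (shift a f) = mass f := mass_mapDomain _ f

theorem conv_add_left (f f' g : ℤ →₀ ℝ≥0) : conv (f + f') g = conv f g + conv f' g := by
  unfold conv; rw [Finsupp.sum_add_index'] <;> simp [add_smul]

theorem conv_add_right (f g g' : ℤ →₀ ℝ≥0) : conv f (g + g') = conv f g + conv f g' := by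
  unfold conv; simp [shift_add, Finsupp.sum, Finset.sum_add_distrib]

theorem conv_zero_left (g : ℤ →₀ ℝ≥0) : conv 0 g = 0 := by simp [conv]

theorem conv_zero_right (f : ℤ →₀ ℝ≥0) : conv f 0 = 0 := by simp [conv, shift_zero_right]

theorem conv_single_left (a : ℤ) (x : ℝ≥0) (g : ℤ →₀ ℝ≥0) :
    conv (Finsupp.single a x) g = x • shift a g := by
  unfold conv; rw [Finsupp.sum_single_index (by simp)]

theorem conv_single_single (a b : ℤ) (x y : ℝ≥0) :
    conv (Finsupp.single a x) (Finsupp.single b y) = Finsupp.single (a + b) (x * y) := by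
  rw [conv_single_left, shift_single]; simp

theorem conv_smul_left (c : ℝ≥0) (f g : ℤ →₀ ℝ≥0) : conv (c • f) g = c • conv f g := by
  unfold conv; rw [Finsupp.sum_smul_index' (by simp)]
  simp [Finsupp.sum, Finset.smul_sum, mul_smul]

theorem conv_comm (f g : ℤ →₀ ℝ≥0) : conv f g = conv g f := by
  induction f using Finsupp.induction_linear with
  | zero => rw [conv_zero_left, conv_zero_right]
  | add f f' h h' => rw [conv_add_left, conv_add_right, h, h']
  | single a x =>
    induction g using Finsupp.induction_linear with
    | zero => rw [conv_zero_left, conv_zero_right]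
    | add f f' h h' => rw [conv_add_left, conv_add_right, h, h']
    | single b y => rw [conv_single_single, conv_single_single, add_comm, mul_comm]

theorem conv_smul_right (c : ℝ≥0) (f g : ℤ →₀ ℝ≥0) : conv f (c • g) = c • conv f g := by
  rw [conv_comm, conv_smul_left, conv_comm]

theorem conv_shift_left (a : ℤ) (f g : ℤ →₀ ℝ≥0) : conv (shift a f) g = shift a (conv f g) := by
  induction f using Finsupp.induction_linear with
  | zero => rw [shift_zero_right, conv_zero_left, shift_zero_right]
  | add f f' h h' => rw [shift_add, conv_add_left, conv_add_left, shift_add, h, h']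
  | single b x => rw [shift_single, conv_single_left, conv_single_left, shift_smul, shift_shift]

theorem conv_assoc (f g k : ℤ →₀ ℝ≥0) : conv (conv f g) k = conv f (conv g k) := by
  induction f using Finsupp.induction_linear with
  | zero => simp only [conv_zero_left]
  | add f f' h h' => simp only [conv_add_left, h, h']
  | single b x => rw [conv_single_left, conv_single_left, conv_smul_left, conv_shift_left]

theorem conv_right_comm (f g k : ℤ →₀ ℝ≥0) : conv (conv f g) k = conv (conv f k) g := by
  rw [conv_assoc, conv_assoc, conv_comm g k]

theorem conv_sum_left {ι : Type*} (A : Finset ι) (f : ι → ℤ →₀ ℝ≥0) (g : ℤ →₀ ℝ≥0) :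
    conv (∑ i ∈ A, f i) g = ∑ i ∈ A, conv (f i) g := by
  induction A using Finset.induction_on with
  | empty => simp [conv_zero_left]
  | insert a A ha ih => rw [Finset.sum_insert ha, Finset.sum_insert ha, conv_add_left, ih]

theorem conv_sum_right {ι : Type*} (A : Finset ι) (f : ι → ℤ →₀ ℝ≥0) (g : ℤ →₀ ℝ≥0) :
    conv g (∑ i ∈ A, f i) = ∑ i ∈ A, conv g (f i) := by
  simp only [conv_comm g, conv_sum_left]

theorem mass_conv (f g : ℤ →₀ ℝ≥0) : mass (conv f g) = mass f * mass g := by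
  rw [conv_eq (Finset.Subset.refl _), mass_sum, mass_eq (Finset.Subset.refl f.support),
    Finset.sum_mul]
  exact Finset.sum_congr rfl fun a _ => by rw [mass_smul, mass_shift]

theorem conv_one (f : ℤ →₀ ℝ≥0) : conv f (Finsupp.single 0 1) = f := by
  rw [conv_comm, conv_single_left, one_smul]
  ext x; rw [shift_apply]; simp

theorem support_conv {f g : ℤ →₀ ℝ≥0} {z : ℤ} (hz : z ∈ (conv f g).support) :
    ∃ x ∈ f.support, ∃ y ∈ g.support, x + y = z := by
  rw [conv_eq (Finset.Subset.refl _)] at hz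
  obtain ⟨a, ha, hz⟩ := mem_support_sum hz
  refine ⟨a, ha, z - a, ?_, by ring⟩
  rw [Finsupp.mem_support_iff] at hz ⊢
  intro h; apply hz
  rw [Finsupp.smul_apply, shift_apply, h]; simp

/-- The entropy gap of a decomposition decreases under convolution. -/
theorem gap_conv {ι : Type*} (A : Finset ι) (P : ι → ℤ →₀ ℝ≥0) (τ : ℤ →₀ ℝ≥0) (hτ : mass τ = 1) :
    Ent (conv (∑ a ∈ A, P a) τ) - ∑ a ∈ A, Ent (conv (P a) τ) ≤
      Ent (∑ a ∈ A, P a) - ∑ a ∈ A, Ent (P a) := by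
  have h := SQ A τ.support fun a t => τ t • shift t (P a)
  have e1 : ∀ a, ∑ t ∈ τ.support, τ t • shift t (P a) = conv (P a) τ := fun a => by
    rw [conv_comm, conv_eq (Finset.Subset.refl _)]
  have e2 : ∀ t, ∑ a ∈ A, τ t • shift t (P a) = τ t • shift t (∑ a ∈ A, P a) := fun t => by
    rw [shift_sum, Finset.smul_sum]
  have hm : ∑ t ∈ τ.support, (τ t : ℝ) = 1 := by rw [← hτ, mass_eq (Finset.Subset.refl _)]
  have e3 : ∀ Q : ℤ →₀ ℝ≥0, ∑ t ∈ τ.support, NEnt (τ t • shift t Q) = NEnt Q + mass Q * NEnt τ := by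
    intro Q
    simp only [NEnt_smul, NEnt_shift, mass_shift, Finset.sum_add_distrib, ← Finset.sum_mul, hm,
      ← Finset.mul_sum]
    rw [NEnt_eq (Finset.Subset.refl τ.support)]; ring
  simp only [e1, e2, e3, Finset.sum_add_distrib, ← Finset.sum_mul, ← mass_sum,
    ← conv_sum_left] at h
  unfold Ent
  simp only [mass_conv, hτ, mul_one, Finset.sum_sub_distrib]
  linarith

/-- The entropy growth of `σ` under convolution with `θ`, in a form homogeneous in `θ`. -/
def Gr (σ θ : ℤ →₀ ℝ≥0) : ℝ := Ent (conv θ σ) - mass θ * Ent σ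

theorem Gr_smul (σ θ : ℤ →₀ ℝ≥0) (c : ℝ≥0) : Gr σ (c • θ) = c * Gr σ θ := by
  unfold Gr; rw [conv_smul_left, Ent_smul, mass_smul]; ring

theorem Gr_shift (σ θ : ℤ →₀ ℝ≥0) (a : ℤ) : Gr σ (shift a θ) = Gr σ θ := by
  unfold Gr; rw [conv_shift_left, Ent_shift, mass_shift]

theorem Gr_superadd {ι : Type*} (A : Finset ι) (σ : ℤ →₀ ℝ≥0) (θ : ι → ℤ →₀ ℝ≥0) :
    ∑ a ∈ A, Gr σ (θ a) ≤ Gr σ (∑ a ∈ A, θ a) := by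
  unfold Gr
  rw [Finset.sum_sub_distrib, conv_sum_left, mass_sum, Finset.sum_mul]
  linarith [Ent_superadd A fun a => conv (θ a) σ]

theorem Gr_single (σ : ℤ →₀ ℝ≥0) (a : ℤ) (c : ℝ≥0) : Gr σ (Finsupp.single a c) = 0 := by
  unfold Gr; rw [conv_single_left, Ent_smul, Ent_shift, mass_single, sub_self]

theorem Gr_nonneg (σ θ : ℤ →₀ ℝ≥0) : 0 ≤ Gr σ θ := by
  have := Gr_superadd θ.support σ fun s => Finsupp.single s (θ s)
  simp only [Gr_single, Finset.sum_const_zero] at this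
  have h2 : ∑ s ∈ θ.support, Finsupp.single s (θ s) = θ := Finsupp.sum_single θ
  rwa [h2] at this

theorem Gr_add_ge (σ θ θ' : ℤ →₀ ℝ≥0) : Gr σ θ + Gr σ θ' ≤ Gr σ (θ + θ') := by
  have := Gr_superadd (Finset.univ : Finset Bool) σ (fun b => if b then θ else θ')
  simpa using this

/-- The gap in the superadditivity of `Gr σ` decreases when `σ` is smoothed by `τ`. -/
theorem Gr_gap {ι : Type*} (A : Finset ι) (σ τ : ℤ →₀ ℝ≥0) (θ : ι → ℤ →₀ ℝ≥0) (hτ : mass τ = 1) :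
    Gr (conv σ τ) (∑ a ∈ A, θ a) - ∑ a ∈ A, Gr (conv σ τ) (θ a) ≤
      Gr σ (∑ a ∈ A, θ a) - ∑ a ∈ A, Gr σ (θ a) := by
  have := gap_conv A (fun a => conv (θ a) σ) τ hτ
  unfold Gr
  simp only [Finset.sum_sub_distrib, ← Finset.sum_mul, ← mass_sum, ← conv_assoc, ← conv_sum_left]
    at this ⊢
  linarith

/-- Smoothing `σ` decreases its entropy growth. -/
theorem Gr_mono (σ τ θ : ℤ →₀ ℝ≥0) (hτ : mass τ = 1) : Gr (conv σ τ) θ ≤ Gr σ θ := by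
  have := Gr_gap θ.support σ τ (fun s => Finsupp.single s (θ s)) hτ
  simp only [Gr_single, Finset.sum_const_zero] at this
  have h2 : ∑ s ∈ θ.support, Finsupp.single s (θ s) = θ := Finsupp.sum_single θ
  rw [h2] at this; linarith

/-- Growth is subadditive under convolution (a form of the Kaimanovich–Vershik lemma). -/
theorem Gr_conv_le (σ θ θ' : ℤ →₀ ℝ≥0) (h : mass θ = 1) (h' : mass θ' = 1) :
    Gr σ (conv θ θ') ≤ Gr σ θ + Gr σ θ' := by
  have := Gr_mono σ θ' θ h'
  unfold Gr at *
  rw [conv_assoc, mass_conv, conv_comm θ' σ, h, h'] at *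
  linarith

theorem Ent_conv_ge (f g : ℤ →₀ ℝ≥0) (hf : mass f = 1) : Ent g ≤ Ent (conv f g) := by
  have := Gr_nonneg g f
  unfold Gr at this; rw [hf] at this; linarith

theorem Ent_conv_ge' (f g : ℤ →₀ ℝ≥0) (hg : mass g = 1) : Ent f ≤ Ent (conv f g) := by
  rw [conv_comm]; exact Ent_conv_ge g f hg

/-- Subadditivity of entropy under convolution. -/
theorem Ent_conv_le (f g : ℤ →₀ ℝ≥0) (hf : mass f = 1) (hg : mass g = 1) :
    Ent (conv f g) ≤ Ent f + Ent g := by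
  have := Gr_mono (Finsupp.single 0 1) g f hg
  unfold Gr at this
  rw [conv_one, Ent_single, conv_comm _ g, conv_one, hf] at this
  linarith

/-- The uniform measure on the two points `0` and `d`. -/
def pair (d : ℤ) : ℤ →₀ ℝ≥0 := Finsupp.single 0 (1/2) + Finsupp.single d (1/2)

theorem half_add_half : ((1/2 : ℝ≥0) : ℝ) + ((1/2 : ℝ≥0) : ℝ) = 1 := by push_cast; norm_num

theorem mass_pair (d : ℤ) : mass (pair d) = 1 := by
  unfold pair; rw [mass_add, mass_single, mass_single, half_add_half]

theorem pair_sq (d : ℤ) : conv (pair d) (pair d) =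
    (1/2 : ℝ≥0) • pair (2 * d) + Finsupp.single d (1/2) := by
  unfold pair
  simp only [conv_add_left, conv_add_right, conv_single_single, smul_add, Finsupp.smul_single,
    add_zero, zero_add, smul_eq_mul]
  have e : (1/2 : ℝ≥0) = 1/2 * (1/2) + 1/2 * (1/2) := by
    rw [← mul_add]; norm_num
  have : (Finsupp.single d (1/2) : ℤ →₀ ℝ≥0) =
    Finsupp.single d (1/2 * (1/2)) + Finsupp.single d (1/2 * (1/2)) := by
    rw [← Finsupp.single_add, ← e]
  rw [this, ← two_mul]; abel

/-- The square of `pair d` contains a copy of `pair (2 * d)` of weight `1/2`, so little growth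
under the pair at distance `d` forces little growth under the pair at distance `2 * d`. -/
theorem Gr_pair_double (σ : ℤ →₀ ℝ≥0) (d : ℤ) : Gr σ (pair (2 * d)) ≤ 4 * Gr σ (pair d) := by
  have h1 := Gr_conv_le σ (pair d) (pair d) (mass_pair d) (mass_pair d)
  rw [pair_sq] at h1
  have h2 := Gr_add_ge σ ((1/2 : ℝ≥0) • pair (2 * d)) (Finsupp.single d (1/2))
  rw [Gr_single, Gr_smul] at h2
  push_cast at h2
  linarith

/-- The uniform measure on the arithmetic progression `0, d, …, (2 ^ m - 1) * d`, as a convolution of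
pairs. -/
def AP : ℕ → ℤ → ℤ →₀ ℝ≥0
  | 0, _ => Finsupp.single 0 1
  | m + 1, d => conv (AP m d) (pair (2 ^ m * d))

theorem mass_AP (m : ℕ) (d : ℤ) : mass (AP m d) = 1 := by
  induction m with
  | zero => simp [AP, mass_single]
  | succ m ih => rw [AP, mass_conv, ih, mass_pair, one_mul]

theorem Gr_pair_pow (σ : ℤ →₀ ℝ≥0) (d : ℤ) (m : ℕ) :
    Gr σ (pair (2 ^ m * d)) ≤ 4 ^ m * Gr σ (pair d) := by
  induction m with
  | zero => simp
  | succ m ih =>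
    have := Gr_pair_double σ (2 ^ m * d)
    rw [pow_succ, mul_comm _ (2 : ℤ), mul_assoc, pow_succ]
    linarith

/-- Little growth under one pair `pair d` forces little growth under a whole progression of
step `d`. -/
theorem Gr_AP (σ : ℤ →₀ ℝ≥0) (d : ℤ) (m : ℕ) : Gr σ (AP m d) ≤ 4 ^ m * Gr σ (pair d) := by
  induction m with
  | zero => rw [AP, Gr_single]; simpa using Gr_nonneg σ _
  | succ m ih =>
    have h1 := Gr_conv_le σ (AP m d) (pair (2 ^ m * d)) (mass_AP m d) (mass_pair _)
    have h2 := Gr_pair_pow σ d m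
    have h3 : 0 ≤ 4 ^ m * Gr σ (pair d) := mul_nonneg (by positivity) (Gr_nonneg _ _)
    rw [AP, pow_succ]; linarith

/-- The uniform measure on the integers of `[0, 2 ^ j)`, the smoothing kernel at scale `2 ^ j`. -/
def uu (j : ℕ) : ℤ →₀ ℝ≥0 := AP j 1

theorem mass_uu (j : ℕ) : mass (uu j) = 1 := mass_AP j 1

theorem uu_zero : uu 0 = Finsupp.single 0 1 := rfl

theorem uu_add (j m : ℕ) : uu (j + m) = conv (uu j) (AP m (2 ^ j)) := by
  induction m with
  | zero => rw [AP, conv_one]; rfl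
  | succ m ih =>
    rw [AP, ← conv_assoc, ← ih, ← add_assoc]
    show AP (j + m + 1) 1 = _
    rw [AP, mul_one, pow_add, mul_comm]; rfl

/-- `f` is supported in `[0, l)`. -/
def SuppIn (f : ℤ →₀ ℝ≥0) (l : ℤ) : Prop := ∀ x ∈ f.support, 0 ≤ x ∧ x < l

theorem conv_pair_apply (f : ℤ →₀ ℝ≥0) (d x : ℤ) :
    ((conv f (pair d) x : ℝ≥0) : ℝ) = (f x : ℝ) / 2 + (f (x - d) : ℝ) / 2 := by
  rw [conv_comm]; unfold pair
  rw [conv_add_left, conv_single_left, conv_single_left]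
  simp only [Finsupp.add_apply, Finsupp.smul_apply, shift_apply, sub_zero, smul_eq_mul]
  push_cast; ring

theorem SuppIn.conv_AP {f : ℤ →₀ ℝ≥0} {d : ℤ} (hf : SuppIn f d) (c : ℝ) (hc : ∀ x, (f x : ℝ) ≤ c)
    (m : ℕ) : SuppIn (conv f (AP m d)) (2 ^ m * d) ∧ ∀ x, (conv f (AP m d) x : ℝ) ≤ c / 2 ^ m := by
  induction m with
  | zero => rw [AP, conv_one]; simpa using ⟨hf, hc⟩
  | succ m ih =>
    obtain ⟨h1, h2⟩ := ih
    have hz : ∀ y, ¬ (0 ≤ y ∧ y < 2 ^ m * d) → (conv f (AP m d) y : ℝ) = 0 := by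
      intro y hy
      by_contra h0
      exact hy (h1 y (Finsupp.mem_support_iff.2 (by simpa using h0)))
    have hc0 : 0 ≤ c / 2 ^ m := (NNReal.coe_nonneg _).trans (h2 0)
    rw [AP, ← conv_assoc]
    refine ⟨fun x hx => ?_, fun x => ?_⟩
    · have hx' : ((conv (conv f (AP m d)) (pair (2 ^ m * d)) x : ℝ≥0) : ℝ) ≠ 0 := by
        simpa using Finsupp.mem_support_iff.1 hx
      rw [conv_pair_apply] at hx'
      rw [pow_succ]
      by_contra hcon
      by_cases ha : 0 ≤ x ∧ x < 2 ^ m * d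
      · apply hcon; constructor <;> linarith
      · by_cases hb : 0 ≤ x - 2 ^ m * d ∧ x - 2 ^ m * d < 2 ^ m * d
        · apply hcon; constructor <;> linarith
        · rw [hz _ ha, hz _ hb] at hx'; simp at hx'
    · rw [conv_pair_apply, pow_succ, ← div_div]
      by_cases ha : 0 ≤ x ∧ x < 2 ^ m * d
      · rw [hz (x - 2 ^ m * d) (by intro h; linarith)]
        linarith [h2 x]
      · rw [hz x ha]
        linarith [h2 (x - 2 ^ m * d)]

theorem Ent_ge_of_atoms {S : Type*} (f : S →₀ ℝ≥0) (hf : mass f = 1) {c : ℝ}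
    (h : ∀ x, (f x : ℝ) ≤ c) : - Real.log c ≤ Ent f := by
  unfold Ent
  rw [hf, Real.negMulLog_one, sub_zero, NEnt_eq (Finset.Subset.refl _)]
  rw [mass_eq (Finset.Subset.refl _)] at hf
  have : - Real.log c = ∑ s ∈ f.support, (f s : ℝ) * (- Real.log c) := by
    rw [← Finset.sum_mul, hf, one_mul]
  rw [this]
  refine Finset.sum_le_sum fun s hs => ?_
  have hpos : (0 : ℝ) < f s := by
    have := Finsupp.mem_support_iff.1 hs
    exact_mod_cast pos_iff_ne_zero.2 this
  have := Real.log_le_log hpos (h s)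
  rw [negMulLog]
  nlinarith

theorem Ent_le_of_suppIn {f : ℤ →₀ ℝ≥0} {l : ℤ} (hf : SuppIn f l) :
    Ent f ≤ mass f * Real.log l.toNat := by
  have : f.support ⊆ Finset.Ico 0 l := fun x hx => Finset.mem_Ico.2 (hf x hx)
  simpa using Ent_le_card this

theorem suppIn_one : SuppIn (Finsupp.single 0 1) 1 := by
  intro x hx
  have := Finsupp.support_single_subset hx
  simp at this; subst this; simp

theorem single_le_one (x : ℤ) : ((Finsupp.single 0 1 : ℤ →₀ ℝ≥0) x : ℝ) ≤ 1 := by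
  rw [Finsupp.single_apply]; split_ifs <;> simp

theorem uu_spec (j : ℕ) : SuppIn (uu j) (2 ^ j) ∧ ∀ x, (uu j x : ℝ) ≤ 1 / 2 ^ j := by
  have := suppIn_one.conv_AP 1 single_le_one j
  rw [conv_comm, conv_one, mul_one] at this
  exact this

theorem uu_AP_spec (j m : ℕ) {d : ℤ} (hd : 2 ^ j ≤ d) :
    SuppIn (conv (uu j) (AP m d)) (2 ^ m * d) ∧
      ∀ x, (conv (uu j) (AP m d) x : ℝ) ≤ 1 / 2 ^ j / 2 ^ m := by
  have h : SuppIn (uu j) d := fun x hx =>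
    ⟨((uu_spec j).1 x hx).1, lt_of_lt_of_le ((uu_spec j).1 x hx).2 hd⟩
  exact h.conv_AP _ (uu_spec j).2 m

theorem Ent_uu_ge (j : ℕ) : j * Real.log 2 ≤ Ent (uu j) := by
  have := Ent_ge_of_atoms (uu j) (mass_uu j) (uu_spec j).2
  rw [one_div, Real.log_inv, Real.log_pow] at this; linarith

theorem Ent_uu_le (j : ℕ) : Ent (uu j) ≤ j * Real.log 2 := by
  have := Ent_le_of_suppIn (uu_spec j).1
  rw [mass_uu, one_mul] at this
  have e : ((2 : ℤ) ^ j).toNat = 2 ^ j := by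
    have : (2 : ℤ) ^ j = ((2 ^ j : ℕ) : ℤ) := by push_cast; rfl
    rw [this, Int.toNat_natCast]
  rw [e] at this; push_cast at this; rwa [Real.log_pow] at this

theorem Ent_uu (j : ℕ) : Ent (uu j) = j * Real.log 2 := le_antisymm (Ent_uu_le j) (Ent_uu_ge j)

end EntDim

/-! ### Entropy growth on one block of scales -/

namespace EntDim

open scoped NNReal
open Real (negMulLog)

theorem suppIn_conv {f g : ℤ →₀ ℝ≥0} {k l : ℤ} (hf : SuppIn f k) (hg : SuppIn g l) :
    SuppIn (conv f g) (k + l) := by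
  intro z hz
  obtain ⟨x, hx, y, hy, rfl⟩ := support_conv hz
  have := hf x hx; have := hg y hy
  constructor <;> linarith

theorem log_toNat {l : ℤ} (hl : 0 ≤ l) : Real.log (l.toNat : ℝ) = Real.log (l : ℝ) := by
  congr 1
  have : ((l.toNat : ℤ) : ℝ) = (l : ℝ) := by rw [Int.toNat_of_nonneg hl]
  exact_mod_cast this

/-- If `σ = f * uu j` grows little under a pair at distance `d ∈ [2 ^ j, 2 ^ (j + M)]`, then it is
nearly uniform on scales up to `2 ^ (j + m)`: smoothing to scale `2 ^ (j + m)` gains almost no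
entropy. The reason is that `σ` grows little under the progression of step `d` (`Gr_AP`), and this
progression convolved with `uu j` is comparable to `uu (j + m)` up to `M + 1` binary digits. -/
theorem growth_far (f : ℤ →₀ ℝ≥0) (hf : mass f = 1) (j m M : ℕ) (d : ℤ) (h1 : 2 ^ j ≤ d)
    (h2 : d ≤ 2 ^ (j + M)) :
    Ent (conv f (uu (j + m))) - Ent (conv f (uu j)) ≤
      4 ^ m * Gr (conv f (uu j)) (pair d) + (M + 1) * Real.log 2 := by
  set σ := conv f (uu j) with hσ
  set W := AP m (2 ^ j) with hW
  set P := AP m d with hP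
  have a1 : Ent (conv f (uu (j + m))) ≤ Ent (conv (conv σ W) P) := by
    rw [uu_add, ← conv_assoc]; exact Ent_conv_ge' _ _ (mass_AP m d)
  have a2 : Ent (conv (conv σ W) P) = Ent (conv σ P) + Gr (conv σ P) W := by
    unfold Gr; rw [mass_AP, conv_right_comm, conv_comm W]; ring
  have a3 : Ent (conv σ P) ≤ Ent σ + 4 ^ m * Gr σ (pair d) := by
    have := Gr_AP σ d m
    unfold Gr at this; rw [mass_AP, conv_comm] at this; unfold Gr; linarith
  have a4 : Gr (conv σ P) W ≤ Gr (conv (uu j) P) W := by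
    have : conv σ P = conv (conv (uu j) P) f := by
      rw [hσ, conv_comm f, conv_right_comm]
    rw [this]; exact Gr_mono _ _ _ hf
  have a5 : Gr (conv (uu j) P) W ≤ (M + 1) * Real.log 2 := by
    have e1 : conv W (conv (uu j) P) = conv (uu (j + m)) P := by
      rw [uu_add, conv_comm, conv_right_comm]
    have e2 := Ent_ge_of_atoms _ (by rw [mass_conv, mass_uu, mass_AP, one_mul])
      (uu_AP_spec j m h1).2
    have hP' : SuppIn P (2 ^ m * d) := by
      have hd : 1 ≤ d := le_trans (one_le_pow₀ (by norm_num)) h1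
      have := (uu_AP_spec 0 m (d := d) (by simpa using hd)).1
      rwa [uu_zero, conv_comm, conv_one] at this
    have e3 := Ent_le_of_suppIn (suppIn_conv (uu_spec (j + m)).1 hP')
    have hd0 : 0 ≤ d := le_trans (by positivity) h1
    rw [mass_conv, mass_uu, mass_AP, log_toNat (by positivity)] at e3
    have e4 : Real.log (((2 : ℤ) ^ (j + m) + 2 ^ m * d : ℤ) : ℝ) ≤
        Real.log ((2 : ℝ) ^ (j + m + (M + 1))) := by
      have hd2 : (d : ℝ) ≤ 2 ^ (j + M) := by exact_mod_cast h2
      have hd00 : (0 : ℝ) ≤ d := by exact_mod_cast hd0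
      apply Real.log_le_log
      · push_cast; positivity
      · push_cast
        have q1 : (2 : ℝ) ^ m * d ≤ 2 ^ m * 2 ^ (j + M) := by gcongr
        have q2 : (2 : ℝ) ^ (j + m) ≤ 2 ^ m * 2 ^ (j + M) := by
          rw [← pow_add]; exact pow_le_pow_right₀ (by norm_num) (by omega)
        have q3 : (2 : ℝ) ^ (j + m + (M + 1)) = 2 * (2 ^ m * 2 ^ (j + M)) := by ring
        linarith
    rw [Real.log_pow] at e4
    rw [div_div, one_div, Real.log_inv, neg_neg, ← pow_add, Real.log_pow] at e2
    unfold Gr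
    rw [e1, mass_AP]
    push_cast at *
    linarith
  linarith

/-- The uniform measure on the two points `y` and `y'`. -/
def half (y y' : ℤ) : ℤ →₀ ℝ≥0 := Finsupp.single y (1/2) + Finsupp.single y' (1/2)

theorem Gr_half (σ : ℤ →₀ ℝ≥0) (y y' : ℤ) : Gr σ (half y y') = Gr σ (pair |y - y'|) := by
  wlog h : y ≤ y' generalizing y y'
  · have := this y' y (by omega)
    rw [abs_sub_comm, ← this]; unfold half; rw [add_comm]
  have : half y y' = shift y (pair |y - y'|) := by
    unfold half pair
    rw [shift_add, shift_single, shift_single, abs_sub_comm, abs_of_nonneg (by linarith)]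
    simp
  rw [this, Gr_shift]

/-- Up to a factor, `θ` is the `θ × θ`-average of the two-point measures `half y y'`. -/
theorem smul_half (θ : ℤ →₀ ℝ≥0) :
    ∑ y ∈ θ.support, ∑ y' ∈ θ.support, (θ y * θ y') • half y y' =
      (∑ y ∈ θ.support, θ y) • θ := by
  have e : ∑ y ∈ θ.support, θ y • (Finsupp.single y (1/2) : ℤ →₀ ℝ≥0) = (1/2 : ℝ≥0) • θ := by
    conv_rhs => rw [← Finsupp.sum_single θ]
    rw [Finsupp.sum, Finset.smul_sum]
    refine Finset.sum_congr rfl fun y _ => ?_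
    simp [mul_comm]
  unfold half
  simp only [smul_add, Finset.sum_add_distrib]
  have e1 : ∑ y ∈ θ.support, ∑ y' ∈ θ.support, (θ y * θ y') • (Finsupp.single y (1/2) : ℤ →₀ ℝ≥0)
      = (∑ y ∈ θ.support, θ y) • (1/2 : ℝ≥0) • θ := by
    simp only [← Finset.sum_smul, ← Finset.mul_sum]
    rw [← e, Finset.smul_sum]
    refine Finset.sum_congr rfl fun y _ => ?_
    rw [mul_comm, mul_smul]
  have e2 : ∑ y ∈ θ.support, ∑ y' ∈ θ.support, (θ y * θ y') • (Finsupp.single y' (1/2) : ℤ →₀ ℝ≥0)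
      = (∑ y ∈ θ.support, θ y) • (1/2 : ℝ≥0) • θ := by
    simp only [mul_smul, ← Finset.smul_sum]
    rw [e, Finset.sum_smul]
  rw [e1, e2, ← smul_add, ← add_smul]
  have : (1/2 : ℝ≥0) + 1/2 = 1 := by norm_num
  rw [this, one_smul]

/-- The `θ × θ`-mass of the pairs of points at distance at least `2 ^ j`. -/
def farT (j : ℕ) (θ : ℤ →₀ ℝ≥0) : ℝ :=
  ∑ y ∈ θ.support, ∑ y' ∈ θ.support, if 2 ^ j ≤ |y - y'| then (θ y : ℝ) * θ y' else 0

theorem farT_nonneg (j : ℕ) (θ : ℤ →₀ ℝ≥0) : 0 ≤ farT j θ :=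
  Finset.sum_nonneg fun _ _ => Finset.sum_nonneg fun _ _ => by split_ifs <;> positivity

theorem farT_le (j : ℕ) (θ : ℤ →₀ ℝ≥0) : farT j θ ≤ mass θ * mass θ := by
  rw [mass_eq (Finset.Subset.refl _), Finset.sum_mul_sum]
  unfold farT
  gcongr with y _ y' _
  split_ifs
  · exact le_rfl
  · positivity

theorem cell_abs {y y' I : ℤ} {i : ℕ} (h : y / 2 ^ i = I) (h' : y' / 2 ^ i = I) :
    |y - y'| < 2 ^ i := by
  have hp : (0 : ℤ) < 2 ^ i := by positivity
  have a1 := Int.emod_nonneg y hp.ne'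
  have a2 := Int.emod_lt_of_pos y hp
  have b1 := Int.emod_nonneg y' hp.ne'
  have b2 := Int.emod_lt_of_pos y' hp
  have a3 := Int.mul_ediv_add_emod y (2 ^ i)
  have b3 := Int.mul_ediv_add_emod y' (2 ^ i)
  rw [h] at a3; rw [h'] at b3
  rw [abs_lt]; constructor <;> linarith

/-- For `θ` carried by one cell of side `2 ^ (j + M)`: averaging `growth_far` over the pairs of
points of `θ`, the growth under `θ` is bounded below by the mass of far pairs. -/
theorem cell_growth (f θ : ℤ →₀ ℝ≥0) (hf : mass f = 1) (j m M : ℕ) (I : ℤ)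
    (hθ : ∀ y ∈ θ.support, y / 2 ^ (j + M) = I) :
    (Ent (conv f (uu (j + m))) - Ent (conv f (uu j)) - (M + 1) * Real.log 2) * farT j θ ≤
      4 ^ m * (mass θ * Gr (conv f (uu j)) θ) := by
  have e1 : mass θ * Gr (conv f (uu j)) θ =
      Gr (conv f (uu j)) ((∑ y ∈ θ.support, θ y) • θ) := by
    rw [Gr_smul, mass_eq (Finset.Subset.refl _)]; push_cast; rfl
  rw [e1, ← smul_half]
  set σ := conv f (uu j)
  have e2 : ∑ y ∈ θ.support, ∑ y' ∈ θ.support, (θ y : ℝ) * θ y' * Gr σ (half y y') ≤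
      Gr σ (∑ y ∈ θ.support, ∑ y' ∈ θ.support, (θ y * θ y') • half y y') := by
    refine le_trans (Finset.sum_le_sum fun y _ => ?_) (Gr_superadd _ _ _)
    refine le_trans (Finset.sum_le_sum fun y' _ => ?_) (Gr_superadd _ _ _)
    rw [Gr_smul]; push_cast; rfl
  refine le_trans ?_ (mul_le_mul_of_nonneg_left e2 (by positivity))
  unfold farT
  simp only [Finset.mul_sum]
  refine Finset.sum_le_sum fun y hy => Finset.sum_le_sum fun y' hy' => ?_
  have hpos : 0 ≤ (θ y : ℝ) * θ y' := by positivity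
  split_ifs with hfar
  · have := growth_far f hf j m M _ hfar (cell_abs (hθ y hy) (hθ y' hy')).le
    rw [Gr_half]
    nlinarith
  · rw [mul_zero]
    have := Gr_nonneg σ (half y y')
    positivity

theorem eq_zero_of_mass {S : Type*} {f : S →₀ ℝ≥0} (h : mass f = 0) : f = 0 := by
  ext s
  have := mass_le_of_support (f := f) (s := s)
  rw [h] at this
  simpa using le_antisymm this (f s).2

/-- For `θ` carried by one cell of side `2 ^ (j + M)`: the entropy of `θ` at scale `2 ^ j` is
small when few pairs of points of `θ` are far apart. -/
theorem cell_entropy (θ : ℤ →₀ ℝ≥0) (j M : ℕ) (I : ℤ)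
    (hθ : ∀ y ∈ θ.support, y / 2 ^ (j + M) = I) :
    mass θ * Ent (θ.mapDomain (· / 2 ^ j)) ≤
      mass θ * mass θ * Real.log 6 + M * Real.log 2 * farT j θ := by
  rcases θ.support.eq_empty_or_nonempty with h0 | hne
  · rw [Finsupp.support_eq_empty] at h0; subst h0
    simp [mass_zero, farT]
  set far : ℤ → ℝ := fun y => ∑ y' ∈ θ.support, if 2 ^ j ≤ |y - y'| then (θ y' : ℝ) else 0 with hfar
  obtain ⟨y0, hy0, hmin⟩ := Finset.exists_min_image θ.support far hne
  have hT : mass θ * far y0 ≤ farT j θ := by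
    rw [mass_eq (Finset.Subset.refl _), Finset.sum_mul]
    unfold farT
    refine Finset.sum_le_sum fun y hy => ?_
    refine (mul_le_mul_of_nonneg_left (hmin y hy) (θ y).2).trans_eq ?_
    simp only [hfar, Finset.mul_sum]
    exact Finset.sum_congr rfl fun y' _ => by split_ifs <;> simp
  have hp : (0 : ℤ) < 2 ^ j := by positivity
  have hb := fiber_bound' (fun y => decide (2 ^ j ≤ |y0 - y|)) (fun y : ℤ => y / 2 ^ j) θ
    (fun b => if b then M * Real.log 2 else Real.log 3) (by
      intro b
      cases b with
      | false =>
        refine ⟨Finset.Icc (y0 / 2 ^ j - 1) (y0 / 2 ^ j + 1), ?_, ?_⟩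
        · intro s _ hs
          have hs : |y0 - s| < 2 ^ j := by simpa using hs
          rw [abs_lt] at hs
          rw [Finset.mem_Icc]
          constructor
          · rw [Int.le_ediv_iff_mul_le hp]
            have := Int.ediv_mul_le y0 hp.ne'
            nlinarith
          · rw [← Int.lt_add_one_iff, Int.ediv_lt_iff_lt_mul hp]
            have := Int.lt_ediv_add_one_mul_self y0 hp
            nlinarith
        · intro _
          rw [Int.card_Icc]
          have : y0 / 2 ^ j + 1 + 1 - (y0 / 2 ^ j - 1) = 3 := by ring
          rw [this]; simp
      | true =>
        refine ⟨Finset.Ico (I * 2 ^ M) ((I + 1) * 2 ^ M), ?_, ?_⟩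
        · intro s hs _
          have h := hθ s hs
          have hM : (0 : ℤ) < 2 ^ M := by positivity
          rw [pow_add, ← Int.ediv_ediv_of_nonneg hp.le] at h
          rw [Finset.mem_Ico]
          constructor
          · rw [← h]; exact Int.ediv_mul_le _ hM.ne'
          · rw [← h]; exact Int.lt_ediv_add_one_mul_self _ hM
        · intro _
          rw [Int.card_Ico]
          have : (I + 1) * 2 ^ M - I * 2 ^ M = ((2 ^ M : ℕ) : ℤ) := by push_cast; ring
          rw [this, Int.toNat_natCast]; simp)
  have h1 : Ent (θ.mapDomain fun y => decide (2 ^ j ≤ |y0 - y|)) ≤ mass θ * Real.log 2 := by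
    have := Ent_le_card (f := θ.mapDomain fun y => decide (2 ^ j ≤ |y0 - y|))
      (A := Finset.univ) (Finset.subset_univ _)
    rw [mass_mapDomain] at this
    simpa using this
  have h2 : ex θ (fun s => (fun b => if b = true then M * Real.log 2 else Real.log 3)
      (decide (2 ^ j ≤ |y0 - s|))) ≤ mass θ * Real.log 3 + M * Real.log 2 * far y0 := by
    rw [ex_eq (Finset.Subset.refl _), mass_eq (Finset.Subset.refl _), hfar, Finset.mul_sum,
      Finset.sum_mul, ← Finset.sum_add_distrib]
    refine Finset.sum_le_sum fun y _ => ?_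
    have l3 : 0 ≤ Real.log 3 := Real.log_nonneg (by norm_num)
    by_cases hy : 2 ^ j ≤ |y0 - y|
    · simp only [hy, decide_true, if_true]
      have : 0 ≤ (θ y : ℝ) * Real.log 3 := by positivity
      linarith
    · simp [hy]
  have h6 : Real.log 6 = Real.log 2 + Real.log 3 := by
    rw [← Real.log_mul (by norm_num) (by norm_num)]; norm_num
  have l2 : 0 ≤ Real.log 2 := Real.log_nonneg (by norm_num)
  have h3 : Ent (θ.mapDomain (· / 2 ^ j)) ≤ mass θ * Real.log 6 + M * Real.log 2 * far y0 := by
    rw [h6]; linarith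
  have h4 := mul_le_mul_of_nonneg_left h3 (mass_nonneg θ)
  have h5 : M * Real.log 2 * (mass θ * far y0) ≤ M * Real.log 2 * farT j θ :=
    mul_le_mul_of_nonneg_left hT (by positivity)
  linarith

/-- A measure carried by a cell of side `2 ^ i` adds little entropy to one smoothed at the much
larger scale `2 ^ (i + L)`. -/
theorem suppIn_Gr_uu (f θ : ℤ →₀ ℝ≥0) (hf : mass f = 1) (i L : ℕ) (I : ℤ)
    (hθ : ∀ y ∈ θ.support, y / 2 ^ i = I) :
    Gr (conv f (uu (i + L))) θ ≤ mass θ * (1 / 2) ^ L := by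
  rw [conv_comm]
  refine (Gr_mono _ _ _ hf).trans ?_
  have hp : (0 : ℤ) < 2 ^ i := by positivity
  rw [← Gr_shift _ _ (-(I * 2 ^ i))]
  have hs : SuppIn (shift (-(I * 2 ^ i)) θ) (2 ^ i) := by
    intro x hx
    rw [Finsupp.mem_support_iff, shift_apply] at hx
    have h := hθ _ (Finsupp.mem_support_iff.2 hx)
    have h1 := Int.ediv_mul_le (x - -(I * 2 ^ i)) hp.ne'
    have h2 := Int.lt_ediv_add_one_mul_self (x - -(I * 2 ^ i)) hp
    rw [h] at h1 h2
    constructor <;> linarith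
  have h1 := Ent_le_of_suppIn (suppIn_conv hs (uu_spec (i + L)).1)
  unfold Gr
  rw [Ent_uu]
  rw [mass_conv, mass_shift, mass_uu, mul_one, log_toNat (by positivity)] at h1
  rw [mass_shift]
  have h2 : Real.log (((2 : ℤ) ^ i + 2 ^ (i + L) : ℤ) : ℝ) ≤
      ((i + L : ℕ) : ℝ) * Real.log 2 + (1 / 2) ^ L := by
    have : (((2 : ℤ) ^ i + 2 ^ (i + L) : ℤ) : ℝ) = 2 ^ (i + L) * (1 + (1 / 2) ^ L) := by
      have q : (2 : ℝ) ^ L * (1 / 2) ^ L = 1 := by rw [← mul_pow]; norm_num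
      push_cast; rw [pow_add]; linear_combination (-(2 : ℝ) ^ i) * q
    rw [this, Real.log_mul (by positivity) (by positivity), Real.log_pow]
    have := Real.log_le_sub_one_of_pos (x := 1 + (1 / 2 : ℝ) ^ L) (by positivity)
    linarith
  have := mul_le_mul_of_nonneg_left h2 (mass_nonneg θ)
  linarith

/-- The estimates of one block of scales, summed over the cells of side `2 ^ (j + M)`: `P` is the
total normalized mass of far pairs in the cells. It controls the entropy of `θ` between the scales
`2 ^ j` and `2 ^ (j + M)`, and is itself controlled by the loss of growth between the smoothings at
scales `2 ^ j` and `2 ^ (j + M + L)`, a loss that telescopes when summed over `j`. -/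
theorem block (f θ : ℤ →₀ ℝ≥0) (hf : mass f = 1) (j m M L : ℕ) :
    ∃ P : ℝ, 0 ≤ P ∧ P ≤ mass θ ∧
      (Ent (conv f (uu (j + m))) - Ent (conv f (uu j)) - (M + 1) * Real.log 2) * P ≤
        4 ^ m * (Gr (conv f (uu j)) θ - Gr (conv f (uu (j + M + L))) θ + mass θ * (1 / 2) ^ L) ∧
      Ent (θ.mapDomain (· / 2 ^ j)) - Ent (θ.mapDomain (· / 2 ^ (j + M))) ≤
        mass θ * Real.log 6 + M * Real.log 2 * P := by
  set K : Finset ℤ := θ.support.image (· / 2 ^ (j + M)) with hKd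
  have hK : ∀ s ∈ θ.support, s / 2 ^ (j + M) ∈ K := fun s hs => Finset.mem_image_of_mem _ hs
  set c : ℤ → ℤ →₀ ℝ≥0 := fun I => fib (fun s : ℤ => s / 2 ^ (j + M)) I θ with hc
  have hsum : ∑ I ∈ K, c I = θ := sum_filter_eq _ θ hK
  have hmass : ∑ I ∈ K, mass (c I) = mass θ := by rw [← mass_sum, hsum]
  have hcell : ∀ I, ∀ y ∈ (c I).support, y / 2 ^ (j + M) = I := by
    intro I y hy
    exact (mem_fib hy).2
  refine ⟨∑ I ∈ K, farT j (c I) / mass (c I), ?_, ?_, ?_, ?_⟩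
  · exact Finset.sum_nonneg fun I _ => div_nonneg (farT_nonneg _ _) (mass_nonneg _)
  · rw [← hmass]
    refine Finset.sum_le_sum fun I _ => ?_
    exact div_le_of_le_mul₀ (mass_nonneg _) (mass_nonneg _) (farT_le _ _)
  · set A := Ent (conv f (uu (j + m))) - Ent (conv f (uu j)) - (M + 1) * Real.log 2
    have h1 : A * ∑ I ∈ K, farT j (c I) / mass (c I) ≤
        4 ^ m * ∑ I ∈ K, Gr (conv f (uu j)) (c I) := by
      rw [Finset.mul_sum, Finset.mul_sum]
      refine Finset.sum_le_sum fun I _ => ?_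
      rcases (mass_nonneg (c I)).eq_or_lt with h0 | hpos
      · rw [← h0, div_zero, mul_zero]
        have := Gr_nonneg (conv f (uu j)) (c I)
        positivity
      · have := cell_growth f (c I) hf j m M I (hcell I)
        rw [← mul_div_assoc, div_le_iff₀ hpos]
        linarith
    refine h1.trans (mul_le_mul_of_nonneg_left ?_ (by positivity))
    have e : j + M + L = j + (M + L) := by ring
    have h2 := Gr_gap K (conv f (uu j)) (AP (M + L) (2 ^ j)) c (mass_AP _ _)
    rw [hsum, conv_assoc, ← uu_add, ← e] at h2
    have h3 : ∑ I ∈ K, Gr (conv f (uu (j + M + L))) (c I) ≤ mass θ * (1 / 2) ^ L := by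
      rw [← hmass, Finset.sum_mul]
      exact Finset.sum_le_sum fun I _ => suppIn_Gr_uu f (c I) hf _ L I (hcell I)
    linarith
  · have h1 : Ent (θ.mapDomain (· / 2 ^ j)) ≤
        Ent (θ.mapDomain fun s => (s / 2 ^ (j + M), s / 2 ^ j)) :=
      Ent_comp_le (fun s : ℤ => (s / 2 ^ (j + M), s / 2 ^ j)) Prod.snd θ
    rw [chain_pair (fun s : ℤ => s / 2 ^ (j + M)) (fun s : ℤ => s / 2 ^ j) θ hK] at h1
    have h1 : Ent (θ.mapDomain (· / 2 ^ j)) ≤ Ent (θ.mapDomain (· / 2 ^ (j + M))) +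
      ∑ I ∈ K, Ent ((c I).mapDomain (· / 2 ^ j)) := h1
    have h2 : ∑ I ∈ K, Ent ((c I).mapDomain (· / 2 ^ j)) ≤
        mass θ * Real.log 6 + M * Real.log 2 * ∑ I ∈ K, farT j (c I) / mass (c I) := by
      rw [← hmass, Finset.sum_mul, Finset.mul_sum, ← Finset.sum_add_distrib]
      refine Finset.sum_le_sum fun I _ => ?_
      rcases (mass_nonneg (c I)).eq_or_lt with h0 | hpos
      · rw [← h0, eq_zero_of_mass h0.symm]; simp [Finsupp.mapDomain_zero, Ent_zero]
      · have := cell_entropy (c I) j M I (hcell I)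
        have h3 : mass (c I) * Real.log 6 + M * Real.log 2 * (farT j (c I) / mass (c I)) =
          (mass (c I) * mass (c I) * Real.log 6 + M * Real.log 2 * farT j (c I)) / mass (c I) := by
          field_simp
        rw [h3, le_div_iff₀ hpos]; linarith
    linarith

end EntDim

/-! ### The inverse theorem -/

namespace EntDim

open scoped NNReal
open Real (negMulLog)

theorem telescope_shift (x : ℕ → ℝ) (k Q : ℕ) :
    ∑ c ∈ Finset.range Q, (x (c + k) - x c) = ∑ i ∈ Finset.range k, (x (Q + i) - x i) := by
  induction Q with
  | zero => simp
  | succ Q ih =>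
    rw [Finset.sum_range_succ, ih]
    have h : x (Q + k) - x Q = ∑ i ∈ Finset.range k, (x (Q + (i + 1)) - x (Q + i)) := by
      rw [Finset.sum_range_sub (fun i => x (Q + i))]; simp
    rw [h, ← Finset.sum_add_distrib]
    refine Finset.sum_congr rfl fun i _ => ?_
    rw [show Q + 1 + i = Q + (i + 1) by ring]; ring

theorem Ent_div_interval (θ : ℤ →₀ ℝ≥0) (lo : ℤ) (D : ℕ) (q : ℕ)
    (h : ∀ y ∈ θ.support, lo ≤ y ∧ y ≤ lo + D * 2 ^ q) :
    Ent (θ.mapDomain (· / 2 ^ q)) ≤ mass θ * Real.log (D + 2) := by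
  have hp : (0 : ℤ) < 2 ^ q := by positivity
  have hs : (θ.mapDomain (· / 2 ^ q)).support ⊆ Finset.Icc (lo / 2 ^ q) (lo / 2 ^ q + (D + 1)) := by
    refine support_mapDomain_sub _ _ fun y hy => ?_
    obtain ⟨h1, h2⟩ := h y hy
    rw [Finset.mem_Icc]
    refine ⟨Int.ediv_le_ediv hp h1, ?_⟩
    rw [← Int.lt_add_one_iff, Int.ediv_lt_iff_lt_mul hp]
    have := Int.lt_ediv_add_one_mul_self lo hp
    nlinarith
  have := Ent_le_card hs
  rw [mass_mapDomain, Int.card_Icc] at this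
  have e : (lo / 2 ^ q + ((D : ℤ) + 1) + 1 - lo / 2 ^ q) = ((D + 2 : ℕ) : ℤ) := by push_cast; ring
  rw [e, Int.toNat_natCast] at this
  push_cast at this; exact this

/-- Inverse theorem for entropy growth: let `f` have entropy rate `E < log 2` up to the scale
`2 ^ n0`, spread evenly over the scales in the sense that between `2 ^ j` and `2 ^ (j + m)` it has
entropy at least `e m - C1`. Then a measure `θ` on an interval of length comparable to `2 ^ n0` has
entropy at most `ε * n0` per unit of mass, up to constants, unless `f` grows under `θ`. -/
theorem inverse_thm (E : ℝ) (hE0 : 0 ≤ E) (hE : E < Real.log 2) (e : ℕ → ℝ)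
    (he : ∀ η : ℝ, 0 < η → ∃ K : ℝ, ∀ m : ℕ, (E - η) * m - K ≤ e m) (C1 : ℝ) (C2 : ℕ)
    (ε : ℝ) (hε : 0 < ε) :
    ∃ C : ℝ, 0 ≤ C ∧ ∀ (n0 : ℕ) (f : ℤ →₀ ℝ≥0), mass f = 1 →
      (∀ j m : ℕ, j + m ≤ n0 →
        Ent (conv f (uu (j + m))) - Ent (conv f (uu j)) ≤ m * Real.log 2 - e m + C1) →
      Ent f ≤ E * n0 + C1 →
      ∀ (θ : ℤ →₀ ℝ≥0) (lo : ℤ), (∀ y ∈ θ.support, lo ≤ y ∧ y ≤ lo + C2 * 2 ^ n0) →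
        Ent θ ≤ (ε * n0 + C) * mass θ + C * Gr f θ := by
  set l2 := Real.log 2 with hl2
  have l2pos : 0 < l2 := Real.log_pos (by norm_num)
  set g := l2 - E with hg
  have gpos : 0 < g := by linarith
  have l6 : 0 ≤ Real.log 6 := Real.log_nonneg (by norm_num)
  -- `M` is the length of a block of scales: the error `log 6` per block is negligible against
  -- `ε * M`. The number `m` of scales seen by `growth_far` is a large multiple of `M`, chosen so that
  -- `m * g` dominates the error `(M + 1) * log 2`.
  obtain ⟨M, hM⟩ : ∃ M : ℕ, Real.log 6 / (ε / 4) < M := exists_nat_gt _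
  have hMpos : (0 : ℝ) < M := lt_of_le_of_lt (by positivity) hM
  have hM0 : 0 < M := by exact_mod_cast hMpos
  have hM6 : Real.log 6 ≤ ε / 4 * M := by
    rw [div_lt_iff₀ (by positivity)] at hM; linarith
  set η := ε * g / (16 * l2) with hη
  have ηpos : 0 < η := by positivity
  obtain ⟨K, hK⟩ := he η ηpos
  obtain ⟨m', hm'⟩ : ∃ m' : ℕ, max ((K + C1) / η) (2 * (M + 1) * l2 / g) < m' := exists_nat_gt _
  obtain ⟨hm1, hm2⟩ := max_lt_iff.1 hm'
  have hm'pos : (0 : ℝ) < m' := lt_of_le_of_lt (by positivity) hm2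
  set m := M * m' with hm
  have hmm' : (m' : ℝ) ≤ m := by
    rw [hm]; push_cast
    have : (1 : ℝ) ≤ M := by exact_mod_cast hM0
    nlinarith
  have hmpos : (0 : ℝ) < m := by linarith
  have hA1 : K + C1 ≤ η * m := by
    have : (K + C1) / η < m := lt_of_lt_of_le hm1 hmm'
    rw [div_lt_iff₀ ηpos] at this; linarith
  have hB : (M + 1) * l2 ≤ g * m / 2 := by
    have : 2 * (M + 1) * l2 / g < m := lt_of_lt_of_le hm2 hmm'
    rw [div_lt_iff₀ gpos] at this; linarith
  set R := 2 * 4 ^ m / (g * m) with hR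
  have Rpos : 0 < R := by positivity
  obtain ⟨L', hL'⟩ : ∃ L' : ℕ, (1 / 2 : ℝ) ^ L' < ε / 4 / (l2 * R) :=
    exists_pow_lt_of_lt_one (by positivity) (by norm_num)
  set δ : ℝ := (1 / 2) ^ (M * L') with hδ
  have hδ0 : 0 ≤ δ := by positivity
  have hδ' : l2 * R * δ ≤ ε / 4 := by
    have h1 : δ ≤ (1 / 2 : ℝ) ^ L' :=
      pow_le_pow_of_le_one (by norm_num) (by norm_num) (Nat.le_mul_of_pos_left _ hM0)
    have h2 : δ ≤ ε / 4 / (l2 * R) := h1.trans hL'.le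
    rw [le_div_iff₀ (by positivity)] at h2; linarith
  set c1 := E * m * (m' + 1) + m' * |C1| with hc1
  have c1pos : 0 ≤ c1 := by positivity
  set c2 := M * l2 * (2 * c1 / (g * m)) with hc2
  set c3 := M * l2 * R * (1 + L') with hc3
  have c2pos : 0 ≤ c2 := by positivity
  have c3pos : 0 ≤ c3 := by positivity
  set c4 := Real.log ((C2 * 2 ^ M : ℕ) + 2) with hc4
  have c4pos : 0 ≤ c4 := Real.log_nonneg (by
    have : (0 : ℝ) ≤ (C2 * 2 ^ M : ℕ) := by positivity
    linarith)
  refine ⟨c2 + c3 + M * l2 * m' + c4, by positivity, ?_⟩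
  intro n0 f hf ha hb θ lo hθ
  set μ := mass θ with hμ
  have μ0 : 0 ≤ μ := mass_nonneg θ
  set Q := n0 / M with hQ
  set Q0 := Q - m' with hQ0
  have hQn : M * Q ≤ n0 := Nat.mul_div_le n0 M
  have hQn' : n0 < M * (Q + 1) := Nat.lt_mul_div_succ n0 hM0
  choose P hP0 hP1 hP2 hP3 using fun c : ℕ => block f θ hf (M * c) m M (M * L')
  set V : ℕ → ℝ := fun c => Ent (conv f (uu (M * c))) with hV
  set G : ℕ → ℝ := fun c => Gr (conv f (uu (M * c))) θ with hG
  have hG0 : G 0 = Gr f θ := by simp only [hG, mul_zero, uu_zero, conv_one]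
  have hGn : ∀ c, 0 ≤ G c := fun c => Gr_nonneg _ _
  have hGle : ∀ c, G c ≤ G 0 := fun c => by
    rw [hG0]; exact Gr_mono _ _ _ (mass_uu _)
  have hVA : ∀ c, Ent (conv f (uu (M * c + m))) - Ent (conv f (uu (M * c))) = V (c + m') - V c := by
    intro c; simp only [hV, hm]; rw [← mul_add]
  have hGG : ∀ c, Gr (conv f (uu (M * c + M + M * L'))) θ = G (c + (1 + L')) := by
    intro c; simp only [hG]
    rw [show M * c + M + M * L' = M * (c + (1 + L')) by ring]
  set Ab := (g + 2 * η) * m with hAb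
  have hAle : ∀ c < Q0, V (c + m') - V c ≤ Ab := by
    intro c hc
    have hle : M * c + m ≤ n0 := by
      rw [hm, ← mul_add]; exact (Nat.mul_le_mul_left M (by omega)).trans hQn
    have h1 := ha (M * c) m hle
    rw [hVA] at h1
    have h2 := hK m
    have : Ab = m * l2 - (E - η) * m + η * m := by rw [hAb, hg]; ring
    rw [this]; linarith
  have hstep : ∀ c < Q0, g * m / 2 * P c ≤
      (Ab - (V (c + m') - V c)) * μ + 4 ^ m * ((G c - G (c + (1 + L'))) + μ * δ) := by
    intro c hc
    have h1 := hP2 c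
    rw [hVA, hGG] at h1
    have h2 := mul_le_mul_of_nonneg_left (hP1 c) (sub_nonneg.2 (hAle c hc))
    have h3 : g * m / 2 * P c ≤ (Ab - (M + 1) * l2) * P c := by
      apply mul_le_mul_of_nonneg_right _ (hP0 c)
      have : 0 ≤ 2 * η * m := by positivity
      rw [hAb]; linarith
    have h1' : (V (c + m') - V c - (M + 1) * l2) * P c ≤
      4 ^ m * ((G c - G (c + (1 + L'))) + μ * δ) := h1
    linarith
  -- `V` increases by at most `Ab` on each block and by nearly `Ab` on average, so the slack
  -- `Ab - (V (c + m') - V c)` in `hstep` is small when summed over `c`.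
  have hSA : (m : ℝ) * Q0 * g - c1 ≤ ∑ c ∈ Finset.range Q0, (V (c + m') - V c) := by
    rw [telescope_shift]
    have h1 : ∀ k ∈ Finset.range m', (M * Q0 * l2 - Ent f : ℝ) ≤ V (Q0 + k) - V k := by
      intro k _
      have a1 : Ent (uu (M * (Q0 + k))) ≤ V (Q0 + k) := Ent_conv_ge _ _ hf
      have a2 : V k ≤ Ent f + Ent (uu (M * k)) := Ent_conv_le _ _ hf (mass_uu _)
      rw [Ent_uu] at a1 a2
      push_cast at a1 a2
      rw [← hl2] at a1 a2
      linarith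
    have h2 := Finset.sum_le_sum h1
    rw [Finset.sum_const, Finset.card_range, nsmul_eq_mul] at h2
    refine le_trans ?_ h2
    have h3 : (n0 : ℝ) ≤ M * (Q0 + m' + 1) := by
      have : n0 ≤ M * (Q0 + m' + 1) := hQn'.le.trans (Nat.mul_le_mul_left M (by omega))
      exact_mod_cast this
    have h4 : Ent f ≤ E * (M * (Q0 + m' + 1)) + |C1| := by
      have := mul_le_mul_of_nonneg_left h3 hE0
      linarith [le_abs_self C1]
    have h5 := mul_le_mul_of_nonneg_left h4 hm'pos.le
    have hmr : (m : ℝ) = M * m' := by rw [hm]; push_cast; ring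
    rw [hc1, hg, hmr]; linarith
  have hSG : ∑ c ∈ Finset.range Q0, (G c - G (c + (1 + L'))) ≤ (1 + L') * G 0 := by
    have h1 := telescope_shift G (1 + L') Q0
    have h2 : ∑ i ∈ Finset.range (1 + L'), (G i - G (Q0 + i)) ≤ (1 + L') * G 0 := by
      have : ∀ i ∈ Finset.range (1 + L'), G i - G (Q0 + i) ≤ G 0 := fun i _ => by
        linarith [hGn (Q0 + i), hGle i]
      have := Finset.sum_le_sum this
      simpa using this
    have h3 : ∑ c ∈ Finset.range Q0, (G c - G (c + (1 + L'))) =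
        ∑ i ∈ Finset.range (1 + L'), (G i - G (Q0 + i)) := by
      simp only [Finset.sum_sub_distrib] at h1 ⊢; linarith
    linarith
  have hSP : g * m / 2 * ∑ c ∈ Finset.range Q0, P c ≤
      μ * (2 * η * m * Q0 + c1) + 4 ^ m * ((1 + L') * G 0 + Q0 * (μ * δ)) := by
    have h1 := Finset.sum_le_sum fun c hc => hstep c (Finset.mem_range.1 hc)
    rw [← Finset.mul_sum, Finset.sum_add_distrib, ← Finset.sum_mul, ← Finset.mul_sum,
      Finset.sum_add_distrib, Finset.sum_sub_distrib, Finset.sum_const, Finset.sum_const,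
      Finset.card_range, nsmul_eq_mul, nsmul_eq_mul] at h1
    refine h1.trans ?_
    have h2 : (Q0 * Ab - ∑ c ∈ Finset.range Q0, (V (c + m') - V c)) ≤ 2 * η * m * Q0 + c1 := by
      rw [hAb]; linarith
    have h3 := mul_le_mul_of_nonneg_right h2 μ0
    have h4 : (4 : ℝ) ^ m * (∑ c ∈ Finset.range Q0, (G c - G (c + (1 + L'))) + Q0 * (μ * δ)) ≤
        4 ^ m * ((1 + L') * G 0 + Q0 * (μ * δ)) := by gcongr
    linarith
  have hMQ0 : (M * Q0 : ℝ) ≤ n0 := by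
    have : M * Q0 ≤ n0 := (Nat.mul_le_mul_left M (Nat.sub_le _ _)).trans hQn
    exact_mod_cast this
  have hMP : M * l2 * ∑ c ∈ Finset.range Q0, P c ≤
      μ * (ε / 2 * n0 + c2) + c3 * G 0 := by
    have h1 : M * l2 * ∑ c ∈ Finset.range Q0, P c =
        M * l2 * (2 / (g * m)) * (g * m / 2 * ∑ c ∈ Finset.range Q0, P c) := by
      field_simp
    have h2 := mul_le_mul_of_nonneg_left hSP (show 0 ≤ M * l2 * (2 / (g * m)) by positivity)
    rw [h1]
    refine h2.trans ?_
    have h3 : M * l2 * (2 / (g * m)) * (μ * (2 * η * m * Q0 + c1) +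
        4 ^ m * ((1 + L') * G 0 + Q0 * (μ * δ))) =
        μ * (ε / 4 * (M * Q0) + c2) + c3 * G 0 + (l2 * R * δ) * (μ * (M * Q0)) := by
      rw [hc2, hc3, hR, hη]; field_simp; ring
    rw [h3]
    have h4 : ε / 4 * (M * Q0) ≤ ε / 4 * n0 := mul_le_mul_of_nonneg_left hMQ0 (by positivity)
    have h5 : (l2 * R * δ) * (μ * (M * Q0)) ≤ ε / 4 * (μ * n0) := by gcongr
    have h6 := mul_le_mul_of_nonneg_left h4 μ0
    linarith
  have htail : ∑ c ∈ Finset.range Q, P c ≤ ∑ c ∈ Finset.range Q0, P c + m' * μ := by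
    have hle : Q0 ≤ Q := Nat.sub_le _ _
    rw [← Finset.sum_range_add_sum_Ico _ hle]
    gcongr
    have := Finset.sum_le_sum (s := Finset.Ico Q0 Q) fun c _ => hP1 c
    rw [Finset.sum_const, Nat.card_Ico, nsmul_eq_mul] at this
    refine this.trans (mul_le_mul_of_nonneg_right ?_ μ0)
    exact_mod_cast (by omega : Q - Q0 ≤ m')
  have hent : Ent θ - Ent (θ.mapDomain (· / 2 ^ (M * Q))) ≤
      Q * (μ * Real.log 6) + M * l2 * ∑ c ∈ Finset.range Q, P c := by
    have h1 : ∑ c ∈ Finset.range Q, (Ent (θ.mapDomain (· / 2 ^ (M * c))) -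
        Ent (θ.mapDomain (· / 2 ^ (M * (c + 1))))) =
        Ent θ - Ent (θ.mapDomain (· / 2 ^ (M * Q))) := by
      rw [Finset.sum_range_sub' (fun c => Ent (θ.mapDomain (· / 2 ^ (M * c))))]
      congr 2
      have : (fun x : ℤ => x / 2 ^ (M * 0)) = id := by funext x; simp
      rw [this, Finsupp.mapDomain_id]
    rw [← h1, Finset.mul_sum]
    have h2 := Finset.sum_le_sum (s := Finset.range Q) fun c _ => hP3 c
    rw [Finset.sum_add_distrib, Finset.sum_const, Finset.card_range, nsmul_eq_mul] at h2
    exact h2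
  have hQ6 : Q * (μ * Real.log 6) ≤ ε / 4 * n0 * μ := by
    have h1 : (M * Q : ℝ) ≤ n0 := by exact_mod_cast hQn
    have h2 : (Q : ℝ) * Real.log 6 ≤ ε / 4 * n0 := by
      have a := mul_le_mul_of_nonneg_left hM6 (Nat.cast_nonneg (α := ℝ) Q)
      have b := mul_le_mul_of_nonneg_left h1 (show 0 ≤ ε / 4 by positivity)
      linarith
    have := mul_le_mul_of_nonneg_right h2 μ0
    linarith
  have hlast : Ent (θ.mapDomain (· / 2 ^ (M * Q))) ≤ μ * c4 := by
    refine Ent_div_interval θ lo (C2 * 2 ^ M) (M * Q) fun y hy => ⟨(hθ y hy).1, ?_⟩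
    refine (hθ y hy).2.trans ?_
    push_cast
    have : (2 : ℤ) ^ n0 ≤ 2 ^ M * 2 ^ (M * Q) := by
      rw [← pow_add]; refine pow_le_pow_right₀ (by norm_num) ?_
      have : M * (Q + 1) = M + M * Q := by ring
      omega
    rw [mul_assoc]
    gcongr
  have htail' := mul_le_mul_of_nonneg_left htail (show 0 ≤ M * l2 by positivity)
  have hfin : Ent θ ≤ μ * (ε / 2 * n0 + c2) + c3 * G 0 + M * l2 * (m' * μ) + ε / 4 * n0 * μ + μ * c4 := by
    linarith
  rw [← hG0]
  have p1 : 0 ≤ c3 * μ := by positivity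
  have p2 : 0 ≤ (c2 + M * l2 * m' + c4) * G 0 := mul_nonneg (by positivity) (hGn 0)
  have p3 : 0 ≤ ε / 4 * n0 * μ := by positivity
  linarith

end EntDim

/-! ### Product measures and discretization -/

namespace EntDim

open scoped NNReal
open Real (negMulLog)

variable {S T U V : Type*}

theorem ex_add (f g : S →₀ ℝ≥0) (φ : S → ℝ) : ex (f + g) φ = ex f φ + ex g φ := by
  unfold ex; rw [Finsupp.sum_add_index'] <;> simp [add_mul]

theorem ex_zero (φ : S → ℝ) : ex (0 : S →₀ ℝ≥0) φ = 0 := by simp [ex]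

theorem ex_smul (c : ℝ≥0) (f : S →₀ ℝ≥0) (φ : S → ℝ) : ex (c • f) φ = c * ex f φ := by
  unfold ex; rw [Finsupp.sum_smul_index' (by simp)]
  simp [Finsupp.sum, Finset.mul_sum, mul_assoc]

theorem ex_single (s : S) (c : ℝ≥0) (φ : S → ℝ) : ex (Finsupp.single s c) φ = c * φ s := by
  unfold ex; rw [Finsupp.sum_single_index (by simp)]

theorem ex_sum {ι : Type*} (A : Finset ι) (f : ι → S →₀ ℝ≥0) (φ : S → ℝ) :
    ex (∑ a ∈ A, f a) φ = ∑ a ∈ A, ex (f a) φ := by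
  induction A using Finset.induction_on with
  | empty => simp [ex_zero]
  | insert a A ha ih => rw [Finset.sum_insert ha, Finset.sum_insert ha, ex_add, ih]

theorem ex_mapDomain (h : S → T) (f : S →₀ ℝ≥0) (φ : T → ℝ) :
    ex (f.mapDomain h) φ = ex f (φ ∘ h) := by
  unfold ex; rw [Finsupp.sum_mapDomain_index] <;> simp [add_mul]

theorem ex_add_fun (f : S →₀ ℝ≥0) (φ ψ : S → ℝ) :
    ex f (fun s => φ s + ψ s) = ex f φ + ex f ψ := by
  simp [ex, Finsupp.sum, mul_add, Finset.sum_add_distrib]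

theorem ex_const_mul (f : S →₀ ℝ≥0) (c : ℝ) (φ : S → ℝ) :
    ex f (fun s => c * φ s) = c * ex f φ := by
  simp [ex, Finsupp.sum, Finset.mul_sum, mul_left_comm]

/-- Product measure of two finitely supported measures. -/
def prodF (f : S →₀ ℝ≥0) (g : T →₀ ℝ≥0) : S × T →₀ ℝ≥0 :=
  f.sum fun a x => x • g.mapDomain (Prod.mk a)

theorem prodF_eq {f : S →₀ ℝ≥0} {g : T →₀ ℝ≥0} {A : Finset S} (h : f.support ⊆ A) :
    prodF f g = ∑ a ∈ A, f a • g.mapDomain (Prod.mk a) :=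
  Finsupp.sum_of_support_subset f h _ (by simp)

theorem mem_prodF {f : S →₀ ℝ≥0} {g : T →₀ ℝ≥0} {q : S × T} (hq : q ∈ (prodF f g).support) :
    q.1 ∈ f.support ∧ q.2 ∈ g.support := by
  rw [prodF_eq (Finset.Subset.refl _)] at hq
  obtain ⟨a, ha, hz⟩ := mem_support_sum hq
  have h2 := Finsupp.support_smul hz
  have h3 := Finsupp.mapDomain_support h2
  obtain ⟨b, hb, rfl⟩ := Finset.mem_image.1 h3
  exact ⟨ha, hb⟩

theorem map_prodF (h : S × T → U) (f : S →₀ ℝ≥0) (g : T →₀ ℝ≥0) :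
    (prodF f g).mapDomain h = ∑ a ∈ f.support, f a • g.mapDomain (fun t => h (a, t)) := by
  rw [prodF_eq (Finset.Subset.refl _), Finsupp.mapDomain_finsetSum]
  refine Finset.sum_congr rfl fun a _ => ?_
  rw [Finsupp.mapDomain_smul, ← Finsupp.mapDomain_comp]; rfl

theorem ex_prodF (f : S →₀ ℝ≥0) (g : T →₀ ℝ≥0) (φ : S × T → ℝ) :
    ex (prodF f g) φ = ex f (fun a => ex g fun t => φ (a, t)) := by
  rw [prodF_eq (Finset.Subset.refl _), ex_sum, ex_eq (Finset.Subset.refl f.support)]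
  refine Finset.sum_congr rfl fun a _ => ?_
  rw [ex_smul, ex_mapDomain]; rfl

theorem mass_eq_ex (f : S →₀ ℝ≥0) : mass f = ex f fun _ => 1 := by rw [ex_const, mul_one]

theorem mass_prodF (f : S →₀ ℝ≥0) (g : T →₀ ℝ≥0) : mass (prodF f g) = mass f * mass g := by
  rw [mass_eq_ex, ex_prodF, ← mass_eq_ex, ex_const]

theorem map_const (g : T →₀ ℝ≥0) (hg : mass g = 1) (a : U) :
    g.mapDomain (fun _ => a) = Finsupp.single a 1 := by
  have : ∀ g : T →₀ ℝ≥0, g.mapDomain (fun _ => a) = Finsupp.single a (g.sum fun _ c => c) := by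
    intro g
    unfold Finsupp.mapDomain
    simp [Finsupp.sum, Finsupp.single_finsetSum]
  rw [this]; congr 1
  unfold mass at hg
  rw [← NNReal.coe_inj]; simpa [Finsupp.sum] using hg

theorem map_fst_prodF (f : S →₀ ℝ≥0) (g : T →₀ ℝ≥0) (hg : mass g = 1) :
    (prodF f g).mapDomain Prod.fst = f := by
  rw [map_prodF]
  conv_rhs => rw [← Finsupp.sum_single f]
  refine Finset.sum_congr rfl fun a _ => ?_
  rw [show (fun t : T => (a, t).1) = fun _ => a from rfl, map_const g hg]; simp

theorem prodF_add_left (f f' : S →₀ ℝ≥0) (g : T →₀ ℝ≥0) :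
    prodF (f + f') g = prodF f g + prodF f' g := by
  unfold prodF; rw [Finsupp.sum_add_index'] <;> simp [add_smul]

theorem fib_prodF (κ : S → U) (k : U) (f : S →₀ ℝ≥0) (g : T →₀ ℝ≥0) :
    fib (fun q : S × T => κ q.1) k (prodF f g) = prodF (fib κ k f) g := by
  induction f using Finsupp.induction_linear with
  | zero =>
    have e1 : fib κ k (0 : S →₀ ℝ≥0) = 0 := Finsupp.filter_zero _
    have e2 : prodF (0 : S →₀ ℝ≥0) g = 0 := Finsupp.sum_zero_index
    rw [e1, e2]; exact Finsupp.filter_zero _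
  | add f f' h h' =>
    have e1 : fib κ k (f + f') = fib κ k f + fib κ k f' := by simp [fib, Finsupp.filter_add]
    rw [e1, prodF_add_left, prodF_add_left, ← h, ← h']; simp [fib, Finsupp.filter_add]
  | single a x =>
    have e0 : ∀ x : ℝ≥0, prodF (Finsupp.single a x) g = x • g.mapDomain (Prod.mk a) := fun x => by
      unfold prodF; rw [Finsupp.sum_single_index (by simp)]
    by_cases h : κ a = k
    · have e1 : fib κ k (Finsupp.single a x) = Finsupp.single a x := by
        unfold fib; exact Finsupp.filter_single_of_pos (fun s => κ s = k) h
      rw [e1]; unfold fib; rw [Finsupp.filter_eq_self_iff]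
      intro q hq
      have hq' := (mem_prodF (Finsupp.mem_support_iff.2 hq)).1
      have := Finsupp.support_single_subset hq'
      rw [Finset.mem_singleton] at this; simpa [this] using h
    · have e1 : fib κ k (Finsupp.single a x) = 0 := by
        unfold fib; exact Finsupp.filter_single_of_neg (fun s => κ s = k) h
      rw [e1]; unfold fib
      rw [show prodF (0 : S →₀ ℝ≥0) g = 0 by simp [prodF], Finsupp.filter_eq_zero_iff]
      intro q hq
      by_contra hne
      have hq' := (mem_prodF (Finsupp.mem_support_iff.2 hne)).1
      have := Finsupp.support_single_subset hq'
      rw [Finset.mem_singleton] at this; simp only [this] at hq; exact h hq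

theorem conv_eq_map (f g : ℤ →₀ ℝ≥0) : conv f g = (prodF f g).mapDomain (fun q => q.1 + q.2) := by
  rw [map_prodF]; rfl

theorem map_add_conv (X : S → ℤ) (Y : T → ℤ) (f : S →₀ ℝ≥0) (g : T →₀ ℝ≥0) :
    (prodF f g).mapDomain (fun q => X q.1 + Y q.2) = conv (f.mapDomain X) (g.mapDomain Y) := by
  rw [map_prodF]
  unfold conv
  rw [Finsupp.sum_mapDomain_index (by simp) (by simp [add_smul])]
  refine Finset.sum_congr rfl fun a _ => ?_
  simp only [shift]; rw [← Finsupp.mapDomain_comp]; rfl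

theorem Ent_prodF (f : S →₀ ℝ≥0) (g : T →₀ ℝ≥0) (hf : mass f = 1) (hg : mass g = 1) :
    Ent (prodF f g) = Ent f + Ent g := by
  have h := chain_pair (Prod.fst : S × T → S) (Prod.snd : S × T → T) (prodF f g)
    (K := f.support) (fun s hs => (mem_prodF hs).1)
  rw [map_fst_prodF f g hg] at h
  have e : (fun s : S × T => (s.1, s.2)) = id := rfl
  rw [e, Finsupp.mapDomain_id] at h
  rw [h]; congr 1
  have : ∀ a ∈ f.support, Ent (Finsupp.mapDomain Prod.snd (fib Prod.fst a (prodF f g)))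
      = f a * Ent g := by
    intro a ha
    have e2 : fib Prod.fst a (prodF f g) = prodF (fib id a f) g := fib_prodF id a f g
    have e3 : fib id a f = Finsupp.single a (f a) := by
      ext s; unfold fib
      by_cases hs : s = a
      · subst hs; simp
      · rw [Finsupp.filter_apply_neg _ _ (by simpa using hs), Finsupp.single_eq_of_ne hs]
    rw [e2, e3]; unfold prodF
    rw [Finsupp.sum_single_index (by simp), Finsupp.mapDomain_smul, ← Finsupp.mapDomain_comp]
    rw [Ent_smul]; congr 2
    exact Finsupp.mapDomain_id
  have h2 := Finset.sum_congr rfl this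
  rw [← Finset.sum_mul, ← mass_eq (Finset.Subset.refl _), hf, one_mul] at h2
  exact h2

/-- If `X` determines the integer `Y` up to `D`, then `Y` has at most `log (2D+1)` more entropy. -/
theorem Ent_coarse (X : S → T) (Y : S → ℤ) (f : S →₀ ℝ≥0) (D : ℕ)
    (h : ∀ s ∈ f.support, ∀ s' ∈ f.support, X s = X s' → |Y s - Y s'| ≤ D) :
    Ent (f.mapDomain Y) ≤ Ent (f.mapDomain X) + mass f * Real.log (2 * D + 1) := by
  have := fiber_bound' X Y f (fun _ => Real.log (2 * D + 1)) ?_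
  · have e : ((fun _ => Real.log (2 * D + 1)) ∘ X : S → ℝ) = fun _ => Real.log (2 * D + 1) := rfl
    rw [← ex_const f]; exact this
  · intro x
    by_cases hx : ∃ s ∈ f.support, X s = x
    · obtain ⟨s0, hs0, rfl⟩ := hx
      refine ⟨Finset.Icc (Y s0 - D) (Y s0 + D), fun s hs hX => ?_, fun _ => ?_⟩
      · have := abs_le.1 (h s hs s0 hs0 hX)
        rw [Finset.mem_Icc]; constructor <;> linarith [this.1, this.2]
      · rw [Int.card_Icc]
        have e : (Y s0 + D + 1 - (Y s0 - D)).toNat = 2 * D + 1 := by omega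
        rw [e]; push_cast; exact le_rfl
    · exact ⟨∅, fun s hs hX => (hx ⟨s, hs, hX⟩).elim, fun h => (hx h).elim⟩

/-- Smoothing at scale `2 ^ j` amounts to forgetting the last `j` binary digits and adding
`j * log 2` to the entropy, up to a bounded error; this is the upper bound. -/
theorem conv_uu_upper (f : ℤ →₀ ℝ≥0) (hf : mass f = 1) (j : ℕ) :
    Ent (conv f (uu j)) ≤ Ent (f.mapDomain (· / 2 ^ j)) + (j + 1) * Real.log 2 := by
  rw [conv_eq_map]
  have h := fiber_bound' (fun q : ℤ × ℤ => q.1 / 2 ^ j) (fun q => q.1 + q.2) (prodF f (uu j))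
    (fun _ => (j + 1) * Real.log 2) ?_
  · have e : (prodF f (uu j)).mapDomain (fun q : ℤ × ℤ => q.1 / 2 ^ j)
        = f.mapDomain (· / 2 ^ j) := by
      conv_rhs => rw [← map_fst_prodF f (uu j) (mass_uu j), ← Finsupp.mapDomain_comp]
      rfl
    rw [e] at h
    have e2 : ex (prodF f (uu j)) (fun _ => (j + 1) * Real.log 2)
        = (j + 1) * Real.log 2 := by
      have := ex_const (prodF f (uu j)) ((j + 1) * Real.log 2)
      rw [mass_prodF, hf, mass_uu] at this
      simpa [Function.comp_def] using this
    rw [e2] at h; exact h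
  · intro x
    refine ⟨Finset.Ico (x * 2 ^ j) (x * 2 ^ j + 2 ^ (j + 1)), fun q hq hx => ?_, fun _ => ?_⟩
    · have h2 := (uu_spec j).1 q.2 (mem_prodF hq).2
      have hp : (0 : ℤ) < 2 ^ j := by positivity
      have h3 := Int.mul_ediv_add_emod q.1 (2 ^ j)
      have h4 := Int.emod_nonneg q.1 hp.ne'
      have h5 := Int.emod_lt_of_pos q.1 hp
      rw [hx] at h3
      rw [Finset.mem_Ico, pow_succ]; constructor <;> linarith [h2.1, h2.2]
    · rw [Int.card_Ico]
      have : (x * 2 ^ j + 2 ^ (j + 1) - x * 2 ^ j : ℤ).toNat = 2 ^ (j + 1) := by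
        rw [add_sub_cancel_left]; exact Int.toNat_natCast (2 ^ (j+1)) ▸ by norm_cast
      rw [this]; push_cast; rw [Real.log_pow]; push_cast; exact le_rfl

/-- The lower bound matching `conv_uu_upper`. -/
theorem conv_uu_lower (f : ℤ →₀ ℝ≥0) (hf : mass f = 1) (j : ℕ) :
    Ent (f.mapDomain (· / 2 ^ j)) + (j : ℝ) * Real.log 2 ≤
      Ent (conv f (uu j)) + Real.log 3 := by
  set κ : ℤ → ℤ := fun s => s / 2 ^ j with hκ
  set F := prodF f (uu j) with hF
  have hmF : mass F = 1 := by rw [hF, mass_prodF, hf, mass_uu, one_mul]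
  have hc := chain_pair (fun q : ℤ × ℤ => κ q.1) (fun q => q.1 + q.2) F
    (K := f.support.image κ) (fun s hs => Finset.mem_image_of_mem _ (mem_prodF hs).1)
  have e : F.mapDomain (fun q : ℤ × ℤ => κ q.1) = f.mapDomain κ := by
    conv_rhs => rw [← map_fst_prodF f (uu j) (mass_uu j), ← Finsupp.mapDomain_comp]
    rfl
  rw [e] at hc
  have hsum : (j : ℝ) * Real.log 2 ≤ ∑ k ∈ f.support.image κ,
      Ent ((fib (fun q : ℤ × ℤ => κ q.1) k F).mapDomain (fun q => q.1 + q.2)) := by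
    have hm := mass_sum_filter κ f (K := f.support.image κ)
      (fun s hs => Finset.mem_image_of_mem _ hs)
    have : ∀ k, mass (fib κ k f) * (j * Real.log 2) ≤
        Ent ((fib (fun q : ℤ × ℤ => κ q.1) k F).mapDomain (fun q => q.1 + q.2)) := by
      intro k
      rw [hF, fib_prodF, ← conv_eq_map, ← Ent_uu]
      have := Gr_nonneg (uu j) (fib κ k f)
      unfold Gr at this; linarith
    have h2 := Finset.sum_le_sum fun k (_ : k ∈ f.support.image κ) => this k
    rw [← Finset.sum_mul] at h2
    have hm2 : ∑ k ∈ f.support.image κ, mass (fib κ k f) = 1 := by rw [← hf]; exact hm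
    rw [hm2, one_mul] at h2; exact h2
  have h3 : Ent (F.mapDomain fun q => (κ q.1, q.1 + q.2)) ≤
      Ent (F.mapDomain fun q : ℤ × ℤ => q.1 + q.2) + Real.log 3 := by
    have h4 : Ent (F.mapDomain fun q => (q.1 + q.2, κ q.1)) ≤
      Ent (F.mapDomain fun q : ℤ × ℤ => q.1 + q.2) +
        ex F ((fun _ => Real.log 3) ∘ fun q : ℤ × ℤ => q.1 + q.2) := by
      refine fiber_bound _ _ F (fun _ => Real.log 3) fun x => ?_
      refine ⟨Finset.Icc (x / 2 ^ j - 2) (x / 2 ^ j), fun q hq hx => ?_, fun _ => ?_⟩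
      · have h2 := (uu_spec j).1 q.2 (mem_prodF hq).2
        have hp : (0 : ℤ) < 2 ^ j := by positivity
        rw [Finset.mem_Icc, hκ]; dsimp only
        constructor
        · rw [← hx, Int.le_ediv_iff_mul_le hp]
          have := Int.ediv_mul_le (q.1 + q.2) hp.ne'
          nlinarith [h2.1, h2.2]
        · exact Int.ediv_le_ediv hp (by linarith [h2.1])
      · rw [Int.card_Icc]
        have : (x / 2 ^ j + 1 - (x / 2 ^ j - 2)).toNat = 3 := by omega
        rw [this]; norm_num
    have e5 : ex F ((fun _ => Real.log 3) ∘ fun q : ℤ × ℤ => q.1 + q.2) = Real.log 3 := by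
      have := ex_const F (Real.log 3)
      rw [hmF, one_mul] at this; exact this
    rw [e5] at h4
    refine le_trans (Ent_map_le_of_factor (fun q : ℤ × ℤ => (q.1 + q.2, κ q.1)) _ F ?_) h4
    intro s _ s' _ h
    simp only [Prod.mk.injEq] at h ⊢
    exact ⟨h.2, h.1⟩
  rw [conv_eq_map]
  have hc' : Ent (F.mapDomain fun q => (κ q.1, q.1 + q.2)) = Ent (f.mapDomain κ) +
    ∑ k ∈ f.support.image κ,
      Ent ((fib (fun q : ℤ × ℤ => κ q.1) k F).mapDomain (fun q => q.1 + q.2)) := hc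
  linarith

end EntDim

/-! ### Random words and laws of random variables -/

namespace EntDim

open scoped NNReal
open Real (negMulLog)

section Words
variable {Λ : Type*}

/-- The contraction ratio of the composition of maps along a word. -/
def rr (r : Λ → ℝ) (w : List Λ) : ℝ := (w.map r).prod

/-- The translation part of the composition of maps along a word. -/
def ss (r s : Λ → ℝ) : List Λ → ℝ
  | [] => 0
  | i :: w => r i * ss r s w + s i

theorem rr_append (r : Λ → ℝ) (w v : List Λ) : rr r (w ++ v) = rr r w * rr r v := by simp [rr]

theorem ss_append (r s : Λ → ℝ) (w v : List Λ) :
    ss r s (w ++ v) = rr r w * ss r s v + ss r s w := by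
  induction w with
  | nil => simp [ss, rr]
  | cons i w ih =>
    simp only [List.cons_append, ss, ih]
    simp only [rr, List.map_cons, List.prod_cons]; ring

/-- The law of the concatenation `w ++ v`, where `w` has law `π` and `v` has law `K w` given `w`. -/
def bind (π : List Λ →₀ ℝ≥0) (K : List Λ → List Λ →₀ ℝ≥0) : List Λ →₀ ℝ≥0 :=
  ∑ w ∈ π.support, π w • (K w).mapDomain (w ++ ·)

theorem ex_bind (π : List Λ →₀ ℝ≥0) (K : List Λ → List Λ →₀ ℝ≥0) (φ : List Λ → ℝ) :
    ex (bind π K) φ = ex π fun w => ex (K w) fun v => φ (w ++ v) := by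
  unfold bind
  rw [ex_sum, ex_eq (Finset.Subset.refl π.support)]
  refine Finset.sum_congr rfl fun w _ => ?_
  rw [ex_smul, ex_mapDomain]; rfl

theorem mem_bind {π : List Λ →₀ ℝ≥0} {K : List Λ → List Λ →₀ ℝ≥0} {u : List Λ}
    (hu : u ∈ (bind π K).support) :
    ∃ w ∈ π.support, ∃ v ∈ (K w).support, u = w ++ v := by
  obtain ⟨w, hw, hz⟩ := mem_support_sum hu
  have h3 := Finsupp.mapDomain_support (Finsupp.support_smul hz)
  obtain ⟨b, hb, rfl⟩ := Finset.mem_image.1 h3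
  exact ⟨w, hw, b, hb, rfl⟩

variable [Fintype Λ]

/-- The law of a one-letter random word. -/
def letter (p : Λ → ℝ≥0) : List Λ →₀ ℝ≥0 := ∑ i, Finsupp.single [i] (p i)

theorem ex_letter (p : Λ → ℝ≥0) (φ : List Λ → ℝ) : ex (letter p) φ = ∑ i, (p i : ℝ) * φ [i] := by
  unfold letter; rw [ex_sum]; simp [ex_single]

theorem mem_letter {p : Λ → ℝ≥0} {w : List Λ} (h : w ∈ (letter p).support) : ∃ i, w = [i] := by
  obtain ⟨i, _, hz⟩ := mem_support_sum h
  exact ⟨i, by simpa using Finsupp.support_single_subset hz⟩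

/-- The law of a random word of length `n` with independent letters. -/
def W (p : Λ → ℝ≥0) : ℕ → List Λ →₀ ℝ≥0
  | 0 => Finsupp.single [] 1
  | n + 1 => bind (letter p) fun _ => W p n

theorem length_of_mem_W {p : Λ → ℝ≥0} {n : ℕ} {w : List Λ} (h : w ∈ (W p n).support) :
    w.length = n := by
  induction n generalizing w with
  | zero =>
    have := Finsupp.support_single_subset h
    rw [Finset.mem_singleton] at this; simp [this]
  | succ n ih =>
    obtain ⟨w, hw, v, hv, rfl⟩ := mem_bind h
    obtain ⟨i, rfl⟩ := mem_letter hw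
    simp [ih hv]

theorem W_succ_eq (p : Λ → ℝ≥0) (n : ℕ) :
    W p (n + 1) = (prodF (letter p) (W p n)).mapDomain (fun q => q.1 ++ q.2) := by
  rw [map_prodF]; rfl

theorem mass_letter (p : Λ → ℝ≥0) (hp1 : ∑ i, p i = 1) : mass (letter p) = 1 := by
  rw [mass_eq_ex, ex_letter]; simp only [mul_one]; exact_mod_cast hp1

theorem mass_W (p : Λ → ℝ≥0) (hp1 : ∑ i, p i = 1) (n : ℕ) : mass (W p n) = 1 := by
  induction n with
  | zero => simp [W, mass_single]
  | succ n ih => rw [W_succ_eq, mass_mapDomain, mass_prodF, mass_letter p hp1, ih, one_mul]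

theorem Ent_letter (p : Λ → ℝ≥0) (hp1 : ∑ i, p i = 1) :
    Ent (letter p) = ∑ i, negMulLog (p i) := by
  have : letter p = (Finsupp.equivFunOnFinite.symm p).mapDomain (fun i : Λ => [i]) := by
    unfold letter Finsupp.mapDomain
    rw [Finsupp.sum_fintype _ _ (by simp)]; rfl
  have hinj : Function.Injective (fun i : Λ => [i]) := fun i j h => by simpa using h
  have hm := mass_letter p hp1
  rw [this] at hm ⊢
  rw [mass_mapDomain] at hm
  rw [Ent_mapDomain_inj hinj]; unfold Ent
  rw [hm, NEnt_eq (Finset.subset_univ _)]; simp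

theorem Ent_W (p : Λ → ℝ≥0) (hp1 : ∑ i, p i = 1) (n : ℕ) :
    Ent (W p n) = n * ∑ i, negMulLog (p i) := by
  induction n with
  | zero => simp [W, Ent_single]
  | succ n ih =>
    have h1 : Ent (W p (n + 1)) = Ent (prodF (letter p) (W p n)) := by
      rw [W_succ_eq]
      refine le_antisymm (Ent_map_le _ _) ?_
      have := Ent_map_le_of_factor (fun q : List Λ × List Λ => q.1 ++ q.2) id
        (prodF (letter p) (W p n)) ?_
      · rwa [Finsupp.mapDomain_id] at this
      · rintro ⟨a, b⟩ h ⟨a', b'⟩ h' he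
        obtain ⟨i, hi⟩ := mem_letter (mem_prodF h).1
        obtain ⟨i', hi'⟩ := mem_letter (mem_prodF h').1
        simp only at hi hi' he; subst hi hi'
        simpa using he
    rw [h1, Ent_prodF _ _ (mass_letter p hp1) (mass_W p hp1 n), ih, Ent_letter p hp1]
    push_cast; ring

/-- The sum of `l` over the letters of a word. -/
def Lg (l : Λ → ℝ) (w : List Λ) : ℝ := (w.map l).sum

theorem ex_W_succ (p : Λ → ℝ≥0) (n : ℕ) (φ : List Λ → ℝ) :
    ex (W p (n + 1)) φ = ∑ i, (p i : ℝ) * ex (W p n) fun w => φ (i :: w) := by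
  show ex (bind _ _) _ = _
  rw [ex_bind, ex_letter]; rfl

theorem ex_Lg (p : Λ → ℝ≥0) (hp1 : ∑ i, p i = 1) (l : Λ → ℝ) (n : ℕ) :
    ex (W p n) (Lg l) = n * ∑ i, (p i : ℝ) * l i := by
  induction n with
  | zero => simp [W, ex_single, Lg]
  | succ n ih =>
    rw [ex_W_succ]
    have : ∀ i, ex (W p n) (fun w => Lg l (i :: w)) = l i + n * ∑ i, (p i : ℝ) * l i := fun i => by
      have e : (fun w => Lg l (i :: w)) = fun w => l i + Lg l w := by funext w; simp [Lg]
      rw [e, ex_add_fun (W p n) (fun _ => l i) (Lg l), ih, ex_const, mass_W p hp1, one_mul]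
    simp only [this, mul_add, Finset.sum_add_distrib, ← Finset.sum_mul]
    have h1 : ∑ i, (p i : ℝ) = 1 := by exact_mod_cast hp1
    rw [h1]; push_cast; ring

theorem ex_Lg_sq (p : Λ → ℝ≥0) (hp1 : ∑ i, p i = 1) (l : Λ → ℝ)
    (hl : ∑ i, (p i : ℝ) * l i = 0) (n : ℕ) :
    ex (W p n) (fun w => Lg l w ^ 2) = n * ∑ i, (p i : ℝ) * l i ^ 2 := by
  induction n with
  | zero => simp [W, ex_single, Lg]
  | succ n ih =>
    rw [ex_W_succ]
    have : ∀ i, ex (W p n) (fun w => Lg l (i :: w) ^ 2) =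
        l i ^ 2 + n * ∑ i, (p i : ℝ) * l i ^ 2 := fun i => by
      have e : (fun w => Lg l (i :: w) ^ 2) =
          fun w => (l i ^ 2 + 2 * l i * Lg l w) + Lg l w ^ 2 := by
        funext w; simp [Lg]; ring
      rw [e, ex_add_fun (W p n) (fun w => l i ^ 2 + 2 * l i * Lg l w) (fun w => Lg l w ^ 2), ih,
        ex_add_fun (W p n) (fun w => l i ^ 2) (fun w => 2 * l i * Lg l w),
        ex_const, ex_const_mul, mass_W p hp1, ex_Lg p hp1, hl]; ring
    simp only [this, mul_add, Finset.sum_add_distrib, ← Finset.sum_mul]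
    have h1 : ∑ i, (p i : ℝ) = 1 := by exact_mod_cast hp1
    rw [h1]; push_cast; ring

end Words

section Law
variable {Ω T U : Type*} [MeasurableSpace Ω]

/-- The law of a random variable `X` taking values in the finite set `A`. -/
def law (μ : Measure Ω) (X : Ω → T) (A : Finset T) : T →₀ ℝ≥0 :=
  ∑ k ∈ A, Finsupp.single k (μ.real (X ⁻¹' {k})).toNNReal

theorem law_support {μ : Measure Ω} {X : Ω → T} {A : Finset T} :
    ∀ k ∈ (law μ X A).support, k ∈ A := fun k hk => by
  obtain ⟨i, hi, hz⟩ := mem_support_sum hk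
  have := Finsupp.support_single_subset hz
  rw [Finset.mem_singleton] at this; rwa [this]

theorem law_apply {μ : Measure Ω} {X : Ω → T} {A : Finset T} {k : T} (hk : k ∈ A) :
    (law μ X A k : ℝ) = μ.real (X ⁻¹' {k}) := by
  unfold law
  rw [Finsupp.finsetSum_apply, Finset.sum_eq_single k]
  · simp
  · intro b _ hb; rw [Finsupp.single_eq_of_ne hb.symm]
  · intro h; exact (h hk).elim

theorem mass_law_eq {μ : Measure Ω} {X : Ω → T} {A : Finset T} :
    mass (law μ X A) = ∑ k ∈ A, μ.real (X ⁻¹' {k}) := by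
  rw [mass_eq (A := A) fun k hk => law_support k hk]
  exact Finset.sum_congr rfl fun k hk => law_apply hk

theorem map_law {μ : Measure Ω} [IsFiniteMeasure μ] {X : Ω → T} {A : Finset T}
    (hX : ∀ k, MeasurableSet (X ⁻¹' {k})) (hA : μ (X ⁻¹' (A : Set T))ᶜ = 0) (h : T → U) (u : U) :
    ((law μ X A).mapDomain h u : ℝ) = μ.real ((fun ω => h (X ω)) ⁻¹' {u}) := by
  rw [coe_mapDomain_apply]
  have h1 : ((law μ X A).filter fun s => h s = u).support ⊆ A.filter fun s => h s = u := by
    intro k hk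
    rw [Finsupp.support_filter, Finset.mem_filter] at hk
    exact Finset.mem_filter.2 ⟨law_support k hk.1, hk.2⟩
  rw [mass_eq h1]
  have h2 : ∀ k ∈ A.filter (fun s => h s = u),
      (((law μ X A).filter fun s => h s = u) k : ℝ) = μ.real (X ⁻¹' {k}) := fun k hk => by
    rw [Finset.mem_filter] at hk
    rw [Finsupp.filter_apply_pos (fun s => h s = u) _ hk.2, law_apply hk.1]
  rw [Finset.sum_congr rfl h2, ← measureReal_biUnion_finset]
  · rw [measureReal_def, measureReal_def]; congr 1
    refine measure_congr ?_
    have hA' : ∀ᵐ ω ∂μ, X ω ∈ A := by rw [ae_iff]; exact hA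
    filter_upwards [hA'] with ω hω
    refine propext ?_
    show ω ∈ (⋃ b ∈ A.filter (fun s => h s = u), X ⁻¹' {b}) ↔ h (X ω) = u
    simp [hω]
  · intro i _ j _ hij
    refine Set.disjoint_left.2 fun x hx hy => hij ?_
    rw [← show X x = i from hx, ← show X x = j from hy]
  · exact fun k _ => hX k

theorem mass_law {μ : Measure Ω} [IsProbabilityMeasure μ] {X : Ω → T} {A : Finset T}
    (hX : ∀ k, MeasurableSet (X ⁻¹' {k})) (hA : μ (X ⁻¹' (A : Set T))ᶜ = 0) :
    mass (law μ X A) = 1 := by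
  have := map_law hX hA (fun _ => ()) ()
  rw [← mass_mapDomain (fun _ => ()), mass_eq (Finset.subset_univ _)]
  simp [this]

end Law

end EntDim

/-! ### Self-similar systems and cuts of the symbolic tree -/

namespace EntDim

open scoped NNReal
open Real (negMulLog)

/-- An affine IFS with positive weights, together with its self-similar measure. -/
structure Sys (Λ : Type*) [Fintype Λ] where
  r : Λ → ℝ
  s : Λ → ℝ
  p : Λ → ℝ≥0
  μ : Measure ℝ
  hr0 : ∀ i, 0 < |r i|
  hr1 : ∀ i, |r i| < 1
  hp : ∀ i, 0 < p i
  hp1 : ∑ i, p i = 1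
  prob : IsProbabilityMeasure μ
  self : ∀ B, MeasurableSet B →
    μ.real B = ∑ i, (p i : ℝ) * μ.real ((fun x => r i * x + s i) ⁻¹' B)

namespace Sys

variable {Λ : Type*} [Fintype Λ] (Q : Sys Λ)

instance : IsProbabilityMeasure Q.μ := Q.prob

theorem nonempty (Q : Sys Λ) : Nonempty Λ := by
  by_contra h
  rw [not_nonempty_iff] at h
  have := Q.hp1
  simp at this

theorem exists_rho : ∃ ρ : ℝ, 0 < ρ ∧ ρ < 1 ∧ ∀ i, |Q.r i| ≤ ρ := by
  have := Q.nonempty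
  obtain ⟨i, _, hi⟩ := Finset.exists_max_image Finset.univ (fun i => |Q.r i|) Finset.univ_nonempty
  exact ⟨|Q.r i|, Q.hr0 i, Q.hr1 i, fun j => hi j (Finset.mem_univ _)⟩

theorem exists_rmin : ∃ ρ : ℝ, 0 < ρ ∧ ρ ≤ 1 ∧ ∀ i, ρ ≤ |Q.r i| := by
  have := Q.nonempty
  obtain ⟨i, _, hi⟩ := Finset.exists_min_image Finset.univ (fun i => |Q.r i|) Finset.univ_nonempty
  exact ⟨|Q.r i|, Q.hr0 i, (Q.hr1 i).le, fun j => hi j (Finset.mem_univ _)⟩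

/-- The self-similar measure has bounded support. -/
theorem exists_R : ∃ R : ℕ, 1 ≤ R ∧ ∀ᵐ x : ℝ ∂Q.μ, |x| ≤ (R : ℝ) := by
  obtain ⟨ρ, h0, h1, hρ⟩ := Q.exists_rho
  set S : ℝ := ∑ i, |Q.s i| with hS
  have hSi : ∀ i, |Q.s i| ≤ S := fun i =>
    Finset.single_le_sum (f := fun i => |Q.s i|) (fun j _ => abs_nonneg _) (Finset.mem_univ i)
  have hS0 : 0 ≤ S := by positivity
  set R0 : ℝ := S / (1 - ρ) with hR0
  have hR : ρ * R0 + S = R0 := by rw [hR0]; field_simp [show (1 - ρ) ≠ 0 by linarith]; ring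
  have hR00 : 0 ≤ R0 := div_nonneg hS0 (by linarith)
  set A : ℕ → Set ℝ := fun n => {x | R0 + (1 / ρ) ^ n < |x|} with hA
  have hAm : ∀ n, MeasurableSet (A n) := fun n =>
    measurableSet_lt measurable_const continuous_abs.measurable
  have step : ∀ n, Q.μ.real (A n) ≤ Q.μ.real (A (n + 1)) := by
    intro n
    rw [Q.self _ (hAm n)]
    have : ∀ i, (Q.p i : ℝ) * Q.μ.real ((fun x => Q.r i * x + Q.s i) ⁻¹' A n) ≤
        Q.p i * Q.μ.real (A (n + 1)) := fun i => by
      refine mul_le_mul_of_nonneg_left (measureReal_mono ?_) (Q.p i).2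
      intro x hx
      simp only [hA, mem_preimage, mem_ofPred_eq] at hx ⊢
      have h2 : |Q.r i * x + Q.s i| ≤ ρ * |x| + S := by
        refine (abs_add_le _ _).trans (add_le_add ?_ (hSi i))
        rw [abs_mul]; exact mul_le_mul_of_nonneg_right (hρ i) (abs_nonneg _)
      have h3 : ρ * (1 / ρ) ^ (n + 1) = (1 / ρ) ^ n := by
        rw [pow_succ]; field_simp
      by_contra h4
      have h5 := mul_le_mul_of_nonneg_left (not_lt.1 h4) h0.le
      rw [mul_add, h3] at h5
      linarith
    refine (Finset.sum_le_sum fun i _ => this i).trans ?_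
    rw [← Finset.sum_mul]
    have h1 : ∑ i, (Q.p i : ℝ) = 1 := by exact_mod_cast Q.hp1
    rw [h1, one_mul]
  have mono : Monotone fun n => Q.μ.real (A n) := monotone_nat_of_le_succ step
  have hlim : Tendsto (fun n => Q.μ.real (A n)) atTop (nhds 0) := by
    have h1ρ : 1 < 1 / ρ := by rw [lt_div_iff₀ h0]; linarith
    have hanti : Antitone A := by
      intro m n hmn x hx
      simp only [hA, mem_ofPred_eq] at hx ⊢
      have := pow_le_pow_right₀ h1ρ.le hmn
      linarith
    have hempty : ⋂ n, A n = ∅ := by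
      ext x; simp only [mem_iInter, mem_empty_iff_false, iff_false, not_forall]
      obtain ⟨n, hn⟩ := pow_unbounded_of_one_lt |x| h1ρ
      exact ⟨n, by simp only [hA, mem_ofPred_eq, not_lt]; linarith⟩
    have := tendsto_measure_iInter_atTop (μ := Q.μ) (s := A)
      (fun n => (hAm n).nullMeasurableSet) hanti ⟨0, measure_ne_top _ _⟩
    rw [hempty, measure_empty] at this
    have h := (ENNReal.tendsto_toReal (by simp : (0 : ℝ≥0∞) ≠ ⊤)).comp this
    exact h
  have hz : Q.μ.real (A 0) = 0 :=
    le_antisymm (mono.ge_of_tendsto hlim 0) measureReal_nonneg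
  obtain ⟨R, hRn⟩ := exists_nat_ge (R0 + 1)
  refine ⟨R, by exact_mod_cast (by linarith : (1 : ℝ) ≤ R), ?_⟩
  rw [measureReal_eq_zero_iff] at hz
  rw [ae_iff]
  refine measure_mono_null ?_ hz
  intro x hx
  simp only [mem_ofPred_eq, not_le, hA, pow_zero] at hx ⊢
  linarith

/-- A bound for the support of the measure. -/
def R : ℕ := Q.exists_R.choose

theorem R_pos : 1 ≤ Q.R := Q.exists_R.choose_spec.1
theorem ae_R : ∀ᵐ x : ℝ ∂Q.μ, |x| ≤ (Q.R : ℝ) := Q.exists_R.choose_spec.2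

/-- `μ` is the `π`-average of its images under the maps of the words, as holds for the words of a
fixed length and, more generally, for every cut of the symbolic tree. -/
def Rep (π : List Λ →₀ ℝ≥0) : Prop := ∀ B, MeasurableSet B →
  Q.μ.real B = ex π fun w => Q.μ.real ((fun x => rr Q.r w * x + ss Q.r Q.s w) ⁻¹' B)

variable {Q}

theorem Rep.mass {π : List Λ →₀ ℝ≥0} (h : Q.Rep π) : mass π = 1 := by
  have := h univ MeasurableSet.univ
  simp only [preimage_univ, probReal_univ, ex_const, mul_one] at this
  exact this.symm

theorem rep_nil : Q.Rep (Finsupp.single [] 1) := fun B _ => by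
  simp [ex_single, rr, ss]

theorem rep_letter : Q.Rep (letter Q.p) := fun B hB => by
  rw [ex_letter, Q.self B hB]; simp [rr, ss]

theorem Rep.bind {π : List Λ →₀ ℝ≥0} (h : Q.Rep π) {K : List Λ → List Λ →₀ ℝ≥0}
    (hK : ∀ w, Q.Rep (K w)) : Q.Rep (bind π K) := fun B hB => by
  rw [h B hB, ex_bind]
  congr 1; funext w
  rw [hK w _ (measurableSet_preimage (by fun_prop) hB)]
  congr 1; funext v
  rw [← preimage_comp]
  congr 2; funext x
  simp only [Function.comp, rr_append, ss_append]; ring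

theorem rep_W (n : ℕ) : Q.Rep (W Q.p n) := by
  induction n with
  | zero => exact rep_nil
  | succ n ih => exact rep_letter.bind fun _ => ih

theorem rr_pos (w : List Λ) : 0 < |rr Q.r w| := by
  induction w with
  | nil => simp [rr]
  | cons i w ih =>
    have : rr Q.r (i :: w) = Q.r i * rr Q.r w := by simp [rr]
    rw [this, abs_mul]; exact mul_pos (Q.hr0 i) ih

theorem rr_le_one (w : List Λ) : |rr Q.r w| ≤ 1 := by
  induction w with
  | nil => simp [rr]
  | cons i w ih =>
    have : rr Q.r (i :: w) = Q.r i * rr Q.r w := by simp [rr]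
    rw [this, abs_mul]; exact mul_le_one₀ (Q.hr1 i).le (abs_nonneg _) ih

/-- Stopping cut: all words have contraction ratio comparable to `c`. -/
theorem exists_stop {ρ : ℝ} (hρ0 : 0 < ρ) (hρ : ∀ i, ρ ≤ |Q.r i|) {c : ℝ} (hc0 : 0 < c)
    (hc : c ≤ 1) :
    ∃ π, Q.Rep π ∧ ∀ w ∈ π.support, ρ * c ≤ |rr Q.r w| ∧ |rr Q.r w| ≤ c := by
  obtain ⟨σ, h0, h1, hσ⟩ := Q.exists_rho
  have key : ∀ k : ℕ, ∃ π, Q.Rep π ∧ ∀ w ∈ π.support,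
      (ρ * c ≤ |rr Q.r w| ∧ |rr Q.r w| ≤ c) ∨ (c < |rr Q.r w| ∧ |rr Q.r w| ≤ σ ^ k) := by
    intro k
    induction k with
    | zero =>
      refine ⟨_, rep_nil, fun w hw => ?_⟩
      have := Finsupp.support_single_subset hw
      rw [Finset.mem_singleton] at this; subst this
      have hρ1 : ρ ≤ 1 := by
        obtain ⟨i⟩ := Q.nonempty
        exact (hρ i).trans (Q.hr1 i).le
      simp only [rr, List.map_nil, List.prod_nil, abs_one, pow_zero, le_refl, and_true]
      rcases hc.lt_or_eq with h | h
      · exact Or.inr h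
      · subst h; left; constructor <;> linarith
    | succ k ih =>
      obtain ⟨π, hπ, hs⟩ := ih
      refine ⟨_, hπ.bind (K := fun w => if |rr Q.r w| ≤ c then Finsupp.single [] 1
        else letter Q.p) fun w => ?_, fun u hu => ?_⟩
      · split_ifs; exacts [rep_nil, rep_letter]
      · obtain ⟨w, hw, v, hv, rfl⟩ := mem_bind hu
        rw [rr_append, abs_mul]
        by_cases hwc : |rr Q.r w| ≤ c
        · rw [if_pos hwc] at hv
          have := Finsupp.support_single_subset hv
          rw [Finset.mem_singleton] at this; subst this
          simp only [rr, List.map_nil, List.prod_nil, abs_one, mul_one]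
          rcases hs w hw with h | h
          · exact Or.inl h
          · exact absurd hwc (not_le.2 h.1)
        · rw [if_neg hwc] at hv
          obtain ⟨i, rfl⟩ := mem_letter hv
          have e : rr Q.r [i] = Q.r i := by simp [rr]
          rw [e]
          rcases hs w hw with h | h
          · exact absurd h.2 hwc
          · have h2 : ρ * c ≤ |rr Q.r w| * |Q.r i| := by
              rw [mul_comm]; exact mul_le_mul h.1.le (hρ i) hρ0.le (abs_nonneg _)
            have h3 : |rr Q.r w| * |Q.r i| ≤ σ ^ (k + 1) := by
              rw [pow_succ]; exact mul_le_mul h.2 (hσ i) (abs_nonneg _) (by positivity)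
            rcases le_or_gt (|rr Q.r w| * |Q.r i|) c with h4 | h4
            · exact Or.inl ⟨h2, h4⟩
            · exact Or.inr ⟨h4, h3⟩
  obtain ⟨k, hk⟩ := exists_pow_lt_of_lt_one hc0 h1
  obtain ⟨π, hπ, hs⟩ := key k
  refine ⟨π, hπ, fun w hw => ?_⟩
  rcases hs w hw with h | h
  · exact h
  · exact absurd (h.1.trans_le h.2) (not_lt.2 hk.le)

variable (Q)

/-- The law of `⌊2^N x⌋` under `μ`. -/
def lam (N : ℕ) : ℤ →₀ ℝ≥0 :=
  law Q.μ (fun x => ⌊(2 : ℝ) ^ N * x⌋) (Finset.Icc (-(Q.R * 2 ^ N)) (Q.R * 2 ^ N))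

variable {Q}

theorem floor_mem {N : ℕ} {x : ℝ} {M : ℕ} (hx : |x| ≤ M) :
    ⌊(2 : ℝ) ^ N * x⌋ ∈ Finset.Icc (-(M * 2 ^ N) : ℤ) (M * 2 ^ N) := by
  have h := abs_le.1 hx
  have hp : (0 : ℝ) < 2 ^ N := by positivity
  rw [Finset.mem_Icc, Int.le_floor]
  constructor
  · push_cast; nlinarith [h.1]
  · have : ⌊(2 : ℝ) ^ N * x⌋ ≤ ⌊((M * 2 ^ N : ℤ) : ℝ)⌋ := by
      apply Int.floor_le_floor; push_cast; nlinarith [h.2]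
    rwa [Int.floor_intCast] at this

theorem meas_floor (N : ℕ) (a b : ℝ) (k : ℤ) :
    MeasurableSet ((fun x : ℝ => ⌊(2 : ℝ) ^ N * (a * x + b)⌋) ⁻¹' {k}) :=
  measurableSet_preimage (Int.measurable_floor.comp (by fun_prop)) (measurableSet_singleton k)

theorem meas_floor' (N : ℕ) (k : ℤ) :
    MeasurableSet ((fun x : ℝ => ⌊(2 : ℝ) ^ N * x⌋) ⁻¹' {k}) :=
  measurableSet_preimage (Int.measurable_floor.comp (by fun_prop)) (measurableSet_singleton k)

theorem lam_ae (N : ℕ) : Q.μ ((fun x : ℝ => ⌊(2 : ℝ) ^ N * x⌋) ⁻¹'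
    ((Finset.Icc (-(Q.R * 2 ^ N)) (Q.R * 2 ^ N) : Finset ℤ) : Set ℤ))ᶜ = 0 := by
  have := Q.ae_R
  rw [ae_iff] at this
  refine measure_mono_null ?_ this
  intro x hx h
  exact hx (floor_mem h)

theorem mass_lam (N : ℕ) : mass (Q.lam N) = 1 := mass_law (meas_floor' N) (lam_ae N)

theorem lam_supp {N : ℕ} : ∀ k ∈ (Q.lam N).support, |k| ≤ Q.R * 2 ^ N := fun k hk => by
  have := law_support k hk
  rw [Finset.mem_Icc] at this
  exact abs_le.2 this

theorem lam_map_apply (N : ℕ) {U : Type*} (h : ℤ → U) (u : U) :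
    ((Q.lam N).mapDomain h u : ℝ) = Q.μ.real ((fun x : ℝ => h ⌊(2 : ℝ) ^ N * x⌋) ⁻¹' {u}) :=
  map_law (meas_floor' N) (lam_ae N) h u

theorem lam_apply (N : ℕ) (k : ℤ) :
    (Q.lam N k : ℝ) = Q.μ.real ((fun x : ℝ => ⌊(2 : ℝ) ^ N * x⌋) ⁻¹' {k}) := by
  have := Q.lam_map_apply N id k
  rwa [Finsupp.mapDomain_id] at this

theorem floor_div_pow (u : ℝ) (j : ℕ) : ⌊u⌋ / 2 ^ j = ⌊u / 2 ^ j⌋ := by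
  have := Int.floor_div_natCast u (2 ^ j)
  push_cast at this
  exact this.symm

theorem lam_div (a b : ℕ) : (Q.lam (a + b)).mapDomain (· / 2 ^ b) = Q.lam a := by
  ext k
  rw [lam_map_apply, lam_apply]
  congr 2; funext x
  rw [floor_div_pow]; congr 1
  rw [pow_add]; field_simp

/-- Coupling of `(w, ⌊2^N x⌋)` with `⌊2^N f_w(x)⌋`, for independent `w` and `x` of laws `π` and `μ`;
the third component has the law of `⌊2^N x⌋` again. -/
theorem exists_coupling {π : List Λ →₀ ℝ≥0} (hπ : Q.Rep π) (N : ℕ) :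
    ∃ F : List Λ × ℤ × ℤ →₀ ℝ≥0,
      F.mapDomain (fun q => (q.1, q.2.1)) = prodF π (Q.lam N) ∧
      F.mapDomain (fun q => q.2.2) = Q.lam N ∧
      ∀ q ∈ F.support, |q.2.2 - ⌊rr Q.r q.1 * q.2.1 + 2 ^ N * ss Q.r Q.s q.1⌋| ≤ 1 := by
  set X : List Λ → ℝ → ℤ × ℤ := fun w x =>
    (⌊(2 : ℝ) ^ N * x⌋, ⌊(2 : ℝ) ^ N * (rr Q.r w * x + ss Q.r Q.s w)⌋) with hX
  have hclose : ∀ w x, |(X w x).2 - ⌊rr Q.r w * (X w x).1 + 2 ^ N * ss Q.r Q.s w⌋| ≤ 1 := by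
    intro w x
    simp only [hX]
    have hr := Q.rr_le_one w
    set ρ := rr Q.r w
    set k := ⌊(2 : ℝ) ^ N * x⌋
    have h1 := Int.floor_le ((2 : ℝ) ^ N * x)
    have h2 := Int.lt_floor_add_one ((2 : ℝ) ^ N * x)
    have h3 : |ρ * (2 ^ N * x - k)| < 1 := by
      rw [abs_mul]
      have : |(2 : ℝ) ^ N * x - k| < 1 := by rw [abs_lt]; constructor <;> linarith
      calc |ρ| * |(2 : ℝ) ^ N * x - k| ≤ 1 * |(2 : ℝ) ^ N * x - k| :=
            mul_le_mul_of_nonneg_right hr (abs_nonneg _)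
        _ < 1 := by rwa [one_mul]
    have h4 := Int.floor_le ((2 : ℝ) ^ N * (ρ * x + ss Q.r Q.s w))
    have h5 := Int.lt_floor_add_one ((2 : ℝ) ^ N * (ρ * x + ss Q.r Q.s w))
    have h6 := Int.floor_le (ρ * k + 2 ^ N * ss Q.r Q.s w)
    have h7 := Int.lt_floor_add_one (ρ * k + 2 ^ N * ss Q.r Q.s w)
    rw [abs_lt] at h3
    have e1 : (⌊(2 : ℝ) ^ N * (ρ * x + ss Q.r Q.s w)⌋ : ℝ) - ⌊ρ * k + 2 ^ N * ss Q.r Q.s w⌋ < 2 := by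
      nlinarith [h3.1, h3.2]
    have e2 : -2 < (⌊(2 : ℝ) ^ N * (ρ * x + ss Q.r Q.s w)⌋ : ℝ) - ⌊ρ * k + 2 ^ N * ss Q.r Q.s w⌋ := by
      nlinarith [h3.1, h3.2]
    have e1' : ⌊(2 : ℝ) ^ N * (ρ * x + ss Q.r Q.s w)⌋ - ⌊ρ * k + 2 ^ N * ss Q.r Q.s w⌋ < 2 := by
      exact_mod_cast e1
    have e2' : -2 < ⌊(2 : ℝ) ^ N * (ρ * x + ss Q.r Q.s w)⌋ - ⌊ρ * k + 2 ^ N * ss Q.r Q.s w⌋ := by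
      exact_mod_cast e2
    rw [abs_le]; constructor <;> omega
  -- a finite set containing all values
  have hfin : ∀ w, ∃ A : Finset (ℤ × ℤ), (Q.μ (X w ⁻¹' (A : Set (ℤ × ℤ)))ᶜ = 0) ∧
      ∀ q ∈ A, |q.2 - ⌊rr Q.r w * q.1 + 2 ^ N * ss Q.r Q.s w⌋| ≤ 1 := by
    intro w
    refine ⟨(Finset.Icc (-(Q.R * 2 ^ N) : ℤ) (Q.R * 2 ^ N)).biUnion fun k =>
      (Finset.Icc (⌊rr Q.r w * k + 2 ^ N * ss Q.r Q.s w⌋ - 1)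
        (⌊rr Q.r w * k + 2 ^ N * ss Q.r Q.s w⌋ + 1)).image (Prod.mk k), ?_, ?_⟩
    · have := Q.ae_R
      rw [ae_iff] at this
      refine measure_mono_null ?_ this
      intro x hx h
      refine hx ?_
      have hc := abs_le.1 (hclose w x)
      simp only [mem_preimage, Finset.coe_biUnion, mem_iUnion, Finset.mem_coe, Finset.mem_image]
      refine ⟨(X w x).1, floor_mem h, (X w x).2, ?_, rfl⟩
      rw [Finset.mem_Icc]; constructor <;> linarith [hc.1, hc.2]
    · intro q hq
      simp only [Finset.mem_biUnion, Finset.mem_image] at hq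
      obtain ⟨k, _, z, hz, rfl⟩ := hq
      rw [Finset.mem_Icc] at hz
      rw [abs_le]; constructor <;> linarith [hz.1, hz.2]
  choose A hA0 hA1 using hfin
  have hmeas : ∀ w k, MeasurableSet (X w ⁻¹' {k}) := by
    rintro w ⟨k, z⟩
    have : X w ⁻¹' {(k, z)} = ((fun x : ℝ => ⌊(2 : ℝ) ^ N * x⌋) ⁻¹' {k}) ∩
        ((fun x : ℝ => ⌊(2 : ℝ) ^ N * (rr Q.r w * x + ss Q.r Q.s w)⌋) ⁻¹' {z}) := by
      ext x; simp [hX]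
    rw [this]; exact (meas_floor' N k).inter (meas_floor N _ _ z)
  refine ⟨∑ w ∈ π.support, π w • (law Q.μ (X w) (A w)).mapDomain (Prod.mk w), ?_, ?_, ?_⟩
  · rw [Finsupp.mapDomain_finsetSum, prodF_eq (Finset.Subset.refl _)]
    refine Finset.sum_congr rfl fun w _ => ?_
    rw [Finsupp.mapDomain_smul, ← Finsupp.mapDomain_comp]
    congr 1
    have : (law Q.μ (X w) (A w)).mapDomain Prod.fst = Q.lam N := by
      ext k
      rw [map_law (hmeas w) (hA0 w), lam_apply]
    rw [← this, ← Finsupp.mapDomain_comp]; rfl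
  · rw [Finsupp.mapDomain_finsetSum]
    ext z
    rw [lam_apply, hπ _ (meas_floor' N z), ex_eq (Finset.Subset.refl _), Finsupp.finsetSum_apply]
    push_cast
    refine Finset.sum_congr rfl fun w _ => ?_
    rw [Finsupp.mapDomain_smul, ← Finsupp.mapDomain_comp, Finsupp.smul_apply, smul_eq_mul]
    push_cast
    congr 1
    exact map_law (hmeas w) (hA0 w) Prod.snd z
  · intro q hq
    obtain ⟨w, hw, hz⟩ := mem_support_sum hq
    have h3 := Finsupp.mapDomain_support (Finsupp.support_smul hz)
    obtain ⟨b, hb, rfl⟩ := Finset.mem_image.1 h3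
    exact hA1 w b (law_support b hb)

end Sys

end EntDim

/-! ### Entropy at dyadic scales and the entropy dimension -/

namespace EntDim

open scoped NNReal
open Real (negMulLog)

theorem floor_close {u v : ℝ} {D : ℕ} (h : |u - v| ≤ D) : |⌊u⌋ - ⌊v⌋| ≤ D := by
  have h1 := Int.floor_le u
  have h2 := Int.lt_floor_add_one u
  have h3 := Int.floor_le v
  have h4 := Int.lt_floor_add_one v
  rw [abs_le] at h
  have e1 : ((⌊u⌋ - ⌊v⌋ : ℤ) : ℝ) < ((D + 1 : ℤ) : ℝ) := by push_cast; linarith [h.2]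
  have e2 : ((-(D + 1) : ℤ) : ℝ) < ((⌊u⌋ - ⌊v⌋ : ℤ) : ℝ) := by push_cast; linarith [h.1]
  rw [Int.cast_lt] at e1 e2
  rw [abs_le]; constructor <;> omega

theorem idiv_eq_floor (k : ℤ) (j : ℕ) : k / 2 ^ j = ⌊(k : ℝ) / 2 ^ j⌋ := by
  rw [← Sys.floor_div_pow, Int.floor_intCast]

theorem abs_lt_of_floor_eq {u v : ℝ} (h : ⌊u⌋ = ⌊v⌋) : |u - v| < 1 :=
  Int.abs_sub_lt_one_of_floor_eq_floor h

/-- A map of slope about `2^{-a}` loses no more than `a` binary digits, up to a bounded error. -/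
theorem affine_ge (f : ℤ →₀ ℝ≥0) {ρ c : ℝ} {a j M : ℕ} (hρ : 2⁻¹ ^ a ≤ M * |ρ|) :
    Ent (f.mapDomain (· / 2 ^ (a + j))) ≤
      Ent (f.mapDomain fun k : ℤ => ⌊ρ * k + c⌋ / 2 ^ j) + mass f * Real.log (2 * M + 1) := by
  refine Ent_coarse _ _ f M fun k _ k' _ h => ?_
  simp only [Sys.floor_div_pow] at h
  have h1 := abs_lt_of_floor_eq h
  rw [idiv_eq_floor, idiv_eq_floor]
  apply floor_close
  have hj : (0 : ℝ) < 2 ^ j := by positivity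
  have ha : (0 : ℝ) < 2 ^ a := by positivity
  rw [← sub_div, abs_div, abs_of_pos (by positivity : (0 : ℝ) < 2 ^ (a + j)),
    div_le_iff₀ (by positivity)]
  have e : (ρ * k + c) / 2 ^ j - (ρ * k' + c) / 2 ^ j = ρ * (k - k') / 2 ^ j := by ring
  rw [e, abs_div, abs_mul, abs_of_pos hj, div_lt_iff₀ hj, one_mul] at h1
  have h2 : 1 ≤ 2 ^ a * (M * |ρ|) := by
    have := mul_le_mul_of_nonneg_left hρ ha.le
    rwa [← mul_pow, mul_inv_cancel₀ (by norm_num), one_pow] at this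
  have h3 : |(k : ℝ) - k'| ≤ 2 ^ a * (M * |ρ|) * |(k : ℝ) - k'| :=
    le_mul_of_one_le_left (abs_nonneg _) h2
  calc |(k : ℝ) - k'| ≤ 2 ^ a * M * (|ρ| * |(k : ℝ) - k'|) := by linarith
    _ ≤ 2 ^ a * M * 2 ^ j := mul_le_mul_of_nonneg_left h1.le (by positivity)
    _ = M * 2 ^ (a + j) := by rw [pow_add]; ring

/-- A map of slope at most `2^{-a}` loses at least `a` binary digits, up to a bounded error. -/
theorem affine_le (f : ℤ →₀ ℝ≥0) {ρ c : ℝ} {a j : ℕ} (hρ : |ρ| ≤ 2⁻¹ ^ a) :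
    Ent (f.mapDomain fun k : ℤ => ⌊ρ * k + c⌋ / 2 ^ j) ≤
      Ent (f.mapDomain (· / 2 ^ (a + j))) + mass f * Real.log 3 := by
  have := Ent_coarse (fun k : ℤ => k / 2 ^ (a + j)) (fun k => ⌊ρ * k + c⌋ / 2 ^ j) f 1
    fun k _ k' _ h => ?_
  · norm_num at this; exact this
  simp only [idiv_eq_floor] at h
  have h1 := abs_lt_of_floor_eq h
  simp only [Sys.floor_div_pow]
  apply floor_close
  have hj : (0 : ℝ) < 2 ^ j := by positivity
  have ha : (0 : ℝ) < 2 ^ a := by positivity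
  rw [← sub_div, abs_div, abs_of_pos (by positivity : (0 : ℝ) < 2 ^ (a + j)),
    div_lt_iff₀ (by positivity), one_mul] at h1
  have e : (ρ * k + c) / 2 ^ j - (ρ * k' + c) / 2 ^ j = ρ * (k - k') / 2 ^ j := by ring
  rw [e, abs_div, abs_mul, abs_of_pos hj, div_le_iff₀ hj]
  push_cast; rw [one_mul]
  calc |ρ| * |(k : ℝ) - k'| ≤ 2⁻¹ ^ a * 2 ^ (a + j) := mul_le_mul hρ h1.le (abs_nonneg _) (by positivity)
    _ = 2 ^ j := by rw [pow_add, ← mul_assoc, ← mul_pow, inv_mul_cancel₀ (by norm_num), one_pow, one_mul]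

namespace Sys

variable {Λ : Type*} [Fintype Λ] (Q : Sys Λ)

/-- The discretized image point `f_w(k)` at scale `2^{-N}`. -/
def Zt (N : ℕ) (q : List Λ × ℤ) : ℤ := ⌊rr Q.r q.1 * q.2 + 2 ^ N * ss Q.r Q.s q.1⌋

/-- Entropy of `μ` at scale `2^{-N}`. -/
def e (N : ℕ) : ℝ := Ent (Q.lam N)

variable {Q}

theorem idiv_close {z z' : ℤ} (h : |z - z'| ≤ 1) (b : ℕ) : |z / 2 ^ b - z' / 2 ^ b| ≤ 1 := by
  rw [idiv_eq_floor, idiv_eq_floor]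
  refine floor_close (D := 1) ?_
  rw [← sub_div, abs_div, abs_of_pos (by positivity : (0 : ℝ) < 2 ^ b)]
  have h1 : |(z : ℝ) - z'| ≤ 1 := by exact_mod_cast h
  push_cast
  refine div_le_one_of_le₀ (h1.trans (one_le_pow₀ (by norm_num))) (by positivity)

/-- Self-similarity at scale `2^{-(N-b)}`: up to a bounded error, the entropy of `μ` is at most
that of the discretized image point of a `π`-random word. -/
theorem SS1 {π : List Λ →₀ ℝ≥0} (hπ : Q.Rep π) (N b : ℕ) :
    Ent ((Q.lam N).mapDomain (· / 2 ^ b)) ≤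
      Ent ((prodF π (Q.lam N)).mapDomain fun q => Q.Zt N q / 2 ^ b) + Real.log 5 := by
  obtain ⟨F, h1, h2, h3⟩ := exists_coupling hπ N
  have hm : mass F = 1 := by rw [← mass_mapDomain (fun q => q.2.2) F, h2, mass_lam]
  rw [← h1]
  conv_lhs => rw [← h2]
  rw [← Finsupp.mapDomain_comp, ← Finsupp.mapDomain_comp]
  have := Ent_coarse (fun q : List Λ × ℤ × ℤ => Q.Zt N (q.1, q.2.1) / 2 ^ b)
    (fun q => q.2.2 / 2 ^ b) F 2 fun q hq q' hq' h => ?_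
  · rw [hm] at this; norm_num at this; exact this
  · have a1 := abs_le.1 (idiv_close (h3 q hq) b)
    have a2 := abs_le.1 (idiv_close (h3 q' hq') b)
    simp only [Zt] at h
    rw [abs_le]; push_cast; constructor <;> linarith [a1.1, a1.2, a2.1, a2.2]

/-- The bound opposite to `SS1`. -/
theorem SS2 {π : List Λ →₀ ℝ≥0} (hπ : Q.Rep π) (N b : ℕ) :
    Ent ((prodF π (Q.lam N)).mapDomain fun q => Q.Zt N q / 2 ^ b) ≤
      Ent ((Q.lam N).mapDomain (· / 2 ^ b)) + Real.log 5 := by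
  obtain ⟨F, h1, h2, h3⟩ := exists_coupling hπ N
  have hm : mass F = 1 := by rw [← mass_mapDomain (fun q => q.2.2) F, h2, mass_lam]
  rw [← h1]
  conv_rhs => rw [← h2]
  rw [← Finsupp.mapDomain_comp, ← Finsupp.mapDomain_comp]
  have := Ent_coarse (fun q : List Λ × ℤ × ℤ => q.2.2 / 2 ^ b)
    (fun q => Q.Zt N (q.1, q.2.1) / 2 ^ b) F 2 fun q hq q' hq' h => ?_
  · rw [hm] at this; norm_num at this; exact this
  · have a1 := abs_le.1 (idiv_close (h3 q hq) b)
    have a2 := abs_le.1 (idiv_close (h3 q' hq') b)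
    simp only [Zt]
    rw [abs_le]; push_cast; constructor <;> linarith [a1.1, a1.2, a2.1, a2.2]

theorem e_nonneg (N : ℕ) : 0 ≤ Q.e N := Ent_nonneg _

theorem e_le (N : ℕ) : Q.e N ≤ N * Real.log 2 + Real.log (2 * Q.R + 1) := by
  have h : (Q.lam N).support ⊆ Finset.Icc (-(Q.R * 2 ^ N) : ℤ) (Q.R * 2 ^ N) := fun k hk => by
    rw [Finset.mem_Icc]; exact abs_le.1 (lam_supp k hk)
  have := Ent_le_card h
  rw [mass_lam, one_mul, Int.card_Icc] at this
  refine this.trans ?_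
  have e : ((Q.R * 2 ^ N + 1 - -(Q.R * 2 ^ N) : ℤ).toNat : ℝ) = 2 * Q.R * 2 ^ N + 1 := by
    have : (Q.R * 2 ^ N + 1 - -(Q.R * 2 ^ N) : ℤ) = ((2 * Q.R * 2 ^ N + 1 : ℕ) : ℤ) := by
      push_cast; ring
    rw [this, Int.toNat_natCast]; push_cast; ring
  rw [e, ← Real.log_pow, ← Real.log_mul (by positivity) (by positivity)]
  apply Real.log_le_log (by positivity)
  nlinarith [one_le_pow₀ (M₀ := ℝ) (a := 2) (n := N) (by norm_num)]

/-- The entropies of `μ` at dyadic scales are superadditive up to a constant: for a cut of words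
contracting by about `2^{-a}`, the measure `μ` is an average of copies of itself of size `2^{-a}`, each
of which has entropy about `e b` at scale `2^{-(a+b)}`. -/
theorem exists_superadd : ∃ C : ℝ, 0 ≤ C ∧ ∀ a b, Q.e a + Q.e b ≤ Q.e (a + b) + C := by
  obtain ⟨ρ, hρ0, _, hρ⟩ := Q.exists_rmin
  obtain ⟨M, hM⟩ := exists_nat_ge (1 / ρ)
  rw [div_le_iff₀ hρ0] at hM
  refine ⟨2 * Real.log 5 + Real.log (2 * M + 1) + Q.e 0 + Real.log 3, ?_, fun a b => ?_⟩
  · have h1 := Real.log_nonneg (by norm_num : (1 : ℝ) ≤ 5)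
    have h2 := Real.log_nonneg (by norm_num : (1 : ℝ) ≤ 3)
    have h3 := Real.log_nonneg (by linarith [(Nat.cast_nonneg M : (0 : ℝ) ≤ M)] : (1 : ℝ) ≤ 2 * M + 1)
    have := Q.e_nonneg 0
    linarith
  obtain ⟨π, hπ, hs⟩ := exists_stop (Q := Q) hρ0 hρ (c := 2⁻¹ ^ a) (by positivity)
    (pow_le_one₀ (by norm_num) (by norm_num))
  set N := a + b
  have h1 := cond_superadd π.support (fun w => π w • (Q.lam N).mapDomain fun k => Q.Zt N (w, k))
    (fun z => z / 2 ^ b)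
  rw [← map_prodF (fun q => Q.Zt N q), ← Finsupp.mapDomain_comp] at h1
  have h2 := SS2 hπ N 0
  have h3 := SS1 hπ N b
  have e0 : (fun z : ℤ => z / 2 ^ 0) = id := by funext z; simp
  have e0' : (fun q : List Λ × ℤ => Q.Zt N q / 2 ^ 0) = fun q => Q.Zt N q := by funext z; simp
  rw [e0, e0', Finsupp.mapDomain_id] at h2
  rw [lam_div a b] at h3
  have hw : ∀ w ∈ π.support, (π w : ℝ) * (Q.e b - Real.log (2 * M + 1) - Q.e 0 - Real.log 3) ≤
      Ent (π w • (Q.lam N).mapDomain fun k => Q.Zt N (w, k)) -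
      Ent ((π w • (Q.lam N).mapDomain fun k => Q.Zt N (w, k)).mapDomain (fun z => z / 2 ^ b)) := by
    intro w hw
    obtain ⟨hw1, hw2⟩ := hs w hw
    rw [Finsupp.mapDomain_smul, Ent_smul, Ent_smul, ← mul_sub, ← Finsupp.mapDomain_comp]
    refine mul_le_mul_of_nonneg_left ?_ (π w).2
    have b1 := affine_ge (Q.lam N) (ρ := rr Q.r w) (c := 2 ^ N * ss Q.r Q.s w) (a := a) (j := 0)
      (M := M) ?_
    · have b2 := affine_le (Q.lam N) (ρ := rr Q.r w) (c := 2 ^ N * ss Q.r Q.s w) (a := a) (j := b)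
        hw2
      have hb : (Q.lam N).mapDomain (· / 2 ^ (a + 0)) = Q.lam b := by
        have := Q.lam_div b a
        rwa [add_comm b a] at this
      have hb2 : (Q.lam N).mapDomain (· / 2 ^ (a + b)) = Q.lam 0 := by
        have := Q.lam_div 0 (a + b)
        rwa [zero_add] at this
      have e1 : (fun k : ℤ => ⌊rr Q.r w * k + 2 ^ N * ss Q.r Q.s w⌋ / 2 ^ 0) =
        fun k => Q.Zt N (w, k) := by funext k; simp [Zt]
      rw [hb, mass_lam, one_mul, e1] at b1
      rw [hb2, mass_lam, one_mul] at b2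
      have b2' : Ent ((Q.lam N).mapDomain ((fun z => z / 2 ^ b) ∘ fun k => Q.Zt N (w, k))) ≤
        Q.e 0 + Real.log 3 := b2
      have b1' : Q.e b ≤ _ := b1
      linarith
    · calc (2⁻¹ : ℝ) ^ a = 1 * 2⁻¹ ^ a := (one_mul _).symm
        _ ≤ (M * ρ) * 2⁻¹ ^ a := mul_le_mul_of_nonneg_right hM (by positivity)
        _ = M * (ρ * 2⁻¹ ^ a) := by ring
        _ ≤ M * |rr Q.r w| := mul_le_mul_of_nonneg_left hw1 (by positivity)
  have h4 := (Finset.sum_le_sum hw).trans h1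
  rw [← Finset.sum_mul, ← mass_eq (Finset.Subset.refl _), hπ.mass, one_mul] at h4
  have h2' : Ent ((prodF π (Q.lam N)).mapDomain fun q => Q.Zt N q) ≤ Q.e N + Real.log 5 := h2
  have h3' : Q.e a ≤ Ent ((prodF π (Q.lam N)).mapDomain
    ((fun z => z / 2 ^ b) ∘ fun q => Q.Zt N q)) + Real.log 5 := h3
  linarith

/-- The entropy dimension `E / log 2` exists. -/
theorem exists_E : ∃ E C : ℝ, 0 ≤ E ∧ 0 ≤ C ∧ (∀ a b, Q.e a + Q.e b ≤ Q.e (a + b) + C) ∧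
    (∀ N : ℕ, Q.e N ≤ E * N + C) ∧ (∀ η > 0, ∃ K, ∀ m : ℕ, (E - η) * m - K ≤ Q.e m) := by
  obtain ⟨C0, hC0, hsup⟩ := Q.exists_superadd
  set C := C0 + Q.e 0
  have he0 := Q.e_nonneg 0
  have hsub : Subadditive fun N => C0 - Q.e N := fun a b => by
    have := hsup a b; dsimp only; linarith
  have hbdd : BddBelow (range fun n : ℕ => (C0 - Q.e n) / n) := by
    refine ⟨-(Real.log 2 + Real.log (2 * Q.R + 1)), ?_⟩
    rintro _ ⟨n, rfl⟩
    have hl2 := Real.log_nonneg (by norm_num : (1 : ℝ) ≤ 2)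
    have hlR := Real.log_nonneg (by linarith [(Nat.cast_nonneg Q.R : (0 : ℝ) ≤ Q.R)] :
      (1 : ℝ) ≤ 2 * Q.R + 1)
    rcases Nat.eq_zero_or_pos n with rfl | hn
    · simp; linarith
    · have hn' : (1 : ℝ) ≤ n := by exact_mod_cast hn
      dsimp only
      rw [le_div_iff₀ (by linarith)]
      have := Q.e_le n
      nlinarith
  have hlim := hsub.tendsto_lim hbdd
  set E := -hsub.lim with hE
  have hub : ∀ N : ℕ, Q.e N ≤ E * N + C := by
    intro N
    rcases Nat.eq_zero_or_pos N with rfl | hN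
    · simp [C]; linarith
    · have := hsub.lim_le_div hbdd hN.ne'
      have hN' : (0 : ℝ) < N := by exact_mod_cast hN
      rw [le_div_iff₀ hN'] at this
      have : Q.e N ≤ E * N + C0 := by rw [hE]; linarith
      simp only [C]; linarith
  have hE0 : 0 ≤ E := by
    by_contra h
    push Not at h
    obtain ⟨n, hn⟩ := exists_nat_gt (C / (-E))
    rw [div_lt_iff₀ (by linarith)] at hn
    have h1 := hub n
    have h2 := Q.e_nonneg n
    nlinarith
  refine ⟨E, C, hE0, by simp only [C]; linarith, fun a b => ?_, hub, fun η hη => ?_⟩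
  · have := hsup a b; simp only [C]; linarith
  · have hev : ∀ᶠ n : ℕ in atTop, (C0 - Q.e n) / n < -E + η :=
      (tendsto_order.1 hlim).2 _ (by rw [hE]; linarith)
    obtain ⟨m0, hm0⟩ := eventually_atTop.1 hev
    refine ⟨E * m0, fun m => ?_⟩
    have hm00 : (0 : ℝ) ≤ m := Nat.cast_nonneg m
    have := Q.e_nonneg m
    rcases lt_or_ge m m0 with h | h
    · have h' : (m : ℝ) ≤ m0 := by exact_mod_cast h.le
      nlinarith
    · rcases Nat.eq_zero_or_pos m with rfl | hm
      · simp; nlinarith [(Nat.cast_nonneg m0 : (0 : ℝ) ≤ m0)]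
      · have hm' : (0 : ℝ) < m := by exact_mod_cast hm
        have h1 := hm0 m h
        rw [div_lt_iff₀ hm'] at h1
        have : 0 ≤ E * m0 := by positivity
        nlinarith

end Sys

end EntDim

/-! ### Entropy dimension and local dimension -/

namespace EntDim

open scoped NNReal
open Real (negMulLog)

theorem sum_shift_le (f : ℤ →₀ ℝ≥0) (A : Finset ℤ) (c : ℤ) : ∑ k ∈ A, (f (k + c) : ℝ) ≤ mass f := by
  have h : f.support ⊆ f.support ∪ A.image (· + c) := Finset.subset_union_left
  rw [mass_eq h]
  have : ∑ k ∈ A, (f (k + c) : ℝ) = ∑ k ∈ A.image (· + c), (f k : ℝ) := by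
    rw [Finset.sum_image]; intro a _ b _ hab; exact add_right_cancel hab
  rw [this]
  exact Finset.sum_le_sum_of_subset_of_nonneg Finset.subset_union_right fun _ _ _ => by positivity

namespace Sys

variable {Λ : Type*} [Fintype Λ] {Q : Sys Λ}

/-- The mass of the cell `k` of side `2^{-N}` and its two neighbours. -/
def tri (Q : Sys Λ) (N : ℕ) (k : ℤ) : ℝ :=
  (Q.lam N (k + -1) : ℝ) + Q.lam N (k + 0) + Q.lam N (k + 1)

theorem ball_le_tri (N : ℕ) (x : ℝ) :
    Q.μ.real (Metric.ball x ((2 : ℝ)⁻¹ ^ N)) ≤ Q.tri N ⌊(2 : ℝ) ^ N * x⌋ := by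
  unfold tri
  rw [lam_apply, lam_apply, lam_apply]
  set k := ⌊(2 : ℝ) ^ N * x⌋ with hk
  set X : ℝ → ℤ := fun x => ⌊(2 : ℝ) ^ N * x⌋ with hX
  have hsub : Metric.ball x ((2 : ℝ)⁻¹ ^ N) ⊆ X ⁻¹' {k + -1} ∪ X ⁻¹' {k + 0} ∪ X ⁻¹' {k + 1} := by
    intro y hy
    rw [Metric.mem_ball, Real.dist_eq] at hy
    have hp : (0 : ℝ) < 2 ^ N := by positivity
    have h1 : |(2 : ℝ) ^ N * y - 2 ^ N * x| ≤ (1 : ℕ) := by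
      rw [← mul_sub, abs_mul, abs_of_pos hp]
      have := mul_le_mul_of_nonneg_left hy.le hp.le
      rw [← mul_pow, mul_inv_cancel₀ (by norm_num), one_pow] at this
      rwa [Nat.cast_one]
    have h2 := abs_le.1 (floor_close h1)
    simp only [mem_union, mem_preimage, mem_singleton_iff, hX]
    push_cast at h2
    omega
  calc _ ≤ _ := measureReal_mono hsub
    _ ≤ _ := (measureReal_union_le _ _)
    _ ≤ _ := add_le_add_left (measureReal_union_le _ _) _

/-- There are at most `3 / c` cells whose neighbourhood has mass at least `c`. -/
theorem card_heavy (N : ℕ) {c : ℝ} (A : Finset ℤ) (hA : ∀ k ∈ A, c ≤ Q.tri N k) :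
    A.card * c ≤ 3 := by
  have h1 : ∑ k ∈ A, Q.tri N k ≤ 3 := by
    unfold tri
    rw [Finset.sum_add_distrib, Finset.sum_add_distrib]
    have e1 := sum_shift_le (Q.lam N) A (-1)
    have e2 := sum_shift_le (Q.lam N) A 0
    have e3 := sum_shift_le (Q.lam N) A 1
    rw [mass_lam] at e1 e2 e3
    linarith
  have := Finset.sum_le_sum hA
  rw [Finset.sum_const, nsmul_eq_mul] at this
  linarith

/-- If all but a `δ`-fraction of the mass is carried by heavy cells then the entropy is small. -/
theorem e_le_heavy (N : ℕ) {D δ : ℝ} (hδ : δ < 1)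
    (h : Q.μ.real ((fun x : ℝ => Real.exp (-D) ≤ Q.tri N ⌊(2 : ℝ) ^ N * x⌋) ⁻¹' {False}) ≤ δ) :
    Q.e N ≤ Real.log 2 + (D + Real.log 3) + δ * (N * Real.log 2 + Real.log (2 * Q.R + 1)) := by
  set P : ℤ → Prop := fun k => Real.exp (-D) ≤ Q.tri N k with hP
  have hl2 := Real.log_nonneg (by norm_num : (1 : ℝ) ≤ 2)
  have hlR := Real.log_nonneg (by linarith [(Nat.cast_nonneg Q.R : (0 : ℝ) ≤ Q.R)] :
      (1 : ℝ) ≤ 2 * Q.R + 1)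
  have hF : mass (fib P False (Q.lam N)) ≤ δ := by
    have := coe_mapDomain_apply P (Q.lam N) False
    rw [lam_map_apply] at this
    exact (this.symm.le.trans h : _)
  have hK : ∀ s ∈ (Q.lam N).support, P s ∈ ({True, False} : Finset Prop) := fun s _ => by
    by_cases hs : P s <;> simp [hs]
  have hc := chain P (Q.lam N) hK
  have hm := mass_sum_filter P (Q.lam N) hK
  rw [Finset.sum_pair (by simp)] at hc hm
  have hm' : mass (fib P True (Q.lam N)) + mass (fib P False (Q.lam N)) = 1 := by
    rw [← mass_lam (Q := Q) N]; exact hm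
  have hc' : Q.e N = Ent ((Q.lam N).mapDomain P) +
    (Ent (fib P True (Q.lam N)) + Ent (fib P False (Q.lam N))) := hc
  have h1 : Ent ((Q.lam N).mapDomain P) ≤ Real.log 2 := by
    have := Ent_le_card (support_mapDomain_sub P (Q.lam N) hK)
    rw [mass_mapDomain, mass_lam, one_mul] at this
    refine this.trans (Real.log_le_log ?_ ?_)
    · norm_num
    · rw [Finset.card_pair (by simp)]; norm_num
  have h2 : Ent (fib P True (Q.lam N)) ≤ D + Real.log 3 := by
    have hpos : 0 < mass (fib P True (Q.lam N)) := by linarith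
    have hA := card_heavy (Q := Q) N (c := Real.exp (-D)) (fib P True (Q.lam N)).support
      fun k hk => of_eq_true (mem_fib hk).2
    have hb := Ent_le_card (Finset.Subset.refl (fib P True (Q.lam N)).support)
    have hne : (fib P True (Q.lam N)).support.Nonempty := by
      rw [Finset.nonempty_iff_ne_empty]; intro h0
      rw [Finsupp.support_eq_empty] at h0; rw [h0, mass_zero] at hpos; exact lt_irrefl _ hpos
    have hcard : (1 : ℝ) ≤ (fib P True (Q.lam N)).support.card := by
      exact_mod_cast hne.card_pos
    have hlog := Real.log_nonneg hcard
    have hle : Real.log (fib P True (Q.lam N)).support.card ≤ D + Real.log 3 := by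
      have := Real.log_le_log (by positivity) hA
      rw [Real.log_mul (by positivity) (by positivity), Real.log_exp] at this
      linarith
    have hm1 : mass (fib P True (Q.lam N)) ≤ 1 := by
      linarith [mass_nonneg (fib P False (Q.lam N))]
    nlinarith
  have h3 : Ent (fib P False (Q.lam N)) ≤ δ * (N * Real.log 2 + Real.log (2 * Q.R + 1)) := by
    have hs : (fib P False (Q.lam N)).support ⊆ Finset.Icc (-(Q.R * 2 ^ N) : ℤ) (Q.R * 2 ^ N) :=
      fun k hk => by
        rw [Finset.mem_Icc]; exact abs_le.1 (lam_supp k (mem_fib hk).1)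
    have := Ent_le_card hs
    refine this.trans (mul_le_mul hF ?_ (Real.log_natCast_nonneg _)
      ((mass_nonneg _).trans hF))
    rw [Int.card_Icc]
    have e : ((Q.R * 2 ^ N + 1 - -(Q.R * 2 ^ N) : ℤ).toNat : ℝ) = 2 * Q.R * 2 ^ N + 1 := by
      have : (Q.R * 2 ^ N + 1 - -(Q.R * 2 ^ N) : ℤ) = ((2 * Q.R * 2 ^ N + 1 : ℕ) : ℤ) := by
        push_cast; ring
      rw [this, Int.toNat_natCast]; push_cast; ring
    rw [e, ← Real.log_pow, ← Real.log_mul (by positivity) (by positivity)]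
    apply Real.log_le_log (by positivity)
    nlinarith [one_le_pow₀ (M₀ := ℝ) (a := 2) (n := N) (by norm_num)]
  rw [hc']; linarith

/-- Where the local dimension is `d`, all but a small part of the mass lies in cells that are
heavy at scale `2^{-N}`, for large `N`. -/
theorem heavy_mass {d ε δ : ℝ} (hε : 0 < ε) (hδ : 0 < δ)
    (hd : ∀ᵐ x ∂Q.μ, Tendsto (fun r : ℝ => Real.log (Q.μ (Metric.ball x r)).toReal / Real.log r)
      (nhdsWithin 0 (Set.Ioi 0)) (nhds d)) :
    ∃ N0 : ℕ, ∀ N ≥ N0, Q.μ.real ((fun x : ℝ => Real.exp (-(N * (d + ε) * Real.log 2)) ≤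
      Q.tri N ⌊(2 : ℝ) ^ N * x⌋) ⁻¹' {False}) ≤ δ := by
  set B : ℕ → Set ℝ := fun N => (fun x : ℝ => Real.exp (-(N * (d + ε) * Real.log 2)) ≤
      Q.tri N ⌊(2 : ℝ) ^ N * x⌋) ⁻¹' {False} with hB
  have hBm : ∀ N, MeasurableSet (B N) := fun N => by
    have : B N = (fun x : ℝ => ⌊(2 : ℝ) ^ N * x⌋) ⁻¹'
        {k | (Real.exp (-(N * (d + ε) * Real.log 2)) ≤ Q.tri N k) = False} := rfl
    rw [this]
    exact measurableSet_preimage (Int.measurable_floor.comp (by fun_prop)) (.of_discrete)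
  have hae : ∀ᵐ x ∂Q.μ, ∀ᶠ N in atTop, x ∉ B N := by
    filter_upwards [hd, Measure.support_mem_ae (μ := Q.μ)] with x hx hs
    have hr : Tendsto (fun N : ℕ => (2 : ℝ)⁻¹ ^ N) atTop (nhdsWithin 0 (Set.Ioi 0)) := by
      rw [tendsto_nhdsWithin_iff]
      exact ⟨tendsto_pow_atTop_nhds_zero_of_lt_one (by norm_num) (by norm_num),
        Eventually.of_forall fun N => by rw [mem_Ioi]; positivity⟩
    have h1 := (tendsto_order.1 (hx.comp hr)).2 (d + ε) (by linarith)
    filter_upwards [h1, eventually_gt_atTop 0] with N hN hN0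
    simp only [hB, mem_preimage, mem_singleton_iff, eq_iff_iff, iff_false, not_not]
    refine le_trans ?_ (ball_le_tri N x)
    have hpos : 0 < Q.μ.real (Metric.ball x ((2 : ℝ)⁻¹ ^ N)) := by
      have := (Measure.mem_support_iff_forall x).1 hs _
        (Metric.ball_mem_nhds x (by positivity : (0 : ℝ) < 2⁻¹ ^ N))
      exact ENNReal.toReal_pos this.ne' (measure_ne_top _ _)
    have hN' : (0 : ℝ) < N := by exact_mod_cast hN0
    have hl2 := Real.log_pos (by norm_num : (1 : ℝ) < 2)
    simp only [Function.comp_apply, Real.log_pow, Real.log_inv] at hN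
    rw [div_lt_iff_of_neg (by nlinarith)] at hN
    rw [← Real.le_log_iff_exp_le hpos]
    have e : -(N * (d + ε) * Real.log 2) = (d + ε) * (N * -Real.log 2) := by ring
    rw [e]; exact hN.le
  set D : ℕ → Set ℝ := fun M => ⋃ N ≥ M, B N with hD
  have hDm : ∀ M, MeasurableSet (D M) := fun M =>
    MeasurableSet.iUnion fun N => MeasurableSet.iUnion fun _ => hBm N
  have hanti : Antitone D := fun M M' h x hx => by
    simp only [hD, mem_iUnion] at hx ⊢
    obtain ⟨N, hN, hx⟩ := hx
    exact ⟨N, h.trans hN, hx⟩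
  have hnull : Q.μ (⋂ M, D M) = 0 := by
    rw [ae_iff] at hae
    refine measure_mono_null ?_ hae
    intro x hx h
    obtain ⟨M, hM⟩ := eventually_atTop.1 h
    have := mem_iInter.1 hx M
    simp only [hD, mem_iUnion] at this
    obtain ⟨N, hN, hx⟩ := this
    exact hM N hN hx
  have hlim := tendsto_measure_iInter_atTop (μ := Q.μ) (s := D)
    (fun n => (hDm n).nullMeasurableSet) hanti ⟨0, measure_ne_top _ _⟩
  rw [hnull] at hlim
  have hlim' : Tendsto (fun M => Q.μ.real (D M)) atTop (nhds 0) :=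
    (ENNReal.tendsto_toReal (by simp : (0 : ℝ≥0∞) ≠ ⊤)).comp hlim
  obtain ⟨M, hM⟩ := eventually_atTop.1 ((tendsto_order.1 hlim').2 δ hδ)
  refine ⟨M, fun N hN => (measureReal_mono ?_ (measure_ne_top _ _)).trans (hM M le_rfl).le⟩
  exact subset_iUnion₂_of_subset N hN (Subset.refl _)

/-- The entropy dimension is at most the local dimension. -/
theorem E_le {d E : ℝ}
    (hd : ∀ᵐ x ∂Q.μ, Tendsto (fun r : ℝ => Real.log (Q.μ (Metric.ball x r)).toReal / Real.log r)
      (nhdsWithin 0 (Set.Ioi 0)) (nhds d))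
    (hE : ∀ η > 0, ∃ K, ∀ m : ℕ, (E - η) * m - K ≤ Q.e m) : E ≤ d * Real.log 2 := by
  have hl2 := Real.log_pos (by norm_num : (1 : ℝ) < 2)
  have key : ∀ ε : ℝ, 0 < ε → ε < 1 → E ≤ d * Real.log 2 + ε * (1 + 2 * Real.log 2) := by
    intro ε h0 h1
    obtain ⟨K, hK⟩ := hE ε h0
    obtain ⟨N0, hN0⟩ := heavy_mass h0 h0 hd
    by_contra hcon
    push Not at hcon
    set g := E - (d * Real.log 2 + ε * (1 + 2 * Real.log 2)) with hg
    have hg0 : 0 < g := by linarith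
    set C := K + Real.log 2 + Real.log 3 + ε * Real.log (2 * Q.R + 1) with hC
    obtain ⟨N1, hN1⟩ := exists_nat_gt (C / g)
    set N := max N0 N1
    have a1 := e_le_heavy N h1 (hN0 N (le_max_left _ _))
    have a2 := hK N
    have a3 : C < N * g := by
      rw [div_lt_iff₀ hg0] at hN1
      refine hN1.trans_le (mul_le_mul_of_nonneg_right ?_ hg0.le)
      exact_mod_cast le_max_right N0 N1
    rw [hC, hg] at a3
    nlinarith
  refine le_of_forall_pos_le_add fun δ hδ => ?_
  set ε := min (1 / 2) (δ / (1 + 2 * Real.log 2)) with hε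
  have hε0 : 0 < ε := lt_min (by norm_num) (by positivity)
  have := key ε hε0 ((min_le_left _ _).trans_lt (by norm_num))
  have h2 : ε * (1 + 2 * Real.log 2) ≤ δ := by
    have := min_le_right (1 / 2) (δ / (1 + 2 * Real.log 2))
    rw [← hε, le_div_iff₀ (by positivity)] at this
    exact this
  linarith

end Sys

end EntDim

/-! ### Types and coarse cells of words -/

namespace EntDim

open scoped NNReal
open Real (negMulLog)

section
variable {S T U : Type*}

/-- Pair version of `Ent_coarse`, with a bound depending on the conditioning variable. -/
theorem Ent_coarse_pair (X : S → T) (Y : S → ℤ) (f : S →₀ ℝ≥0) (D : T → ℕ)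
    (h : ∀ s ∈ f.support, ∀ s' ∈ f.support, X s = X s' → |Y s - Y s'| ≤ D (X s)) :
    Ent (f.mapDomain fun s => (X s, Y s)) ≤
      Ent (f.mapDomain X) + ex f fun s => Real.log (2 * D (X s) + 1) := by
  refine fiber_bound X Y f (fun x => Real.log (2 * D x + 1)) ?_
  intro x
  by_cases hx : ∃ s ∈ f.support, X s = x
  · obtain ⟨s0, hs0, rfl⟩ := hx
    refine ⟨Finset.Icc (Y s0 - D (X s0)) (Y s0 + D (X s0)), fun s hs hX => ?_, fun _ => ?_⟩
    · have := abs_le.1 (h s hs s0 hs0 hX)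
      rw [hX] at this
      rw [Finset.mem_Icc]; constructor <;> linarith [this.1, this.2]
    · rw [Int.card_Icc]
      have e : (Y s0 + D (X s0) + 1 - (Y s0 - D (X s0))).toNat = 2 * D (X s0) + 1 := by omega
      rw [e]; push_cast; exact le_rfl
  · exact ⟨∅, fun s hs hX => (hx ⟨s, hs, hX⟩).elim, fun h => (hx h).elim⟩

theorem mapDomain_congr' {f : S →₀ ℝ≥0} {X Y : S → T} (h : ∀ s ∈ f.support, X s = Y s) :
    f.mapDomain X = f.mapDomain Y := Finsupp.mapDomain_congr h

theorem map_comp_fst (f : S →₀ ℝ≥0) (g : T →₀ ℝ≥0) (hg : mass g = 1) (X : S → U) :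
    (prodF f g).mapDomain (fun q => X q.1) = f.mapDomain X := by
  conv_rhs => rw [← map_fst_prodF f g hg]
  rw [← Finsupp.mapDomain_comp]; rfl

theorem ex_comp_fst (f : S →₀ ℝ≥0) (g : T →₀ ℝ≥0) (hg : mass g = 1) (φ : S → ℝ) :
    ex (prodF f g) (fun q => φ q.1) = ex f φ := by
  rw [ex_prodF]; simp only [ex_const, hg, one_mul]

end

section
variable {Λ : Type*} [Fintype Λ]

/-- There are only polynomially many types of words. -/
theorem Ent_type_le (p : Λ → ℝ≥0) (hp1 : ∑ i, p i = 1) (n : ℕ) :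
    Ent ((W p n).mapDomain fun w : List Λ => (w : Multiset Λ)) ≤ Fintype.card Λ * Real.log (n + 1) := by
  have h1 := Ent_map_le_of_factor (fun (w : List Λ) (i : Λ) => Fin.ofNat (n + 1) (w.count i))
    (fun w : List Λ => (w : Multiset Λ)) (W p n) ?_
  · refine h1.trans ?_
    have h2 := Ent_le_card (Finset.subset_univ ((W p n).mapDomain
      (fun (w : List Λ) (i : Λ) => Fin.ofNat (n + 1) (w.count i))).support)
    rw [mass_mapDomain, mass_W p hp1, one_mul] at h2
    refine h2.trans (le_of_eq ?_)
    rw [Finset.card_univ, Fintype.card_fun, Fintype.card_fin]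
    push_cast
    rw [Real.log_pow]
  · intro w hw w' hw' h
    rw [Multiset.coe_eq_coe, List.perm_iff_count]
    intro i
    have h3 := congrArg Fin.val (congrFun h i)
    simp only [Fin.ofNat] at h3
    have e1 := length_of_mem_W hw
    have e2 := length_of_mem_W hw'
    have c1 := List.count_le_length (a := i) (l := w)
    have c2 := List.count_le_length (a := i) (l := w')
    rwa [Nat.mod_eq_of_lt (by omega), Nat.mod_eq_of_lt (by omega)] at h3

end

namespace Sys

variable {Λ : Type*} [Fintype Λ] (Q : Sys Λ)

/-- The exponents `-log |r_i|`. -/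
def lg (i : Λ) : ℝ := -Real.log |Q.r i|

/-- The common contraction ratio of all words of a given type. -/
def rM (τ : Multiset Λ) : ℝ := (τ.map Q.r).prod

/-- The words of type `τ` contract by about `2^{-aM τ}`. -/
def aM (τ : Multiset Λ) : ℕ := ⌊-Real.log |Q.rM τ| / Real.log 2⌋₊

/-- The translation part of a word, discretized at scale `2^{-N}`. -/
def Y (N : ℕ) (w : List Λ) : ℤ := ⌊2 ^ N * ss Q.r Q.s w⌋

/-- The type of a word together with its translation part discretized at the scale of its
contraction. -/
def κ (N : ℕ) (w : List Λ) : Multiset Λ × ℤ := (w, Q.Y N w / 2 ^ (N - Q.aM w))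

variable {Q}

theorem rM_coe (w : List Λ) : Q.rM w = rr Q.r w := by simp [rM, rr]

theorem log_rr (w : List Λ) : -Real.log |rr Q.r w| = Lg Q.lg w := by
  induction w with
  | nil => simp [rr, Lg]
  | cons i w ih =>
    have h1 : rr Q.r (i :: w) = Q.r i * rr Q.r w := by simp [rr]
    have h2 : Lg Q.lg (i :: w) = Q.lg i + Lg Q.lg w := by simp [Lg]
    rw [h1, h2, abs_mul, Real.log_mul (Q.hr0 i).ne' (rr_pos w).ne', ← ih, lg]; ring

theorem lg_pos (i : Λ) : 0 < Q.lg i := by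
  have := Real.log_neg (Q.hr0 i) (Q.hr1 i)
  rw [lg]; linarith

theorem Lg_nonneg (w : List Λ) : 0 ≤ Lg Q.lg w := by
  rw [← log_rr]
  have := Real.log_nonpos (abs_nonneg _) (Q.rr_le_one w)
  linarith

theorem aM_coe (w : List Λ) : Q.aM w = ⌊Lg Q.lg w / Real.log 2⌋₊ := by
  rw [aM, rM_coe, log_rr]

theorem log2_pos : 0 < Real.log 2 := Real.log_pos (by norm_num)

theorem aM_le (w : List Λ) : (Q.aM w : ℝ) ≤ Lg Q.lg w / Real.log 2 := by
  rw [aM_coe]; exact Nat.floor_le (div_nonneg (Q.Lg_nonneg w) log2_pos.le)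

theorem lt_aM (w : List Λ) : Lg Q.lg w / Real.log 2 < Q.aM w + 1 := by
  rw [aM_coe]; exact Nat.lt_floor_add_one _

theorem rr_le_pow (w : List Λ) : |rr Q.r w| ≤ 2⁻¹ ^ Q.aM w := by
  rw [← Real.log_le_log_iff (rr_pos w) (by positivity), Real.log_pow, Real.log_inv]
  have h := Q.aM_le w
  rw [le_div_iff₀ log2_pos, ← log_rr] at h
  linarith

theorem pow_le_rr (w : List Λ) : 2⁻¹ ^ Q.aM w ≤ ((2 : ℕ) : ℝ) * |rr Q.r w| := by
  have h0 := Q.rr_pos w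
  push_cast
  rw [← Real.log_le_log_iff (by positivity) (by positivity), Real.log_pow, Real.log_inv,
    Real.log_mul (by norm_num) h0.ne']
  have h := Q.lt_aM w
  rw [div_lt_iff₀ log2_pos, ← log_rr] at h
  linarith

theorem Lg_le {q : ℕ} (hq : ∀ i, 2⁻¹ ^ q ≤ |Q.r i|) (w : List Λ) :
    Lg Q.lg w ≤ (q * w.length : ℕ) * Real.log 2 := by
  induction w with
  | nil => simp [Lg]
  | cons i w ih =>
    have h2 : Lg Q.lg (i :: w) = Q.lg i + Lg Q.lg w := by simp [Lg]
    have h3 := Real.log_le_log (by positivity) (hq i)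
    rw [Real.log_pow, Real.log_inv] at h3
    rw [h2, List.length_cons, lg]
    push_cast at ih ⊢
    linarith

theorem aM_le_mul {q : ℕ} (hq : ∀ i, 2⁻¹ ^ q ≤ |Q.r i|) (w : List Λ) : Q.aM w ≤ q * w.length := by
  have h1 := Q.aM_le w
  have h2 := Lg_le hq w
  have h3 : (Q.aM w : ℝ) ≤ (q * w.length : ℕ) := by
    refine h1.trans ?_
    rwa [div_le_iff₀ log2_pos]
  exact_mod_cast h3

/-- Sum of the discretized translation part and the discretized contracted point. -/
def Z' (Q : Sys Λ) (N : ℕ) (q : List Λ × ℤ) : ℤ := Q.Y N q.1 + ⌊rr Q.r q.1 * q.2⌋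

theorem Z'_close (N : ℕ) (q : List Λ × ℤ) : Q.Z' N q ≤ Q.Zt N q ∧ Q.Zt N q ≤ Q.Z' N q + 1 := by
  unfold Z' Zt Y
  constructor
  · rw [add_comm]; exact Int.le_floor_add _ _
  ·
    have := Int.le_floor_add_floor (rr Q.r q.1 * q.2) (2 ^ N * ss Q.r Q.s q.1)
    omega

/-- The image point `Z'`, being close to a `μ`-random point, has about the entropy of `μ`. -/
theorem Ent_Z'_le (n N : ℕ) :
    Ent ((prodF (W Q.p n) (Q.lam N)).mapDomain fun q => Q.Z' N q) ≤
      Q.e N + Real.log 5 + Real.log 3 := by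
  have h1 := SS2 (Q.rep_W n) N 0
  have h2 := Ent_coarse (fun q => Q.Zt N q) (fun q => Q.Z' N q) (prodF (W Q.p n) (Q.lam N)) 1
    fun q _ q' _ h => by
      have a1 := Q.Z'_close N q
      have a2 := Q.Z'_close N q'
      rw [abs_le]; constructor <;> push_cast <;> omega
  have e0 : (fun z : ℤ => z / 2 ^ 0) = id := by funext z; simp
  have e0' : (fun q : List Λ × ℤ => Q.Zt N q / 2 ^ 0) = fun q => Q.Zt N q := by funext z; simp
  rw [e0, e0', Finsupp.mapDomain_id] at h1
  rw [mass_prodF, mass_W _ Q.hp1, mass_lam] at h2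
  have h1' : Ent ((prodF (W Q.p n) (Q.lam N)).mapDomain fun q => Q.Zt N q) ≤ Q.e N + Real.log 5 := h1
  norm_num at h2
  linarith

theorem rk_le {N : ℕ} {w : List Λ} {k : ℤ} (ha : Q.aM w ≤ N) (hk : |k| ≤ Q.R * 2 ^ N) :
    |rr Q.r w * k| ≤ Q.R * 2 ^ (N - Q.aM w) := by
  have hk' : |(k : ℝ)| ≤ Q.R * 2 ^ N := by exact_mod_cast hk
  rw [abs_mul]
  calc |rr Q.r w| * |(k : ℝ)| ≤ 2⁻¹ ^ Q.aM w * (Q.R * 2 ^ N) :=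
        mul_le_mul (rr_le_pow w) hk' (abs_nonneg _) (by positivity)
    _ = Q.R * 2 ^ (N - Q.aM w) := by
        conv_lhs => rw [← Nat.sub_add_cancel ha, pow_add]
        rw [inv_pow]; field_simp

/-- Adjoining the coarse cell of the translation part to `Z'` costs little entropy. -/
theorem Ent_κZ'_le {q n : ℕ} (hq : ∀ i, 2⁻¹ ^ q ≤ |Q.r i|) :
    Ent ((prodF (W Q.p n) (Q.lam (q * n))).mapDomain fun x => (Q.κ (q * n) x.1, Q.Z' (q * n) x)) ≤
      Q.e (q * n) + Fintype.card Λ * Real.log (n + 1) +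
        (Real.log 5 + Real.log 3 + Real.log (4 * Q.R + 5)) := by
  set N := q * n with hN
  set F := prodF (W Q.p n) (Q.lam N) with hF
  have hm : mass F = 1 := by rw [hF, mass_prodF, mass_W _ Q.hp1, mass_lam, one_mul]
  have h1 := Ent_coarse_pair (fun x : List Λ × ℤ => ((x.1 : Multiset Λ), Q.Z' N x))
    (fun x => Q.Y N x.1 / 2 ^ (N - Q.aM x.1)) F (fun _ => 2 * Q.R + 2) ?_
  · have h2 := Ent_comp_le (fun x : List Λ × ℤ => (((x.1 : Multiset Λ), Q.Z' N x),
      Q.Y N x.1 / 2 ^ (N - Q.aM x.1))) (fun y => ((y.1.1, y.2), y.1.2)) F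
    have h3 := Ent_pair_le (fun x : List Λ × ℤ => (x.1 : Multiset Λ)) (fun x => Q.Z' N x) F
    have h4 := Q.Ent_Z'_le n N
    have h5 := Ent_type_le Q.p Q.hp1 n
    rw [← map_comp_fst (W Q.p n) (Q.lam N) (mass_lam N)] at h5
    rw [ex_const, hm, one_mul] at h1
    have e : (2 * ((2 * Q.R + 2 : ℕ) : ℝ) + 1) = 4 * Q.R + 5 := by push_cast; ring
    rw [e] at h1
    have h2' : Ent (F.mapDomain fun x => (Q.κ N x.1, Q.Z' N x)) ≤ _ := h2
    linarith
  · intro x hx x' hx' h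
    rw [Prod.mk.injEq] at h
    obtain ⟨m1, m2⟩ := mem_prodF hx
    obtain ⟨m1', m2'⟩ := mem_prodF hx'
    have ha : Q.aM x.1 ≤ N := (aM_le_mul hq x.1).trans (by rw [length_of_mem_W m1])
    have ha' : Q.aM x'.1 ≤ N := (aM_le_mul hq x'.1).trans (by rw [length_of_mem_W m1'])
    have b1 := rk_le ha (lam_supp _ m2)
    have b2 := rk_le ha' (lam_supp _ m2')
    rw [h.1] at b1 ⊢
    set j := N - Q.aM x'.1
    rw [idiv_eq_floor, idiv_eq_floor]
    apply floor_close
    have hj : (0 : ℝ) < 2 ^ j := by positivity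
    have hj1 : (1 : ℝ) ≤ 2 ^ j := one_le_pow₀ (by norm_num)
    rw [← sub_div, abs_div, abs_of_pos hj, div_le_iff₀ hj]
    have h6 : Q.Y N x.1 - Q.Y N x'.1 = ⌊rr Q.r x'.1 * x'.2⌋ - ⌊rr Q.r x.1 * x.2⌋ := by
      have := h.2; unfold Z' at this; omega
    have h7 : (Q.Y N x.1 : ℝ) - Q.Y N x'.1 = ⌊rr Q.r x'.1 * x'.2⌋ - ⌊rr Q.r x.1 * x.2⌋ := by
      exact_mod_cast h6
    rw [h7]
    have f1 := Int.floor_le (rr Q.r x.1 * x.2)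
    have f2 := Int.lt_floor_add_one (rr Q.r x.1 * x.2)
    have f3 := Int.floor_le (rr Q.r x'.1 * x'.2)
    have f4 := Int.lt_floor_add_one (rr Q.r x'.1 * x'.2)
    rw [abs_le] at b1 b2 ⊢
    push_cast
    constructor <;> nlinarith

end Sys

end EntDim

/-! ### The inverse theorem on the fibres of `κ` -/

namespace EntDim

open scoped NNReal
open Real (negMulLog)

namespace Sys

variable {Λ : Type*} [Fintype Λ] {Q : Sys Λ}

/-- The discretized measure contracted by the ratio of the type `τ`. -/
def fk (Q : Sys Λ) (N : ℕ) (τ : Multiset Λ) : ℤ →₀ ℝ≥0 :=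
  (Q.lam N).mapDomain fun k : ℤ => ⌊Q.rM τ * k⌋

/-- The law of the translation part on the event that `κ` equals `k`. -/
def θ (Q : Sys Λ) (N n : ℕ) (k : Multiset Λ × ℤ) : ℤ →₀ ℝ≥0 :=
  (fib (Q.κ N) k (W Q.p n)).mapDomain (Q.Y N)

theorem mass_fk (N : ℕ) (τ : Multiset Λ) : mass (Q.fk N τ) = 1 := by
  rw [fk, mass_mapDomain, mass_lam]

theorem lam_div' {N b : ℕ} (h : b ≤ N) : (Q.lam N).mapDomain (· / 2 ^ b) = Q.lam (N - b) := by
  have := Q.lam_div (N - b) b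
  rwa [Nat.sub_add_cancel h] at this

theorem fk_div (N j : ℕ) (w : List Λ) : (Q.fk N w).mapDomain (· / 2 ^ j) =
    (Q.lam N).mapDomain fun k : ℤ => ⌊rr Q.r w * k + 0⌋ / 2 ^ j := by
  rw [fk, ← Finsupp.mapDomain_comp, rM_coe]
  simp only [add_zero]; rfl

theorem fk_ge {N j : ℕ} {w : List Λ} (h : Q.aM w + j ≤ N) :
    Q.e (N - (Q.aM w + j)) ≤ Ent ((Q.fk N w).mapDomain (· / 2 ^ j)) + Real.log 5 := by
  have h1 := affine_ge (Q.lam N) (c := 0) (j := j) (Q.pow_le_rr w)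
  rw [lam_div' h, mass_lam] at h1
  rw [fk_div]
  norm_num at h1
  simpa [e] using h1

theorem fk_le {N j : ℕ} {w : List Λ} (h : Q.aM w + j ≤ N) :
    Ent ((Q.fk N w).mapDomain (· / 2 ^ j)) ≤ Q.e (N - (Q.aM w + j)) + Real.log 3 := by
  have h1 := affine_le (Q.lam N) (c := 0) (j := j) (Q.rr_le_pow w)
  rw [lam_div' h, mass_lam, one_mul] at h1
  rw [fk_div]
  exact h1

theorem div_zero_pow (f : ℤ →₀ ℝ≥0) : f.mapDomain (· / 2 ^ 0) = f := by
  have e0 : (fun z : ℤ => z / 2 ^ 0) = id := by funext z; simp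
  rw [e0, Finsupp.mapDomain_id]

/-- Given `κ`, the image point `Z'` is the sum of two independent variables of laws `θ` and `fk`;
so its entropy is that of `κ`, plus the growth terms, plus the entropy of the contracted copies of
`μ`, and altogether this is at most the entropy of `μ` at scale `2^{-qn}`, up to `O(log n)`. -/
theorem stepC {q n : ℕ} (hq : ∀ i, 2⁻¹ ^ q ≤ |Q.r i|) :
    Ent ((W Q.p n).mapDomain (Q.κ (q * n))) +
      ∑ k ∈ (W Q.p n).support.image (Q.κ (q * n)), Gr (Q.fk (q * n) k.1) (Q.θ (q * n) n k) +
      ex (W Q.p n) (fun w => Q.e (q * n - Q.aM w)) ≤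
    Q.e (q * n) + Fintype.card Λ * Real.log (n + 1) +
        (2 * Real.log 5 + Real.log 3 + Real.log (4 * Q.R + 5)) := by
  set N := q * n with hN
  set F := prodF (W Q.p n) (Q.lam N) with hF
  set K := (W Q.p n).support.image (Q.κ N) with hK
  have hKmem : ∀ w ∈ (W Q.p n).support, Q.κ N w ∈ K := fun w hw => Finset.mem_image_of_mem _ hw
  have h1 := Q.Ent_κZ'_le (n := n) hq
  rw [← hN, ← hF] at h1
  have h2 := chain_pair (fun x : List Λ × ℤ => Q.κ N x.1) (fun x => Q.Z' N x) F (K := K)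
    fun x hx => hKmem _ (mem_prodF hx).1
  have h2' : Ent (F.mapDomain fun x => (Q.κ N x.1, Q.Z' N x)) =
      Ent (F.mapDomain fun x => Q.κ N x.1) +
      ∑ k ∈ K, Ent ((fib (fun x : List Λ × ℤ => Q.κ N x.1) k F).mapDomain fun x => Q.Z' N x) := h2
  rw [h2', hF, map_comp_fst _ _ (mass_lam N)] at h1
  have h3 : ∀ k ∈ K, Ent ((fib (fun x : List Λ × ℤ => Q.κ N x.1) k F).mapDomain fun x => Q.Z' N x) =
      mass (fib (Q.κ N) k (W Q.p n)) * Ent (Q.fk N k.1) + Gr (Q.fk N k.1) (Q.θ N n k) := by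
    intro k _
    have : (fib (fun x : List Λ × ℤ => Q.κ N x.1) k F).mapDomain (fun x => Q.Z' N x) =
        conv (Q.θ N n k) (Q.fk N k.1) := by
      rw [hF, fib_prodF, θ, fk, ← map_add_conv]
      refine mapDomain_congr' fun x hx => ?_
      have hk := (mem_fib (mem_prodF hx).1).2
      rw [← hk, Z', κ, rM_coe]
    rw [this, Gr, θ, mass_mapDomain]; ring
  rw [Finset.sum_congr rfl h3, Finset.sum_add_distrib] at h1
  have h4 : ex (W Q.p n) (fun w => Q.e (N - Q.aM w)) - Real.log 5 ≤
      ∑ k ∈ K, mass (fib (Q.κ N) k (W Q.p n)) * Ent (Q.fk N k.1) := by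
    have e1 := ex_sum_filter (Q.κ N) (W Q.p n) (fun w => Ent (Q.fk N w)) hKmem
    have e1' : ex (W Q.p n) (fun w => Ent (Q.fk N w)) =
      ∑ k ∈ K, ex (fib (Q.κ N) k (W Q.p n)) (fun w => Ent (Q.fk N w)) := e1
    have e2 : ∀ k ∈ K, ex (fib (Q.κ N) k (W Q.p n)) (fun w => Ent (Q.fk N w)) =
        mass (fib (Q.κ N) k (W Q.p n)) * Ent (Q.fk N k.1) := fun k _ => by
      rw [← ex_const]
      refine ex_congr fun w hw => ?_
      rw [← (mem_fib hw).2, κ]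
    rw [← Finset.sum_congr rfl e2, ← e1']
    have e3 := ex_mono (f := W Q.p n) (φ := fun w => Q.e (N - Q.aM w))
      (ψ := fun w => Ent (Q.fk N w) + Real.log 5) fun w hw => by
        have ha : Q.aM w + 0 ≤ N := (aM_le_mul hq w).trans (by rw [length_of_mem_W hw])
        have := fk_ge ha
        rwa [div_zero_pow] at this
    rw [ex_add_fun, ex_const, mass_W _ Q.hp1, one_mul] at e3
    linarith
  linarith

/-- The inverse theorem applied to the contracted copies of the self-similar measure. -/
theorem invstep {E C0 : ℝ} (hE0 : 0 ≤ E) (hE : E < Real.log 2)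
    (hsup : ∀ a b, Q.e a + Q.e b ≤ Q.e (a + b) + C0) (hub : ∀ N : ℕ, Q.e N ≤ E * N + C0)
    (hlb : ∀ η > 0, ∃ K, ∀ m : ℕ, (E - η) * m - K ≤ Q.e m) {ε : ℝ} (hε : 0 < ε) :
    ∃ C : ℝ, 0 ≤ C ∧ ∀ (N : ℕ) (w : List Λ), Q.aM w ≤ N → ∀ (θ : ℤ →₀ ℝ≥0) (lo : ℤ),
      (∀ y ∈ θ.support, lo ≤ y ∧ y ≤ lo + 2 ^ (N - Q.aM w)) →
      Ent θ ≤ (ε * N + C) * mass θ + C * Gr (Q.fk N w) θ := by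
  have l3 : 0 ≤ Real.log 3 := Real.log_nonneg (by norm_num)
  have l5 : 0 ≤ Real.log 5 := Real.log_nonneg (by norm_num)
  have l2 := log2_pos
  obtain ⟨C, hC0, hC⟩ := inverse_thm E hE0 hE Q.e hlb
    (C0 + Real.log 2 + 2 * Real.log 3 + Real.log 5) 1 ε hε
  refine ⟨C, hC0, fun N w ha θ lo hθ => ?_⟩
  have key := hC (N - Q.aM w) (Q.fk N w) (mass_fk _ _) ?_ ?_ θ lo ?_
  · refine key.trans ?_
    have h1 : ((N - Q.aM w : ℕ) : ℝ) ≤ N := by exact_mod_cast Nat.sub_le _ _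
    have h2 := mass_nonneg θ
    have : ε * ((N - Q.aM w : ℕ) : ℝ) ≤ ε * N := mul_le_mul_of_nonneg_left h1 hε.le
    nlinarith
  · intro j m hjm
    have u := conv_uu_upper (Q.fk N w) (mass_fk _ _) (j + m)
    have l := conv_uu_lower (Q.fk N w) (mass_fk _ _) j
    have u' := fk_le (Q := Q) (N := N) (j := j + m) (w := w) (by omega)
    have l' := fk_ge (Q := Q) (N := N) (j := j) (w := w) (by omega)
    have s := hsup (N - (Q.aM w + (j + m))) m
    rw [show N - (Q.aM w + (j + m)) + m = N - (Q.aM w + j) by omega] at s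
    push_cast at u
    linarith
  · have u' := fk_le (Q := Q) (N := N) (j := 0) (w := w) (by omega)
    rw [div_zero_pow, add_zero] at u'
    have := hub (N - Q.aM w)
    linarith
  · intro y hy
    have := hθ y hy
    push_cast
    rwa [one_mul]

end Sys

end EntDim

/-! ### Lyapunov exponent and the typical contraction scale -/

namespace EntDim

open scoped NNReal
open Real (negMulLog)

namespace Sys

variable {Λ : Type*} [Fintype Λ] {Q : Sys Λ}

/-- The Lyapunov exponent `-∑ p_i log |r_i|`. -/
def χ (Q : Sys Λ) : ℝ := ∑ i, (Q.p i : ℝ) * Q.lg i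

/-- The entropy of the probability vector. -/
def h (Q : Sys Λ) : ℝ := ∑ i, negMulLog (Q.p i : ℝ)

theorem sum_p : ∑ i, (Q.p i : ℝ) = 1 := by exact_mod_cast Q.hp1

theorem χ_pos : 0 < Q.χ := by
  have := Q.nonempty
  exact Finset.sum_pos (fun i _ => mul_pos (by exact_mod_cast Q.hp i) (lg_pos i))
    Finset.univ_nonempty

theorem lg_le {q : ℕ} (hq : ∀ i, 2⁻¹ ^ q ≤ |Q.r i|) (i : Λ) : Q.lg i ≤ q * Real.log 2 := by
  have h3 := Real.log_le_log (by positivity) (hq i)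
  rw [Real.log_pow, Real.log_inv] at h3
  rw [lg]; linarith

theorem χ_le {q : ℕ} (hq : ∀ i, 2⁻¹ ^ q ≤ |Q.r i|) : Q.χ ≤ q * Real.log 2 := by
  have : Q.χ ≤ ∑ i, (Q.p i : ℝ) * (q * Real.log 2) :=
    Finset.sum_le_sum fun i _ => mul_le_mul_of_nonneg_left (lg_le hq i) (Q.p i).2
  rwa [← Finset.sum_mul, sum_p, one_mul] at this

/-- A weak law of large numbers for the contraction ratio. -/
theorem ex_dev_le {n : ℕ} (hn : 1 ≤ n) {δ : ℝ} (hδ : 0 < δ) :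
    ex (W Q.p n) (fun w => |Lg Q.lg w - n * Q.χ|) ≤
      (∑ i, (Q.p i : ℝ) * (Q.lg i - Q.χ) ^ 2) / (2 * δ) + δ * n / 2 := by
  set l' : Λ → ℝ := fun i => Q.lg i - Q.χ with hl'
  have hz : ∑ i, (Q.p i : ℝ) * l' i = 0 := by
    simp only [hl', mul_sub, Finset.sum_sub_distrib, ← Finset.sum_mul, sum_p, one_mul]
    rw [← χ]; ring
  have hLg : ∀ w : List Λ, Lg l' w = Lg Q.lg w - w.length * Q.χ := fun w => by
    induction w with
    | nil => simp [Lg]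
    | cons i w ih =>
      have h2 : Lg Q.lg (i :: w) = Q.lg i + Lg Q.lg w := by simp [Lg]
      have h3 : Lg l' (i :: w) = l' i + Lg l' w := by simp [Lg]
      rw [h2, h3, ih, List.length_cons]; push_cast; simp only [hl']; ring
  have hn' : (0 : ℝ) < n := by exact_mod_cast hn
  have h1 : ex (W Q.p n) (fun w => |Lg Q.lg w - n * Q.χ|) ≤
      ex (W Q.p n) (fun w => (1 / (2 * δ * n)) * Lg l' w ^ 2 + δ * n / 2) := by
    refine ex_mono fun w hw => ?_
    have : Lg Q.lg w - n * Q.χ = Lg l' w := by rw [hLg, length_of_mem_W hw]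
    rw [this, ← sq_abs]
    set x := |Lg l' w|
    have h2 : 1 / (2 * δ * n) * x ^ 2 + δ * n / 2 - x = (x - δ * n) ^ 2 / (2 * δ * n) := by
      field_simp; ring
    have h3 : 0 ≤ (x - δ * n) ^ 2 / (2 * δ * n) := by positivity
    linarith
  refine h1.trans (le_of_eq ?_)
  rw [ex_add_fun, ex_const_mul, ex_const, mass_W _ Q.hp1, ex_Lg_sq _ Q.hp1 _ hz]
  simp only [hl']
  field_simp

theorem Y_cell {N j : ℕ} {w w' : List Λ} (h : Q.Y N w / 2 ^ j = Q.Y N w' / 2 ^ j) :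
    |2 ^ N * ss Q.r Q.s w - 2 ^ N * ss Q.r Q.s w'| ≤ 2 ^ j := by
  unfold Y at h
  rw [floor_div_pow, floor_div_pow] at h
  have := abs_lt_of_floor_eq h
  have hj : (0 : ℝ) < 2 ^ j := by positivity
  rw [← sub_div, abs_div, abs_of_pos hj, div_lt_one hj] at this
  exact this.le

/-- The entropy of `κ` is at least the entropy of the measure at the typical contraction scale. -/
theorem stepD {q n : ℕ} (hq : ∀ i, 2⁻¹ ^ q ≤ |Q.r i|) :
    Q.e ⌊n * Q.χ / Real.log 2⌋₊ ≤ Ent ((W Q.p n).mapDomain (Q.κ (q * n))) +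
      (Real.log 5 + Real.log (4 * Q.R + 5) + Real.log 2) +
      ex (W Q.p n) (fun w => |Lg Q.lg w - n * Q.χ|) := by
  set N := q * n with hN
  set F := prodF (W Q.p n) (Q.lam N) with hF
  set k0 := ⌊n * Q.χ / Real.log 2⌋₊ with hk0
  have l2 := log2_pos
  have hk0le : (k0 : ℝ) ≤ n * Q.χ / Real.log 2 :=
    Nat.floor_le (div_nonneg (mul_nonneg (Nat.cast_nonneg _) χ_pos.le) l2.le)
  have hk0N : k0 ≤ N := by
    have : (k0 : ℝ) ≤ N := by
      refine hk0le.trans ?_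
      rw [div_le_iff₀ l2, hN]; push_cast
      have := mul_le_mul_of_nonneg_left (Q.χ_le hq) (Nat.cast_nonneg (α := ℝ) n)
      linarith
    exact_mod_cast this
  have h1 := SS1 (Q.rep_W n) N (N - k0)
  rw [lam_div' (Nat.sub_le _ _), Nat.sub_sub_self hk0N, ← hF] at h1
  have h2 := Ent_coarse_pair (fun x : List Λ × ℤ => Q.κ N x.1)
    (fun x => Q.Zt N x / 2 ^ (N - k0)) F
    (fun k => (2 * Q.R + 2) * 2 ^ (k0 - Q.aM k.1)) ?_
  · have h3 := Ent_comp_le (fun x : List Λ × ℤ => (Q.κ N x.1, Q.Zt N x / 2 ^ (N - k0)))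
      Prod.snd F
    have h3' : Ent (F.mapDomain fun x => Q.Zt N x / 2 ^ (N - k0)) ≤ _ := h3
    rw [hF, map_comp_fst _ _ (mass_lam N), ← hF] at h2
    have h4 : ex F (fun x => Real.log (2 * ((2 * Q.R + 2) * 2 ^ (k0 - Q.aM x.1) : ℕ) + 1)) ≤
        ex F (fun x => (Real.log (4 * Q.R + 5) + Real.log 2) + |Lg Q.lg x.1 - n * Q.χ|) := by
      refine ex_mono fun x _ => ?_
      set m := k0 - Q.aM x.1 with hm
      have c1 : (2 * (((2 * Q.R + 2) * 2 ^ m : ℕ) : ℝ) + 1) ≤ (4 * Q.R + 5) * 2 ^ m := by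
        push_cast
        have : (1 : ℝ) ≤ 2 ^ m := one_le_pow₀ (by norm_num)
        nlinarith
      have c2 := Real.log_le_log (by positivity) c1
      rw [Real.log_mul (by positivity) (by positivity), Real.log_pow] at c2
      refine c2.trans ?_
      rw [add_assoc]
      refine add_le_add_right ?_ _
      rcases Nat.le_total k0 (Q.aM x.1) with hle | hle
      · rw [hm, Nat.sub_eq_zero_of_le hle]; push_cast
        have := abs_nonneg (Lg Q.lg x.1 - n * Q.χ); linarith
      · rw [hm, Nat.cast_sub hle]
        have d1 := Q.lt_aM x.1
        rw [div_lt_iff₀ l2] at d1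
        rw [le_div_iff₀ l2] at hk0le
        have := neg_abs_le (Lg Q.lg x.1 - n * Q.χ)
        nlinarith
    have h5 := (ex_comp_fst (W Q.p n) (Q.lam N) (mass_lam N)
      (fun w => (Real.log (4 * Q.R + 5) + Real.log 2) + |Lg Q.lg w - n * Q.χ|)).trans
      (ex_add_fun _ _ _)
    rw [ex_const, mass_W _ Q.hp1, one_mul, ← hF] at h5
    rw [h5] at h4
    have h2' : Ent (F.mapDomain fun x => (Q.κ N x.1, Q.Zt N x / 2 ^ (N - k0))) ≤
      Ent ((W Q.p n).mapDomain (Q.κ N)) +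
      ex F (fun x => Real.log (2 * ((2 * Q.R + 2) * 2 ^ (k0 - Q.aM x.1) : ℕ) + 1)) := h2
    have h1' : Q.e k0 ≤ Ent (F.mapDomain fun x => Q.Zt N x / 2 ^ (N - k0)) + Real.log 5 := h1
    linarith
  · intro x hx x' hx' h
    have hτ : (x.1 : Multiset Λ) = x'.1 := congrArg Prod.fst h
    have hc : Q.Y N x.1 / 2 ^ (N - Q.aM x.1) = Q.Y N x'.1 / 2 ^ (N - Q.aM x'.1) :=
      congrArg Prod.snd h
    obtain ⟨m1, m2⟩ := mem_prodF hx
    obtain ⟨m1', m2'⟩ := mem_prodF hx'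
    have ha : Q.aM x.1 ≤ N := (aM_le_mul hq x.1).trans (by rw [length_of_mem_W m1])
    have ha' : Q.aM x'.1 ≤ N := (aM_le_mul hq x'.1).trans (by rw [length_of_mem_W m1'])
    have b1 := rk_le ha (lam_supp _ m2)
    have b2 := rk_le ha' (lam_supp _ m2')
    have hD : Q.aM (Q.κ N x.1).1 = Q.aM x.1 := rfl
    rw [hD]
    rw [← hτ] at b2 hc
    have b3 := Y_cell hc
    set a := Q.aM x.1
    simp only [Zt]
    rw [floor_div_pow, floor_div_pow]
    apply floor_close
    have hj : (0 : ℝ) < 2 ^ (N - k0) := by positivity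
    rw [← sub_div, abs_div, abs_of_pos hj, div_le_iff₀ hj]
    have hpow : (2 : ℝ) ^ (N - a) ≤ 2 ^ (k0 - a) * 2 ^ (N - k0) := by
      rw [← pow_add]; exact pow_le_pow_right₀ (by norm_num) (by omega)
    have hp1 : (0 : ℝ) < 2 ^ (N - a) := by positivity
    have : |rr Q.r x.1 * x.2 + 2 ^ N * ss Q.r Q.s x.1 -
        (rr Q.r x'.1 * x'.2 + 2 ^ N * ss Q.r Q.s x'.1)| ≤ (2 * Q.R + 2) * 2 ^ (N - a) := by
      rw [abs_le] at b1 b2 b3 ⊢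
      constructor <;> nlinarith
    push_cast
    calc _ ≤ _ := this
      _ ≤ (2 * Q.R + 2) * (2 ^ (k0 - a) * 2 ^ (N - k0)) :=
        mul_le_mul_of_nonneg_left hpow (by positivity)
      _ = _ := by ring

end Sys

end EntDim

/-! ### Concentration of the translation parts -/

namespace EntDim

open scoped NNReal
open Real (negMulLog)

theorem log_small (A B : ℝ) {c : ℝ} (hc : 0 < c) :
    ∃ n0 : ℕ, ∀ n : ℕ, n0 ≤ n → A * Real.log (n + 1) + B ≤ c * n := by
  set c' := c / (2 * (|A| + 1)) with hc'
  have hA := abs_nonneg A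
  have hc'0 : 0 < c' := by positivity
  have ht : Tendsto (fun n : ℕ => (n : ℝ) + 1) atTop atTop :=
    tendsto_atTop_add_const_right _ _ tendsto_natCast_atTop_atTop
  have h1 := (Real.isLittleO_log_id_atTop.comp_tendsto ht).def hc'0
  obtain ⟨n1, hn1⟩ := eventually_atTop.1 h1
  obtain ⟨n2, hn2⟩ := exists_nat_ge ((B + c / 2) / (c / 2))
  refine ⟨max n1 n2, fun n hn => ?_⟩
  have e1 := hn1 n ((le_max_left _ _).trans hn)
  have e2 : (n2 : ℝ) ≤ n := by exact_mod_cast (le_max_right _ _).trans hn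
  have hn0 : (0 : ℝ) ≤ n := Nat.cast_nonneg n
  simp only [Function.comp, id, Real.norm_eq_abs] at e1
  rw [abs_of_nonneg (Real.log_nonneg (by linarith)), abs_of_nonneg (by linarith)] at e1
  have e3 : (B + c / 2) ≤ (c / 2) * n := by
    have := hn2.trans e2
    rw [div_le_iff₀ (by positivity)] at this; linarith
  have hlog := Real.log_nonneg (by linarith : (1 : ℝ) ≤ n + 1)
  have e4 : A * Real.log (n + 1) ≤ c / 2 * (n + 1) := by
    calc A * Real.log (n + 1) ≤ (|A| + 1) * Real.log (n + 1) :=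
          mul_le_mul_of_nonneg_right (by linarith [le_abs_self A]) hlog
      _ ≤ (|A| + 1) * (c' * (n + 1)) := mul_le_mul_of_nonneg_left e1 (by linarith)
      _ = c / 2 * (n + 1) := by rw [hc']; field_simp
  linarith

namespace Sys

variable {Λ : Type*} [Fintype Λ] {Q : Sys Λ}

/-- The total entropy growth of the translation parts under convolution with the contracted
measure. -/
def G (Q : Sys Λ) (N n : ℕ) : ℝ :=
  ∑ k ∈ (W Q.p n).support.image (Q.κ N), Gr (Q.fk N k.1) (Q.θ N n k)

theorem G_nonneg (N n : ℕ) : 0 ≤ Q.G N n :=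
  Finset.sum_nonneg fun k _ => Gr_nonneg _ _

/-- `stepC` with `e m ≈ E m` inserted: the entropy of `κ` plus the total growth is at most about
`nEχ/log 2`. -/
theorem upperHG {E C0 : ℝ} (hE0 : 0 ≤ E) (hub : ∀ N : ℕ, Q.e N ≤ E * N + C0)
    {η K : ℝ} (hη : 0 < η) (hK : ∀ m : ℕ, (E - η) * m - K ≤ Q.e m)
    {q n : ℕ} (hq : ∀ i, 2⁻¹ ^ q ≤ |Q.r i|) :
    Ent ((W Q.p n).mapDomain (Q.κ (q * n))) + Q.G (q * n) n ≤
      E * Q.χ / Real.log 2 * n + η * q * n + Fintype.card Λ * Real.log (n + 1) +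
      (C0 + K + (2 * Real.log 5 + Real.log 3 + Real.log (4 * Q.R + 5))) := by
  have h1 := Q.stepC (n := n) hq
  rw [← G] at h1
  have h2 := hub (q * n)
  have h3 : ex (W Q.p n) (fun w => (E * (q * n) - η * (q * n) - K) +
      (-(E / Real.log 2)) * Lg Q.lg w) ≤ ex (W Q.p n) (fun w => Q.e (q * n - Q.aM w)) := by
    refine ex_mono fun w hw => ?_
    have ha : Q.aM w ≤ q * n := (aM_le_mul hq w).trans (by rw [length_of_mem_W hw])
    refine le_trans ?_ (hK (q * n - Q.aM w))
    have h4 := mul_le_mul_of_nonneg_left (Q.aM_le w) hE0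
    rw [Nat.cast_sub ha]; push_cast
    have h5 : E * (Lg Q.lg w / Real.log 2) = E / Real.log 2 * Lg Q.lg w := by ring
    have h6 : 0 ≤ η * Q.aM w := by positivity
    nlinarith
  rw [ex_add_fun, ex_const, mass_W _ Q.hp1, ex_const_mul, ex_Lg _ Q.hp1, ← χ] at h3
  push_cast at h2
  have h5 : E / Real.log 2 * (n * Q.χ) = E * Q.χ / Real.log 2 * n := by ring
  linarith

/-- The entropy of `κ` is at least about `nEχ/log 2`; with `upperHG` this makes the total growth
of order `o(n)`. -/
theorem lowerH {E : ℝ} (hE0 : 0 ≤ E)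
    {η K : ℝ} (hη : 0 < η) (hK : ∀ m : ℕ, (E - η) * m - K ≤ Q.e m)
    {q n : ℕ} (hq : ∀ i, 2⁻¹ ^ q ≤ |Q.r i|) (hn : 1 ≤ n) {δ : ℝ} (hδ : 0 < δ) :
    E * Q.χ / Real.log 2 * n ≤ Ent ((W Q.p n).mapDomain (Q.κ (q * n))) + η * q * n + δ * n / 2 +
      (E + K + (Real.log 5 + Real.log (4 * Q.R + 5) + Real.log 2) +
      (∑ i, (Q.p i : ℝ) * (Q.lg i - Q.χ) ^ 2) / (2 * δ)) := by
  have l2 := log2_pos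
  have h1 := Q.stepD (n := n) hq
  have h2 := ex_dev_le (Q := Q) hn hδ
  have h3 := hK ⌊n * Q.χ / Real.log 2⌋₊
  have h4 : (⌊n * Q.χ / Real.log 2⌋₊ : ℝ) ≤ n * Q.χ / Real.log 2 :=
    Nat.floor_le (div_nonneg (mul_nonneg (Nat.cast_nonneg _) χ_pos.le) l2.le)
  have h5 := Nat.lt_floor_add_one (n * Q.χ / Real.log 2)
  have h6 : n * Q.χ / Real.log 2 ≤ q * n := by
    rw [div_le_iff₀ l2]
    have := mul_le_mul_of_nonneg_left (Q.χ_le hq) (Nat.cast_nonneg (α := ℝ) n)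
    linarith
  set k := (⌊n * Q.χ / Real.log 2⌋₊ : ℝ)
  have h7 : E * (n * Q.χ / Real.log 2) ≤ E * (k + 1) := mul_le_mul_of_nonneg_left h5.le hE0
  have h8 : η * k ≤ η * (q * n) := mul_le_mul_of_nonneg_left (h4.trans h6) hη.le
  have h9 : E * (n * Q.χ / Real.log 2) = E * Q.χ / Real.log 2 * n := by ring
  nlinarith

/-- Summing the inverse theorem over the fibres of `κ`. -/
theorem sum_inv {ε C : ℝ}
    (hC : ∀ (N : ℕ) (w : List Λ), Q.aM w ≤ N → ∀ (θ : ℤ →₀ ℝ≥0) (lo : ℤ),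
      (∀ y ∈ θ.support, lo ≤ y ∧ y ≤ lo + 2 ^ (N - Q.aM w)) →
      Ent θ ≤ (ε * N + C) * mass θ + C * Gr (Q.fk N w) θ)
    {q n : ℕ} (hq : ∀ i, 2⁻¹ ^ q ≤ |Q.r i|) :
    Ent ((W Q.p n).mapDomain fun w => (Q.κ (q * n) w, Q.Y (q * n) w)) ≤
      Ent ((W Q.p n).mapDomain (Q.κ (q * n))) + (ε * (q * n) + C) + C * Q.G (q * n) n := by
  set N := q * n with hN
  set K := (W Q.p n).support.image (Q.κ N) with hK
  have hKmem : ∀ w ∈ (W Q.p n).support, Q.κ N w ∈ K := fun w hw => Finset.mem_image_of_mem _ hw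
  have h1 := chain_pair (Q.κ N) (Q.Y N) (W Q.p n) hKmem
  have h1' : Ent ((W Q.p n).mapDomain fun w => (Q.κ N w, Q.Y N w)) =
      Ent ((W Q.p n).mapDomain (Q.κ N)) + ∑ k ∈ K, Ent (Q.θ N n k) := h1
  have hm := mass_sum_filter (Q.κ N) (W Q.p n) hKmem
  have hm' : ∑ k ∈ K, mass (Q.θ N n k) = 1 := by
    rw [← mass_W Q.p Q.hp1 n, ← hm]
    exact Finset.sum_congr rfl fun k _ => mass_mapDomain _ _
  have h2 : ∀ k ∈ K, Ent (Q.θ N n k) ≤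
      (ε * N + C) * mass (Q.θ N n k) + C * Gr (Q.fk N k.1) (Q.θ N n k) := by
    intro k hk
    obtain ⟨w, hw, rfl⟩ := Finset.mem_image.1 hk
    have ha : Q.aM w ≤ N := (aM_le_mul hq w).trans (by rw [length_of_mem_W hw])
    refine hC N w ha _ ((Q.κ N w).2 * 2 ^ (N - Q.aM w)) fun y hy => ?_
    have hy' := support_mapDomain_sub (Q.Y N) (fib (Q.κ N) (Q.κ N w) (W Q.p n))
      (K := (fib (Q.κ N) (Q.κ N w) (W Q.p n)).support.image (Q.Y N))
      (fun s hs => Finset.mem_image_of_mem _ hs) hy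
    obtain ⟨w', hw', rfl⟩ := Finset.mem_image.1 hy'
    have hκ := (mem_fib hw').2
    have hτ : (w' : Multiset Λ) = w := congrArg Prod.fst hκ
    have hc : Q.Y N w' / 2 ^ (N - Q.aM w') = (Q.κ N w).2 := congrArg Prod.snd hκ
    rw [hτ] at hc
    have hp : (0 : ℤ) < 2 ^ (N - Q.aM w) := by positivity
    rw [← hc]
    have d1 := Int.ediv_mul_le (Q.Y N w') hp.ne'
    have d2 := Int.lt_ediv_add_one_mul_self (Q.Y N w') hp
    constructor
    · exact d1
    · linarith
  have h3 := Finset.sum_le_sum h2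
  rw [Finset.sum_add_distrib, ← Finset.mul_sum, ← Finset.mul_sum, hm', mul_one] at h3
  rw [h1', G]
  rw [hN] at h3 ⊢
  push_cast at h3
  linarith

/-- When `E < log 2`, the coarse variable `κ` has entropy at most about `nEχ/log 2`, and, given `κ`,
the translation part of a random word of length `n` has entropy `o(n)` even at the scale `2^{-qn}`. -/
theorem propT {E C0 : ℝ} (hE0 : 0 ≤ E) (hE : E < Real.log 2)
    (hsup : ∀ a b, Q.e a + Q.e b ≤ Q.e (a + b) + C0) (hub : ∀ N : ℕ, Q.e N ≤ E * N + C0)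
    (hlb : ∀ η > 0, ∃ K, ∀ m : ℕ, (E - η) * m - K ≤ Q.e m) {η : ℝ} (hη : 0 < η)
    {q : ℕ} (hq : ∀ i, 2⁻¹ ^ q ≤ |Q.r i|) :
    ∃ n0 : ℕ, ∀ n : ℕ, n0 ≤ n →
      Ent ((W Q.p n).mapDomain (Q.κ (q * n))) ≤ (E * Q.χ / Real.log 2 + η) * n ∧
      Ent ((W Q.p n).mapDomain fun w => (Q.κ (q * n) w, Q.Y (q * n) w)) ≤
        Ent ((W Q.p n).mapDomain (Q.κ (q * n))) + η * n := by
  have hq0 : (0 : ℝ) ≤ q := Nat.cast_nonneg q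
  obtain ⟨C, hC0, hC⟩ := invstep hE0 hE hsup hub hlb (ε := η / (4 * (q + 1))) (by positivity)
  set η' := η / (16 * ((C + 1) * (q + 1))) with hη'
  have hη'0 : 0 < η' := by positivity
  obtain ⟨K, hK⟩ := hlb η' hη'0
  set δ := η / (4 * (C + 1)) with hδ
  have hδ0 : 0 < δ := by positivity
  set K1 := (C0 + K + (2 * Real.log 5 + Real.log 3 + Real.log (4 * Q.R + 5))) with hK1
  set K2 := (E + K + (Real.log 5 + Real.log (4 * Q.R + 5) + Real.log 2) +
      (∑ i, (Q.p i : ℝ) * (Q.lg i - Q.χ) ^ 2) / (2 * δ)) with hK2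
  obtain ⟨n1, hn1⟩ := log_small (Fintype.card Λ) K1 (c := η / 2) (by positivity)
  obtain ⟨n2, hn2⟩ := log_small (C * Fintype.card Λ) (C * (K1 + K2) + C) (c := η / 2) (by positivity)
  refine ⟨max 1 (max n1 n2), fun n hn => ?_⟩
  have hn' : 1 ≤ n := (le_max_left _ _).trans hn
  have a1 := hn1 n ((le_max_left _ _).trans ((le_max_right _ _).trans hn))
  have a2 := hn2 n ((le_max_right _ _).trans ((le_max_right _ _).trans hn))
  have hn0 : (0 : ℝ) ≤ n := Nat.cast_nonneg n
  have u := upperHG hE0 hub hη'0 hK (n := n) hq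
  have l := lowerH hE0 hη'0 hK hq hn' hδ0
  have g0 := Q.G_nonneg (q * n) n
  have s := sum_inv hC (n := n) hq
  rw [← hK1] at u
  rw [← hK2] at l
  set H := Ent ((W Q.p n).mapDomain (Q.κ (q * n)))
  set L := Real.log ((n : ℝ) + 1)
  have hq1 : (q : ℝ) / (q + 1) ≤ 1 := by rw [div_le_one (by positivity)]; linarith
  have hC1 : C / (C + 1) ≤ 1 := by rw [div_le_one (by positivity)]; linarith
  have hCi : 1 / (C + 1) ≤ 1 := by rw [div_le_one (by positivity)]; linarith
  have hqn : η' * q * n ≤ η / 16 * n := by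
    have : η' * q = η / 16 * ((1 / (C + 1)) * (q / (q + 1))) := by rw [hη']; field_simp
    rw [this]
    refine mul_le_mul_of_nonneg_right ?_ hn0
    exact mul_le_of_le_one_right (by positivity) (mul_le_one₀ hCi (by positivity) hq1)
  constructor
  · nlinarith
  · have b1 : Q.G (q * n) n ≤ 2 * (η' * q * n) + δ * n / 2 + (Fintype.card Λ * L + (K1 + K2)) := by
      linarith
    have b2 := mul_le_mul_of_nonneg_left b1 hC0
    have b3 : C * (2 * (η' * q * n)) ≤ η / 8 * n := by
      have : C * (2 * (η' * q * n)) = η / 8 * n * ((C / (C + 1)) * (q / (q + 1))) := by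
        rw [hη']; field_simp; ring
      rw [this]
      exact mul_le_of_le_one_right (by positivity) (mul_le_one₀ hC1 (by positivity) hq1)
    have b4 : C * (δ * n / 2) ≤ η / 8 * n := by
      have : C * (δ * n / 2) = η / 8 * n * (C / (C + 1)) := by rw [hδ]; field_simp; ring
      rw [this]
      exact mul_le_of_le_one_right (by positivity) hC1
    have b5 : η / (4 * (q + 1)) * (q * n) ≤ η / 4 * n := by
      have : η / (4 * (q + 1)) * (q * n) = η / 4 * n * (q / (q + 1)) := by field_simp
      rw [this]
      exact mul_le_of_le_one_right (by positivity) hq1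
    nlinarith

end Sys

end EntDim

/-! ### Comparison of two systems -/

namespace EntDim

open scoped NNReal
open Real (negMulLog)

namespace Sys

variable {Λ : Type*} [Fintype Λ]

/-- If the type of a word and its discretized translation parts in two systems determine the word,
and the two systems are close, then the entropy `n * h` of the words is bounded by the entropy of
the data in the first system plus the conditional fine entropy in the second one. -/
theorem two_systems {Q Q' : Sys Λ} (hpp : Q'.p = Q.p) {n N q : ℕ} (hN : q * n ≤ N)
    (hq : ∀ i, 2⁻¹ ^ q ≤ |Q'.r i|)
    (hclose : ∀ w : List Λ, w.length = n →
      |ss Q.r Q.s w - ss Q'.r Q'.s w| ≤ 2⁻¹ ^ (q * n))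
    (hinj : ∀ w w' : List Λ, w.length = n → w'.length = n → (w : Multiset Λ) = w' →
      Q.Y N w = Q.Y N w' → Q'.Y N w = Q'.Y N w' → w = w') :
    n * Q.h + Ent ((W Q'.p n).mapDomain (Q'.κ N)) ≤
      Ent ((W Q.p n).mapDomain fun w => (Q.κ N w, Q.Y N w)) +
      Ent ((W Q'.p n).mapDomain fun w => (Q'.κ N w, Q'.Y N w)) + Real.log 9 := by
  rw [hpp]
  have h1 := Ent_submod (Q'.κ N) (fun w => (Q.κ N w, Q.Y N w)) (Q'.Y N) (W Q.p n)
  have h2 := Ent_map_le_of_factor (fun w => (Q'.κ N w, (Q.κ N w, Q.Y N w), Q'.Y N w)) id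
    (W Q.p n) (by
      intro w hw w' hw' hh
      simp only [Prod.mk.injEq] at hh
      obtain ⟨_, ⟨h3, h4⟩, h5⟩ := hh
      exact hinj w w' (length_of_mem_W hw) (length_of_mem_W hw') (congrArg Prod.fst h3) h4 h5)
  rw [Finsupp.mapDomain_id, Ent_W Q.p Q.hp1] at h2
  have h3 := Ent_map_le_of_factor
    (fun w => ((Q.κ N w, Q.Y N w), Q'.Y N w / 2 ^ (N - Q'.aM w)))
    (fun w => (Q'.κ N w, (Q.κ N w, Q.Y N w))) (W Q.p n) (by
      intro w hw w' hw' hh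
      simp only [Prod.mk.injEq] at hh ⊢
      obtain ⟨⟨h3, h4⟩, h5⟩ := hh
      have h6 : (w : Multiset Λ) = w' := congrArg Prod.fst h3
      exact ⟨Prod.ext h6 h5, h3, h4⟩)
  have h4 := Ent_coarse_pair (fun w => (Q.κ N w, Q.Y N w))
    (fun w => Q'.Y N w / 2 ^ (N - Q'.aM w)) (W Q.p n) (fun _ => 4) (by
      intro w hw w' hw' hh
      simp only [Prod.mk.injEq] at hh
      obtain ⟨h3, h4⟩ := hh
      have h6 : (w : Multiset Λ) = w' := congrArg Prod.fst h3
      have lw := length_of_mem_W hw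
      have lw' := length_of_mem_W hw'
      have ha : Q'.aM w ≤ q * n := by have := aM_le_mul hq w; rwa [lw] at this
      rw [← h6]
      rw [idiv_eq_floor, idiv_eq_floor]
      refine floor_close ?_
      have c1 := abs_le.1 (hclose w lw)
      have c2 := abs_le.1 (hclose w' lw')
      have c3 : |2 ^ N * ss Q.r Q.s w - 2 ^ N * ss Q.r Q.s w'| < 1 := abs_lt_of_floor_eq h4
      have hNp : (0 : ℝ) < 2 ^ N := by positivity
      have e1 : (2 : ℝ) ^ N = 2 ^ (N - Q'.aM w) * 2 ^ (Q'.aM w) := by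
        rw [← pow_add]; congr 1; omega
      have e2 : (2 : ℝ) ^ Q'.aM w * 2⁻¹ ^ (q * n) ≤ 1 := by
        rw [inv_pow, ← div_eq_mul_inv, div_le_one (by positivity)]
        exact pow_le_pow_right₀ (by norm_num) ha
      have f1 := Int.floor_le (2 ^ N * ss Q'.r Q'.s w)
      have f2 := Int.lt_floor_add_one (2 ^ N * ss Q'.r Q'.s w)
      have f3 := Int.floor_le (2 ^ N * ss Q'.r Q'.s w')
      have f4 := Int.lt_floor_add_one (2 ^ N * ss Q'.r Q'.s w')
      set P : ℝ := 2 ^ (N - Q'.aM w) with hP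
      have hP1 : 1 ≤ P := one_le_pow₀ (by norm_num)
      rw [← sub_div, abs_div, abs_of_pos (by linarith : 0 < P), div_le_iff₀ (by linarith)]
      have c3' := abs_lt.1 c3
      have g : 2 ^ N * 2⁻¹ ^ (q * n) ≤ P := by
        rw [e1]; nlinarith
      simp only [Y]
      push_cast
      have g1 := mul_le_mul_of_nonneg_left c1.1 hNp.le
      have g2 := mul_le_mul_of_nonneg_left c1.2 hNp.le
      have g3 := mul_le_mul_of_nonneg_left c2.1 hNp.le
      have g4 := mul_le_mul_of_nonneg_left c2.2 hNp.le
      rw [abs_le]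
      constructor <;> linarith)
  rw [ex_const, mass_W Q.p Q.hp1] at h4
  have e9 : ((2 : ℝ) * (4 : ℕ) + 1) = 9 := by norm_num
  rw [e9, one_mul] at h4
  have h5 : Ent ((W Q.p n).mapDomain fun w => ((Q.κ N w, Q.Y N w), Q'.Y N w / 2 ^ (N - Q'.aM w))) ≤ _ := h4
  have : n * Q.h = n * ∑ i, negMulLog (Q.p i : ℝ) := rfl
  linarith

end Sys

end EntDim

/-! ### The parametrized family -/

namespace EntDim

open scoped NNReal
open Real (negMulLog)

section Prefix
variable {Λ : Type*}

/-- The infinite sequence `z` with the word `w` put in front of it. -/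
def pre : List Λ → (ℕ → Λ) → ℕ → Λ
  | [], z => z
  | i :: w, z => fun n => Nat.casesOn n i (pre w z)

theorem pre_injective {w w' : List Λ} (z : ℕ → Λ) (hl : w.length = w'.length) (hne : w ≠ w') :
    ∃ k < w.length, pre w z k ≠ pre w' z k := by
  induction w generalizing w' with
  | nil => cases w' with
    | nil => exact (hne rfl).elim
    | cons j w' => simp at hl
  | cons i w ih => cases w' with
    | nil => simp at hl
    | cons j w' =>
      by_cases hij : i = j
      · subst hij
        obtain ⟨k, hk, hk'⟩ := ih (w' := w') (by simpa using hl) (fun h => hne (by rw [h]))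
        exact ⟨k + 1, by simpa using hk, hk'⟩
      · exact ⟨0, by simp, hij⟩

theorem seqDist_pre {w w' : List Λ} (z : ℕ → Λ) (hl : w.length = w'.length) (hne : w ≠ w') :
    pre w z ≠ pre w' z ∧ (2⁻¹ : ℝ) ^ w.length ≤ seqDist (pre w z) (pre w' z) := by
  obtain ⟨k, hk, hk'⟩ := pre_injective z hl hne
  have hne' : pre w z ≠ pre w' z := fun h => hk' (congrFun h k)
  refine ⟨hne', ?_⟩
  rw [seqDist, if_neg hne', inv_pow, ← zpow_natCast, ← zpow_neg]
  refine zpow_le_zpow_right₀ (by norm_num) ?_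
  have : sInf {k : ℕ | pre w z k ≠ pre w' z k} ≤ k := Nat.sInf_le hk'
  omega

variable [Fintype Λ]

theorem summable_coding {r s : Λ → ℝ → ℝ} {t : ℝ} (h : ∀ i, |r i t| < 1) (x : ℕ → Λ) :
    Summable fun n : ℕ => (∏ k ∈ Finset.range n, r (x k) t) * s (x n) t := by
  have hne : Nonempty Λ := ⟨x 0⟩
  obtain ⟨i, _, hi⟩ := Finset.exists_max_image Finset.univ (fun i => |r i t|) Finset.univ_nonempty
  set ρ := |r i t| with hρ
  set S : ℝ := ∑ i, |s i t| with hS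
  have hSi : ∀ i, |s i t| ≤ S := fun i =>
    Finset.single_le_sum (f := fun i => |s i t|) (fun j _ => abs_nonneg _) (Finset.mem_univ i)
  refine Summable.of_norm_bounded (g := fun n => ρ ^ n * S)
    ((summable_geometric_of_lt_one (abs_nonneg _) (h i)).mul_right S) fun n => ?_
  rw [norm_mul, Real.norm_eq_abs, Real.norm_eq_abs, Finset.abs_prod]
  refine mul_le_mul ?_ (hSi _) (abs_nonneg _) (by positivity)
  calc _ ≤ ∏ k ∈ Finset.range n, ρ :=
        Finset.prod_le_prod (fun _ _ => abs_nonneg _) fun k _ => hi _ (Finset.mem_univ _)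
    _ = ρ ^ n := by simp

theorem coding_pre {r s : Λ → ℝ → ℝ} {t : ℝ} (h : ∀ i, |r i t| < 1) (w : List Λ) (z : ℕ → Λ) :
    codingPoint r s (pre w z) t = ss (fun i => r i t) (fun i => s i t) w +
      rr (fun i => r i t) w * codingPoint r s z t := by
  induction w with
  | nil => simp [pre, ss, rr]
  | cons i w ih =>
    have h1 : codingPoint r s (pre (i :: w) z) t =
        r i t * codingPoint r s (pre w z) t + s i t := by
      rw [codingPoint, (summable_coding h _).tsum_eq_zero_add]
      simp only [Finset.range_zero, Finset.prod_empty, one_mul]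
      rw [add_comm]
      congr 1
      rw [codingPoint, ← tsum_mul_left]
      refine tsum_congr fun n => ?_
      rw [Finset.prod_range_succ']
      change (∏ k ∈ Finset.range n, r (pre w z k) t) * r i t * s (pre w z n) t = _
      ring
    rw [h1, ih]
    simp only [ss, rr, List.map_cons, List.prod_cons]; ring

theorem rr_perm (r : Λ → ℝ) {w w' : List Λ} (h : (w : Multiset Λ) = w') : rr r w = rr r w' := by
  rw [Multiset.coe_eq_coe] at h
  exact (h.map r).prod_eq

end Prefix

section Family

variable {Λ : Type*} [Fintype Λ] [Nonempty Λ] {a b : ℝ} {r s : Λ → ℝ → ℝ}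

theorem ss_diff (hr : ∀ i, DifferentiableOn ℝ (r i) (Ioo a b))
    (hs : ∀ i, DifferentiableOn ℝ (s i) (Ioo a b)) (w : List Λ) :
    DifferentiableOn ℝ (fun t => ss (fun i => r i t) (fun i => s i t) w) (Ioo a b) := by
  induction w with
  | nil => simp only [ss]; exact differentiableOn_const _
  | cons i w ih => simp only [ss]; exact ((hr i).mul ih).add (hs i)

/-- Transversality for the translation parts of two words of the same type. -/
theorem trans_words (hcontr : ∀ i, ∀ t ∈ Ioo a b, 0 < |r i t| ∧ |r i t| < 1)
    {β Cβ : ℝ} {B : ℕ} (hβ : 0 ≤ β) (hB : β ≤ B) (hC : 0 < Cβ)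
    (htr : ∀ t ∈ Ioo a b, ∀ x y : ℕ → Λ, x ≠ y →
      |codingPoint r s x t - codingPoint r s y t| ≤ Cβ * seqDist x y ^ β →
      Cβ * seqDist x y ^ β ≤ |deriv (fun u => codingPoint r s x u - codingPoint r s y u) t|)
    {w w' : List Λ} (hl : w.length = w'.length) (hτ : (w : Multiset Λ) = w') (hne : w ≠ w')
    {t : ℝ} (ht : t ∈ Ioo a b)
    (hsm : |ss (fun i => r i t) (fun i => s i t) w - ss (fun i => r i t) (fun i => s i t) w'| ≤
      Cβ * 2⁻¹ ^ (B * w.length)) :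
    Cβ * 2⁻¹ ^ (B * w.length) ≤ |deriv (fun u => ss (fun i => r i u) (fun i => s i u) w -
      ss (fun i => r i u) (fun i => s i u) w') t| := by
  obtain ⟨z0⟩ := ‹Nonempty Λ›
  set z : ℕ → Λ := fun _ => z0
  have heq : ∀ u ∈ Ioo a b, codingPoint r s (pre w z) u - codingPoint r s (pre w' z) u =
      ss (fun i => r i u) (fun i => s i u) w - ss (fun i => r i u) (fun i => s i u) w' := by
    intro u hu
    rw [coding_pre (fun i => (hcontr i u hu).2), coding_pre (fun i => (hcontr i u hu).2),
      rr_perm _ hτ]; ring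
  obtain ⟨hne', hd⟩ := seqDist_pre z hl hne
  have hpow : (2⁻¹ : ℝ) ^ (B * w.length) ≤ seqDist (pre w z) (pre w' z) ^ β := by
    calc (2⁻¹ : ℝ) ^ (B * w.length) = ((2⁻¹ : ℝ) ^ w.length) ^ (B : ℝ) := by
          rw [Real.rpow_natCast, ← pow_mul, mul_comm]
      _ ≤ ((2⁻¹ : ℝ) ^ w.length) ^ β :=
          Real.rpow_le_rpow_of_exponent_ge (by positivity)
            (pow_le_one₀ (by norm_num) (by norm_num)) hB
      _ ≤ _ := Real.rpow_le_rpow (by positivity) hd hβ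
  have hpow' := mul_le_mul_of_nonneg_left hpow hC.le
  have h1 := htr t ht _ _ hne' (by rw [heq t ht]; exact hsm.trans hpow')
  have h2 : deriv (fun u => codingPoint r s (pre w z) u - codingPoint r s (pre w' z) u) t =
      deriv (fun u => ss (fun i => r i u) (fun i => s i u) w -
        ss (fun i => r i u) (fun i => s i u) w') t := by
    refine Filter.EventuallyEq.deriv_eq ?_
    filter_upwards [isOpen_Ioo.mem_nhds ht] with u hu using heq u hu
  rw [h2] at h1
  exact hpow'.trans h1

/-- The translation parts of words are uniformly Lipschitz in the parameter. -/
theorem ss_lip {c d : ℝ} (hr1 : ∀ i, ∀ t ∈ Icc c d, |r i t| < 1)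
    (hr : ∀ i, ContDiffOn ℝ 1 (r i) (Icc c d)) (hs : ∀ i, ContDiffOn ℝ 1 (s i) (Icc c d)) :
    ∃ L : ℝ, 0 < L ∧ ∀ w : List Λ, ∀ t ∈ Icc c d, ∀ t' ∈ Icc c d,
      |ss (fun i => r i t) (fun i => s i t) w - ss (fun i => r i t') (fun i => s i t') w| ≤
        L * |t - t'| := by
  have key : ∀ f : ℝ → ℝ, ContDiffOn ℝ 1 f (Icc c d) → ∃ K : ℝ, 0 ≤ K ∧
      ∀ t ∈ Icc c d, ∀ t' ∈ Icc c d, |f t - f t'| ≤ K * |t - t'| := by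
    intro f hf
    obtain ⟨K, hK⟩ := hf.exists_lipschitzOnWith one_ne_zero (convex_Icc c d) isCompact_Icc
    exact ⟨K, K.2, fun t ht t' ht' => by
      have := hK.dist_le_mul t ht t' ht'
      simpa [Real.dist_eq] using this⟩
  have key2 : ∀ f : ℝ → ℝ, ContDiffOn ℝ 1 f (Icc c d) → ∃ K : ℝ, ∀ t ∈ Icc c d, |f t| ≤ K := by
    intro f hf
    obtain ⟨K, hK⟩ := isCompact_Icc.exists_bound_of_continuousOn hf.continuousOn
    exact ⟨K, hK⟩
  have key3 : ∃ ρ : ℝ, 0 ≤ ρ ∧ ρ < 1 ∧ ∀ i, ∀ t ∈ Icc c d, |r i t| ≤ ρ := by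
    rcases (Icc c d).eq_empty_or_nonempty with he | hne
    · exact ⟨0, le_rfl, one_pos, fun i t ht => by rw [he] at ht; exact ht.elim⟩
    · have : ∀ i, ∃ x ∈ Icc c d, ∀ y ∈ Icc c d, |r i y| ≤ |r i x| := fun i => by
        obtain ⟨x, hx, h⟩ := isCompact_Icc.exists_isMaxOn hne (hr i).continuousOn.abs
        exact ⟨x, hx, fun y hy => h hy⟩
      choose x hx hx' using this
      obtain ⟨i, _, hi⟩ := Finset.exists_max_image Finset.univ (fun i => |r i (x i)|)
        Finset.univ_nonempty
      exact ⟨|r i (x i)|, abs_nonneg _, hr1 _ _ (hx i),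
        fun j t ht => (hx' j t ht).trans (hi j (Finset.mem_univ _))⟩
  obtain ⟨ρ, hρ0, hρ1, hρ⟩ := key3
  choose Kr hKr0 hKr using fun i => key _ (hr i)
  choose Ks hKs0 hKs using fun i => key _ (hs i)
  choose Ms hMs using fun i => key2 _ (hs i)
  set K := ∑ i, (Kr i + Ks i + |Ms i|) with hK
  have hKi : ∀ i, Kr i + Ks i + |Ms i| ≤ K := fun i =>
    Finset.single_le_sum (f := fun i => Kr i + Ks i + |Ms i|)
      (fun j _ => add_nonneg (add_nonneg (hKr0 j) (hKs0 j)) (abs_nonneg _)) (Finset.mem_univ i)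
  have hK0 : 0 ≤ K := Finset.sum_nonneg fun j _ =>
    add_nonneg (add_nonneg (hKr0 j) (hKs0 j)) (abs_nonneg _)
  set M := K / (1 - ρ) with hM
  have h1ρ : 0 < 1 - ρ := by linarith
  have hM0 : 0 ≤ M := by positivity
  have eM : ρ * M + K = M := by rw [hM]; field_simp; ring
  have hbd : ∀ w : List Λ, ∀ t ∈ Icc c d, |ss (fun i => r i t) (fun i => s i t) w| ≤ M := by
    intro w t ht
    induction w with
    | nil => simpa [ss] using hM0
    | cons i w ih =>
      simp only [ss]
      have h1 := abs_add_le (r i t * ss (fun i => r i t) (fun i => s i t) w) (s i t)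
      rw [abs_mul] at h1
      have h2 := mul_le_mul (hρ i t ht) ih (abs_nonneg _) hρ0
      have h3 := (hMs i t ht).trans (le_abs_self _)
      linarith [hKi i, hKr0 i, hKs0 i]
  set L := (K * M + K + 1) / (1 - ρ) with hL
  have hL0 : 0 < L := by positivity
  have eL : ρ * L + (K * M + K + 1) = L := by rw [hL]; field_simp; ring
  refine ⟨L, hL0, fun w t ht t' ht' => ?_⟩
  induction w with
  | nil => simp only [ss, sub_self, abs_zero]; positivity
  | cons i w ih =>
    simp only [ss]
    set u := ss (fun i => r i t) (fun i => s i t) w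
    set u' := ss (fun i => r i t') (fun i => s i t') w with hu'
    have e : r i t * u + s i t - (r i t' * u' + s i t') =
        r i t * (u - u') + (r i t - r i t') * u' + (s i t - s i t') := by ring
    rw [e]
    have h1 := abs_add_three (r i t * (u - u')) ((r i t - r i t') * u') (s i t - s i t')
    rw [abs_mul, abs_mul] at h1
    have h2 := mul_le_mul (hρ i t ht) ih (abs_nonneg _) hρ0
    have h3 := mul_le_mul (hKr i t ht t' ht') (hbd w t' ht') (abs_nonneg _)
      (mul_nonneg (hKr0 i) (abs_nonneg _))
    have h4 := hKs i t ht t' ht'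
    have hd := abs_nonneg (t - t')
    have k1 : Kr i ≤ K := by linarith [hKi i, hKs0 i, abs_nonneg (Ms i)]
    have k2 : Ks i ≤ K := by linarith [hKi i, hKr0 i, abs_nonneg (Ms i)]
    have h5 : Kr i * |t - t'| * M ≤ K * M * |t - t'| := by
      have := mul_le_mul_of_nonneg_right k1 (mul_nonneg hM0 hd); linarith
    have h6 := mul_le_mul_of_nonneg_right k2 hd
    have h7 : L * |t - t'| = ρ * (L * |t - t'|) + (K * M * |t - t'| + K * |t - t'| + |t - t'|) := by
      conv_lhs => rw [← eL]
      ring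
    linarith

end Family

end EntDim

/-! ### Separation of the exceptional parameters -/

namespace EntDim

open scoped NNReal
open Real (negMulLog)

theorem countable_of_separated {A : Set ℝ} {δ : ℝ} (hδ : 0 < δ)
    (h : ∀ t ∈ A, ∀ t' ∈ A, t < t' → t' - t < δ → False) : A.Countable := by
  have hinj : InjOn (fun t : ℝ => ⌊t / δ⌋) A := by
    intro t ht t' ht' he
    have h1 := abs_lt.1 (abs_lt_of_floor_eq he)
    rw [← sub_div, lt_div_iff₀ hδ, div_lt_iff₀ hδ] at h1
    rcases lt_trichotomy t t' with hlt | heq | hlt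
    · exact (h t ht t' ht' hlt (by linarith)).elim
    · exact heq
    · exact (h t' ht' t ht hlt (by linarith)).elim
  exact MapsTo.countable_of_injOn (mapsTo_univ _ _) hinj countable_univ

section Family

variable {Λ : Type*} [Fintype Λ] [Nonempty Λ] {a b : ℝ} {r s : Λ → ℝ → ℝ}

/-- The parameters `t ∈ [c, d]` at which, for all `n ≥ n0`, the coarse variable `κ` of the words of
length `n` has an entropy defect of `4ηn` with respect to `nh`, while the translation part at scale
`2^{-qn}` has entropy at most `ηn` given `κ`. -/
def Bad (r s : Λ → ℝ → ℝ) (p : Λ → ℝ≥0) (c d : ℝ) (q : ℕ) (η : ℝ) (n0 : ℕ) : Set ℝ :=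
  {t | t ∈ Icc c d ∧ ∃ Q : Sys Λ, Q.r = (fun i => r i t) ∧ Q.s = (fun i => s i t) ∧ Q.p = p ∧
    ∀ n : ℕ, n0 ≤ n →
      Ent ((W Q.p n).mapDomain (Q.κ (q * n))) ≤ (Q.h - 4 * η) * n ∧
      Ent ((W Q.p n).mapDomain fun w => (Q.κ (q * n) w, Q.Y (q * n) w)) ≤
        Ent ((W Q.p n).mapDomain (Q.κ (q * n))) + η * n}

/-- Under transversality, two distinct words of the same type cannot have their translation parts in
common `2^{-2qn}`-cells at two parameters at distance comparable to `2^{-qn}`. -/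
theorem words_separated (hcontr : ∀ i, ∀ t ∈ Ioo a b, 0 < |r i t| ∧ |r i t| < 1)
    (hr : ∀ i, DifferentiableOn ℝ (r i) (Ioo a b))
    (hs : ∀ i, DifferentiableOn ℝ (s i) (Ioo a b))
    {β Cβ : ℝ} {B : ℕ} (hβ : 0 ≤ β) (hB : β ≤ B) (hC : 0 < Cβ)
    (htr : ∀ t ∈ Ioo a b, ∀ x y : ℕ → Λ, x ≠ y →
      |codingPoint r s x t - codingPoint r s y t| ≤ Cβ * seqDist x y ^ β →
      Cβ * seqDist x y ^ β ≤ |deriv (fun u => codingPoint r s x u - codingPoint r s y u) t|)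
    {c d L : ℝ} (hcd : Icc c d ⊆ Ioo a b) (hL0 : 0 < L)
    (hL : ∀ w : List Λ, ∀ t ∈ Icc c d, ∀ t' ∈ Icc c d,
      |ss (fun i => r i t) (fun i => s i t) w - ss (fun i => r i t') (fun i => s i t') w| ≤
        L * |t - t'|)
    {q n : ℕ} (hq : B + 1 ≤ q) (hn1 : 3 * 2⁻¹ ^ n ≤ Cβ) (hn2 : 2 * L * 2 ^ q * 2⁻¹ ^ n ≤ Cβ)
    {t t' : ℝ} (ht : t ∈ Icc c d) (ht' : t' ∈ Icc c d) (hlt : t < t')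
    (hup : L * (t' - t) ≤ 2⁻¹ ^ (q * n)) (hlo : 2⁻¹ ^ (q * (n + 1)) ≤ L * (t' - t))
    {w w' : List Λ} (hw : w.length = n) (hw' : w'.length = n) (hτ : (w : Multiset Λ) = w')
    (h1 : |ss (fun i => r i t) (fun i => s i t) w - ss (fun i => r i t) (fun i => s i t) w'| <
      2⁻¹ ^ (2 * q * n))
    (h2 : |ss (fun i => r i t') (fun i => s i t') w - ss (fun i => r i t') (fun i => s i t') w'| <
      2⁻¹ ^ (2 * q * n)) : w = w' := by
  by_contra hne
  set f : ℝ → ℝ := fun u => ss (fun i => r i u) (fun i => s i u) w -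
      ss (fun i => r i u) (fun i => s i u) w' with hf
  have hfd : DifferentiableOn ℝ f (Ioo a b) := (ss_diff hr hs w).sub (ss_diff hr hs w')
  have hsub : Icc t t' ⊆ Icc c d := Icc_subset_Icc ht.1 ht'.2
  obtain ⟨x, hx, hx'⟩ := exists_deriv_eq_slope f hlt
    (hfd.continuousOn.mono (hsub.trans hcd))
    (hfd.mono ((Ioo_subset_Icc_self.trans hsub).trans hcd))
  have hxc : x ∈ Icc c d := hsub (Ioo_subset_Icc_self hx)
  have hpow : ∀ k l : ℕ, k ≤ l → (2⁻¹ : ℝ) ^ l ≤ 2⁻¹ ^ k := fun k l h =>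
    pow_le_pow_of_le_one (by norm_num) (by norm_num) h
  have eqn : (2⁻¹ : ℝ) ^ (q * n) ≤ 2⁻¹ ^ (B * n) * 2⁻¹ ^ n := by
    rw [← pow_add]; exact hpow _ _ (by nlinarith)
  have hBn : (0 : ℝ) < 2⁻¹ ^ (B * n) := by positivity
  have hfx : |f x| ≤ Cβ * 2⁻¹ ^ (B * w.length) := by
    have a1 := hL w x hxc t ht
    have a2 := hL w' x hxc t ht
    have a3 : L * |x - t| ≤ 2⁻¹ ^ (q * n) := by
      refine le_trans (mul_le_mul_of_nonneg_left ?_ hL0.le) hup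
      rw [abs_of_pos (by linarith [hx.1])]; linarith [hx.2]
    have a4 := hpow (q * n) (2 * q * n) (by nlinarith)
    have a5 : |f x| ≤ 3 * 2⁻¹ ^ (q * n) := by
      have b1 := abs_le.1 a1
      have b2 := abs_le.1 a2
      have b3 := abs_lt.1 h1
      rw [abs_le]; simp only [hf]
      constructor <;> linarith
    rw [hw]
    have a6 := mul_le_mul_of_nonneg_left hn1 hBn.le
    linarith
  have hder := trans_words hcontr hβ hB hC htr (hw.trans hw'.symm) hτ hne (hcd hxc) hfx
  change _ ≤ |deriv f x| at hder
  have hpos : 0 < t' - t := by linarith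
  rw [hx', abs_div, abs_of_pos hpos, le_div_iff₀ hpos, hw] at hder
  have hlt2 : |f t' - f t| < 2 * 2⁻¹ ^ (2 * q * n) := by
    have b1 := abs_lt.1 h1
    have b2 := abs_lt.1 h2
    rw [abs_lt]; simp only [hf]
    constructor <;> linarith
  have e1 : (2⁻¹ : ℝ) ^ (2 * q * n) ≤ 2⁻¹ ^ (B * n) * 2⁻¹ ^ n * 2⁻¹ ^ (q * n) := by
    have : (2⁻¹ : ℝ) ^ (2 * q * n) = 2⁻¹ ^ (q * n) * 2⁻¹ ^ (q * n) := by
      rw [← pow_add]; congr 1; ring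
    rw [this]; exact mul_le_mul_of_nonneg_right eqn (by positivity)
  have e2 : (2⁻¹ : ℝ) ^ (q * n) = 2 ^ q * 2⁻¹ ^ (q * (n + 1)) := by
    rw [mul_add, mul_one, pow_add, mul_comm _ ((2⁻¹ : ℝ) ^ q), ← mul_assoc, ← mul_pow]; norm_num
  have g1 : 2 ^ q * 2⁻¹ ^ (q * (n + 1)) ≤ 2 ^ q * (L * (t' - t)) :=
    mul_le_mul_of_nonneg_left hlo (by positivity)
  rw [← e2] at g1
  have g2 : 2⁻¹ ^ (B * n) * 2⁻¹ ^ n * 2⁻¹ ^ (q * n) ≤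
      2⁻¹ ^ (B * n) * 2⁻¹ ^ n * (2 ^ q * (L * (t' - t))) :=
    mul_le_mul_of_nonneg_left g1 (by positivity)
  have g3 := mul_le_mul_of_nonneg_left hn2 (mul_nonneg hBn.le hpos.le)
  nlinarith

/-- Two parameters of `Bad` cannot be too close: for `t' - t` of order `2^{-qn}`, `two_systems` would
bound the entropy `nh` of the words by `(h - 4η)n + 2ηn + O(1)`. Hence `Bad` is separated, and
countable. -/
theorem Bad_countable (hcontr : ∀ i, ∀ t ∈ Ioo a b, 0 < |r i t| ∧ |r i t| < 1)
    (hC2 : ∀ i, ContDiffOn ℝ 2 (r i) (Ioo a b) ∧ ContDiffOn ℝ 2 (s i) (Ioo a b))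
    {β Cβ : ℝ} {B : ℕ} (hβ : 0 ≤ β) (hB : β ≤ B) (hC : 0 < Cβ)
    (htr : ∀ t ∈ Ioo a b, ∀ x y : ℕ → Λ, x ≠ y →
      |codingPoint r s x t - codingPoint r s y t| ≤ Cβ * seqDist x y ^ β →
      Cβ * seqDist x y ^ β ≤ |deriv (fun u => codingPoint r s x u - codingPoint r s y u) t|)
    (p : Λ → ℝ≥0) {c d : ℝ} (hcd : Icc c d ⊆ Ioo a b) {q : ℕ} (hq : B + 1 ≤ q)
    (hrq : ∀ i, ∀ t ∈ Icc c d, 2⁻¹ ^ q ≤ |r i t|) {η : ℝ} (hη : 0 < η) (n0 : ℕ) :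
    (Bad r s p c d (2 * q) η n0).Countable := by
  obtain ⟨L, hL0, hL⟩ := ss_lip (r := r) (s := s) (c := c) (d := d)
    (fun i t ht => (hcontr i t (hcd ht)).2)
    (fun i => ((hC2 i).1.of_le (by norm_num)).mono hcd)
    (fun i => ((hC2 i).2.of_le (by norm_num)).mono hcd)
  have hhalf : Tendsto (fun n : ℕ => (2⁻¹ : ℝ) ^ n) atTop (nhds 0) :=
    tendsto_pow_atTop_nhds_zero_of_lt_one (by norm_num) (by norm_num)
  have ev1 : ∀ᶠ n : ℕ in atTop, 3 * (2⁻¹ : ℝ) ^ n ≤ Cβ := by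
    have := hhalf.const_mul 3
    rw [mul_zero] at this
    exact this.eventually_le_const hC
  have ev2 : ∀ᶠ n : ℕ in atTop, 2 * L * 2 ^ q * (2⁻¹ : ℝ) ^ n ≤ Cβ := by
    have := hhalf.const_mul (2 * L * 2 ^ q)
    rw [mul_zero] at this
    exact this.eventually_le_const hC
  have ev3 : ∀ᶠ n : ℕ in atTop, Real.log 9 < 2 * η * n := by
    have := tendsto_natCast_atTop_atTop (R := ℝ).const_mul_atTop (r := 2 * η) (by positivity)
    exact this.eventually_gt_atTop _
  obtain ⟨n1, hn1⟩ := eventually_atTop.1 (ev1.and (ev2.and (ev3.and (eventually_ge_atTop n0))))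
  refine countable_of_separated (δ := 2⁻¹ ^ (q * n1) / L) (by positivity) ?_
  rintro t ⟨htc, Q, hQr, hQs, hQp, hQ⟩ t' ⟨htc', Q', hQr', hQs', hQp', hQ'⟩ hlt hδ
  have hpos : 0 < L * (t' - t) := mul_pos hL0 (by linarith)
  rw [lt_div_iff₀ hL0, mul_comm] at hδ
  -- `n` is the first index at which the scale `2^{-q(n+1)}` falls below `L (t' - t)`.
  have hq0 : 0 < q := by omega
  have hex : ∃ n : ℕ, (2⁻¹ : ℝ) ^ (q * (n + 1)) ≤ L * (t' - t) := by
    obtain ⟨n, hn⟩ := (hhalf.eventually_le_const hpos).exists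
    exact ⟨n, le_trans (pow_le_pow_of_le_one (by norm_num) (by norm_num) (by nlinarith)) hn⟩
  set n := Nat.find hex with hn
  have hlo : (2⁻¹ : ℝ) ^ (q * (n + 1)) ≤ L * (t' - t) := Nat.find_spec hex
  have hnn1 : n1 ≤ n := by
    by_contra hcon
    push Not at hcon
    have : (2⁻¹ : ℝ) ^ (q * n1) ≤ 2⁻¹ ^ (q * (n + 1)) :=
      pow_le_pow_of_le_one (by norm_num) (by norm_num) (Nat.mul_le_mul_left q hcon)
    linarith
  have hup : L * (t' - t) ≤ 2⁻¹ ^ (q * n) := by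
    rcases Nat.eq_or_lt_of_le hnn1 with he | hgt
    · rw [← he]; exact hδ.le
    · have h1 := Nat.find_min hex (m := n - 1) (by omega)
      push Not at h1
      rw [show n - 1 + 1 = n by omega] at h1
      exact h1.le
  obtain ⟨m1, m2, m3, m4⟩ := hn1 n hnn1
  have habs : |t - t'| = t' - t := by rw [abs_of_neg (by linarith)]; ring
  have hcell : ∀ (R : Sys Λ) (w w' : List Λ), R.Y (2 * q * n) w = R.Y (2 * q * n) w' →
      |ss R.r R.s w - ss R.r R.s w'| < 2⁻¹ ^ (2 * q * n) := by
    intro R w w' h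
    have h1 : |2 ^ (2 * q * n) * ss R.r R.s w - 2 ^ (2 * q * n) * ss R.r R.s w'| < 1 :=
      abs_lt_of_floor_eq h
    rw [← mul_sub, abs_mul, abs_of_pos (by positivity), mul_comm] at h1
    rw [inv_pow, ← one_div, lt_div_iff₀ (by positivity)]; exact h1
  have main := Sys.two_systems (Q := Q) (Q' := Q') (hQp'.trans hQp.symm) (n := n)
    (N := 2 * q * n) (q := q) (by nlinarith)
    (fun i => by rw [hQr']; exact hrq i t' htc')
    (fun w _ => by
      have := hL w t htc t' htc'
      rw [habs] at this
      rw [hQr, hQs, hQr', hQs']; exact this.trans hup)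
    (fun w w' hw hw' hτ e1 e2 => by
      have c1 := hcell Q w w' e1
      have c2 := hcell Q' w w' e2
      rw [hQr, hQs] at c1
      rw [hQr', hQs'] at c2
      exact words_separated hcontr (fun i => (hC2 i).1.differentiableOn (by norm_num))
        (fun i => (hC2 i).2.differentiableOn (by norm_num)) hβ hB hC htr hcd hL0 hL hq m1 m2
        htc htc' hlt hup hlo hw hw' hτ c1 c2)
  obtain ⟨b1, b2⟩ := hQ n m4
  obtain ⟨_, b3⟩ := hQ' n m4
  linarith

end Family

end EntDim

/-! ### Dimension drop and conclusion -/

namespace EntDim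

open scoped NNReal
open Real (negMulLog)

section Family

variable {Λ : Type*} [Fintype Λ] [Nonempty Λ] {a b : ℝ} {r s : Λ → ℝ → ℝ}

/-- On a compact subinterval all contraction ratios are at least `2^{-q}` for some large `q`. -/
theorem exists_q (hcontr : ∀ i, ∀ t ∈ Ioo a b, 0 < |r i t| ∧ |r i t| < 1)
    (hr : ∀ i, ContinuousOn (r i) (Ioo a b)) {c d : ℝ} (hcd : Icc c d ⊆ Ioo a b) (B : ℕ) :
    ∃ q : ℕ, B ≤ q ∧ ∀ i, ∀ t ∈ Icc c d, (2⁻¹ : ℝ) ^ q ≤ |r i t| := by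
  have hhalf : Tendsto (fun n : ℕ => (2⁻¹ : ℝ) ^ n) atTop (nhds 0) :=
    tendsto_pow_atTop_nhds_zero_of_lt_one (by norm_num) (by norm_num)
  have h : ∀ i, ∀ᶠ q : ℕ in atTop, ∀ t ∈ Icc c d, (2⁻¹ : ℝ) ^ q ≤ |r i t| := by
    intro i
    rcases (Icc c d).eq_empty_or_nonempty with he | hne
    · rw [he]; simp
    · obtain ⟨x, hx, h⟩ := isCompact_Icc.exists_isMinOn hne ((hr i).mono hcd).abs
      filter_upwards [hhalf.eventually_le_const (hcontr i x (hcd hx)).1] with q hq t ht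
      exact hq.trans (h ht)
  obtain ⟨q, hq1, hq2⟩ := ((eventually_ge_atTop B).and (eventually_all.2 h)).exists
  exact ⟨q, hq1, hq2⟩

/-- The self-similar measure at the parameter `t` as a system. -/
def sysAt (r s : Λ → ℝ → ℝ) (t : ℝ) (h : ∀ i, 0 < |r i t| ∧ |r i t| < 1) (p : Λ → ℝ)
    (hp : ∀ i, 0 < p i) (hp1 : ∑ i : Λ, p i = 1) (μ : Measure ℝ)
    (hμ : IsSelfSimilarMeasure r s p t μ) : Sys Λ where
  r := fun i => r i t
  s := fun i => s i t
  p := fun i => (p i).toNNReal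
  μ := μ
  hr0 := fun i => (h i).1
  hr1 := fun i => (h i).2
  hp := fun i => Real.toNNReal_pos.2 (hp i)
  hp1 := by
    rw [← Real.toNNReal_sum_of_nonneg (fun i _ => (hp i).le), hp1, Real.toNNReal_one]
  prob := hμ.1
  self := by
    intro B hB
    have := hμ.1
    have e : μ B = ∑ i, ENNReal.ofReal (p i) * μ ((fun x => r i t * x + s i t) ⁻¹' B) := by
      conv_lhs => rw [hμ.2]
      rw [Measure.finsetSum_apply]
      refine Finset.sum_congr rfl fun i _ => ?_
      rw [Measure.smul_apply, Measure.map_apply (by fun_prop) hB, smul_eq_mul]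
    rw [Measure.real, e, ENNReal.toReal_sum
      (fun i _ => ENNReal.mul_ne_top ENNReal.ofReal_ne_top (measure_ne_top _ _))]
    refine Finset.sum_congr rfl fun i _ => ?_
    rw [ENNReal.toReal_mul]; rfl

/-- A parameter with a dimension drop lies in one of the sets `Bad`. -/
theorem mem_Bad (hcontr : ∀ i, ∀ t ∈ Ioo a b, 0 < |r i t| ∧ |r i t| < 1)
    {p : Λ → ℝ} (hp : ∀ i, 0 < p i) (hp1 : ∑ i : Λ, p i = 1)
    {t : ℝ} (ht : t ∈ Ioo a b) {μ : Measure ℝ} (hμ : IsSelfSimilarMeasure r s p t μ)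
    {D : ℝ} (hD : ExactDim μ D) (hlt : D < min 1 (simDim p r t))
    {c d : ℝ} (htc : t ∈ Icc c d) {q : ℕ} (hq : ∀ i, (2⁻¹ : ℝ) ^ q ≤ |r i t|) :
    ∃ m n0 : ℕ, t ∈ Bad r s (fun i => (p i).toNNReal) c d q (1 / ((m : ℝ) + 1)) n0 := by
  set Q : Sys Λ := sysAt r s t (fun i => hcontr i t ht) p hp hp1 μ hμ with hQ
  obtain ⟨E, C, hE0, hC0, hsup, hub, hlb⟩ := Q.exists_E
  have hED : E ≤ D * Real.log 2 := Q.E_le hD hlb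
  have hl2 := Sys.log2_pos
  obtain ⟨hD1, hD2⟩ := lt_min_iff.1 hlt
  have hχ : 0 < Q.χ := Q.χ_pos
  have hpi : ∀ i, (((p i).toNNReal : ℝ≥0) : ℝ) = p i := fun i => Real.coe_toNNReal _ (hp i).le
  have hsim : simDim p r t = Q.h / Q.χ := by
    have e1 : Q.h = -∑ i, p i * Real.log (p i) := by
      rw [Sys.h, ← Finset.sum_neg_distrib]
      refine Finset.sum_congr rfl fun i _ => ?_
      change negMulLog (((p i).toNNReal : ℝ≥0) : ℝ) = _
      rw [hpi, negMulLog]; ring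
    have e2 : Q.χ = -∑ i, p i * Real.log |r i t| := by
      rw [Sys.χ, ← Finset.sum_neg_distrib]
      refine Finset.sum_congr rfl fun i _ => ?_
      change (((p i).toNNReal : ℝ≥0) : ℝ) * (-Real.log |r i t|) = _
      rw [hpi]; ring
    rw [simDim, e1, e2, neg_div_neg_eq]
  rw [hsim, lt_div_iff₀ hχ] at hD2
  have hE1 : E < Real.log 2 := by nlinarith
  have hgap : 0 < Q.h - E * Q.χ / Real.log 2 := by
    rw [sub_pos, div_lt_iff₀ hl2]
    nlinarith [mul_le_mul_of_nonneg_right hED hχ.le]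
  obtain ⟨m, hm⟩ := exists_nat_one_div_lt (show 0 < (Q.h - E * Q.χ / Real.log 2) / 5 by positivity)
  obtain ⟨n0, hn0⟩ := Sys.propT (Q := Q) hE0 hE1 hsup hub hlb (η := 1 / ((m : ℝ) + 1))
    (by positivity) (q := q) hq
  refine ⟨m, n0, htc, Q, rfl, rfl, rfl, fun n hn => ?_⟩
  obtain ⟨h1, h2⟩ := hn0 n hn
  refine ⟨h1.trans (mul_le_mul_of_nonneg_right ?_ (Nat.cast_nonneg n)), h2⟩
  linarith

end Family

end EntDim

/-- under β-transversality, the set of parameters where the dimension of the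
self-similar measure drops below `min(1, similarity dimension)` is at most countable. -/
theorem stmt0 {Λ : Type*} [Fintype Λ] [Nonempty Λ] (a b : ℝ)
    (r s : Λ → ℝ → ℝ)
    (hcontr : ∀ i, ∀ t ∈ Ioo a b, 0 < |r i t| ∧ |r i t| < 1)
    (hC2 : ∀ i, ContDiffOn ℝ 2 (r i) (Ioo a b) ∧ ContDiffOn ℝ 2 (s i) (Ioo a b))
    (hreg : ∀ J' ⊆ Ioo a b, IsCompact J' →
      ∃ C : ℝ, ∀ x : ℕ → Λ, ∀ t ∈ J',
        |deriv (codingPoint r s x) t| ≤ C ∧ |deriv (deriv (codingPoint r s x)) t| ≤ C)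
    (β : ℝ) (hβ : 0 ≤ β)
    (htrans : ∃ Cβ : ℝ, 0 < Cβ ∧ ∀ t ∈ Ioo a b, ∀ x y : ℕ → Λ, x ≠ y →
      |codingPoint r s x t - codingPoint r s y t| ≤ Cβ * seqDist x y ^ β →
      Cβ * seqDist x y ^ β ≤ |deriv (fun u => codingPoint r s x u - codingPoint r s y u) t|)
    (p : Λ → ℝ) (hp : ∀ i, 0 < p i) (hp1 : ∑ i : Λ, p i = 1)
    (μ : ℝ → Measure ℝ) (hμ : ∀ t ∈ Ioo a b, IsSelfSimilarMeasure r s p t (μ t))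
    (dimf : ℝ → ℝ) (hdim : ∀ t ∈ Ioo a b, ExactDim (μ t) (dimf t)) :
    {t ∈ Ioo a b | dimf t < min 1 (simDim p r t)}.Countable := by
  obtain ⟨Cβ, hC, htr⟩ := htrans
  obtain ⟨B, hB⟩ := exists_nat_ge β
  have hcd : ∀ k : ℕ, Icc (a + 1 / ((k : ℝ) + 1)) (b - 1 / ((k : ℝ) + 1)) ⊆ Ioo a b := by
    intro k t ht
    have : 0 < 1 / ((k : ℝ) + 1) := by positivity
    exact ⟨by linarith [ht.1], by linarith [ht.2]⟩
  choose q hqB hq using fun k : ℕ => EntDim.exists_q hcontr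
    (fun i => (hC2 i).1.continuousOn) (hcd k) (B + 1)
  -- `[a + 1/(k+1), b - 1/(k+1)]` exhausts the interval, and `1/(m+1)`, `n0` quantify the defect.
  refine Countable.mono (s₂ := ⋃ k : ℕ, ⋃ m : ℕ, ⋃ n0 : ℕ,
    EntDim.Bad r s (fun i => (p i).toNNReal) (a + 1 / ((k : ℝ) + 1)) (b - 1 / ((k : ℝ) + 1))
      (2 * q k) (1 / ((m : ℝ) + 1)) n0) ?_ ?_
  · rintro t ⟨ht, hlt⟩
    obtain ⟨k, hk⟩ := exists_nat_one_div_lt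
      (lt_min (sub_pos.2 ht.1) (sub_pos.2 ht.2) : 0 < min (t - a) (b - t))
    obtain ⟨k1, k2⟩ := lt_min_iff.1 hk
    have htc : t ∈ Icc (a + 1 / ((k : ℝ) + 1)) (b - 1 / ((k : ℝ) + 1)) :=
      ⟨by linarith, by linarith⟩
    obtain ⟨m, n0, h⟩ := EntDim.mem_Bad hcontr hp hp1 ht (hμ t ht) (hdim t ht) hlt htc
      (q := 2 * q k) (fun i => le_trans
        (pow_le_pow_of_le_one (by norm_num) (by norm_num) (by omega)) (hq k i t htc))
    simp only [mem_iUnion]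
    exact ⟨k, m, n0, h⟩
  · exact countable_iUnion fun k => countable_iUnion fun m => countable_iUnion fun n0 =>
      EntDim.Bad_countable hcontr hC2 hβ hB hC htr _ (hcd k) (hqB k) (hq k) (by positivity) n0

end
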